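/- Let 1 < p_0 ≤ q_0 < ∞ and assume sup_{j≥0} 2^{jd/q_0} ‖𝒜_j‖_{L^{p_0}→L^{q_0}(L^{p_0})} < ∞. Let q_0 < q ≤ ∞ and define ρ_min(q) and ρ_max(q) by 1/ρ_min(q) = 1 − (q_0/q)(1 − 1/p_0) and 1/ρ_max(q) = (q_0/q)(1/p_0). Assume ρ_min(q) < p ≤ q, and that r ≤ p if ρ_min(q) < p < ρ_max(q), while r < ρ_max(q) if ρ_max(q) ≤ p ≤ q. Then there exists ε(p,q,r) > 0 and a constant C_{p,q,r} such that for every n ∈ ℕ₀ and every sequence F = {f_j}_{j≥0}, ‖𝔐_{r,n} F‖_{L^q(ℝ^d)} ≤ C_{p,q,r} 2^{−n ε(p,q,r)} (Σ_{j≥n} 2^{−jd} ‖f_j‖_{L^p}^q)^{1/q}. -/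

import Mathlib

open MeasureTheory Metric Set
open scoped ENNReal NNReal FourierTransform

noncomputable section

/-- Euclidean `d`-space. -/
abbrev Euc (d : ℕ) : Type := EuclideanSpace ℝ (Fin d)

/-- The normalized surface measure `σ` on the unit sphere `S^{d-1} ⊆ ℝ^d`. -/
def sphereMeasure (d : ℕ) : Measure (Euc d) :=
  (((volume : Measure (Euc d)).toSphere Set.univ)⁻¹ : ℝ≥0∞) •
    ((volume : Measure (Euc d)).toSphere.map Subtype.val)

/-- The spherical average `A_t f(x) = ∫_{S^{d-1}} f(x - t y) dσ(y)`. -/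
def sphAvg {d : ℕ} (f : Euc d → ℂ) (t : ℝ) (x : Euc d) : ℂ :=
  ∫ y, f (x - t • y) ∂(sphereMeasure d)

/-- The dyadic symbols `β_j` built from the bump `β₀`:
`β_j(s) = β₀(2^{-j} s) - β₀(2^{1-j} s)` for `j ≥ 1`. -/
def betaJ (β₀ : ℝ → ℝ) : ℕ → ℝ → ℝ
  | 0 => β₀
  | (j + 1) => fun s => β₀ ((2 : ℝ) ^ (-(j + 1 : ℤ)) * s) - β₀ ((2 : ℝ) ^ (-(j : ℤ)) * s)

/-- The frequency localization `L_j` with symbol `β_j(|ξ|)`. -/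
def freqLoc (d : ℕ) (β₀ : ℝ → ℝ) (j : ℕ) (f : Euc d → ℂ) : Euc d → ℂ :=
  𝓕⁻ (fun ξ => (betaJ β₀ j ‖ξ‖ : ℂ) * 𝓕 f ξ)

/-- `χ` is an admissible time cutoff: smooth, `χ = 1` on a neighborhood of `[1,2]`,
supported in `[1/2,4]`. -/
def IsCutoff (χ : ℝ → ℝ) : Prop :=
  ContDiff ℝ (⊤ : ℕ∞) χ ∧ (∃ U : Set ℝ, IsOpen U ∧ Set.Icc 1 2 ⊆ U ∧ Set.EqOn χ 1 U) ∧
    Function.support χ ⊆ Set.Icc (1 / 2 : ℝ) 4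

/-- `β₀` is an admissible frequency bump: smooth, `β₀(s) = 1` for `|s| < 1/2` and
`β₀(s) = 0` for `|s| > 1`. -/
def IsBump (β₀ : ℝ → ℝ) : Prop :=
  ContDiff ℝ (⊤ : ℕ∞) β₀ ∧ (∀ s : ℝ, |s| < 1 / 2 → β₀ s = 1) ∧ ∀ s : ℝ, 1 < |s| → β₀ s = 0

/-- The frequency-localized operator `𝒜_j f(x,t) = χ(t) A_t L_j f(x)`. -/
def Aj (d : ℕ) (χ β₀ : ℝ → ℝ) (j : ℕ) (f : Euc d → ℂ) (x : Euc d) (t : ℝ) : ℂ :=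
  (χ t : ℂ) * sphAvg (freqLoc d β₀ j f) t x

/-- `L^q` norm (with respect to `μ`) of an `ℝ≥0∞`-valued function, `1 ≤ q ≤ ∞`. -/
def lqNorm {α : Type*} [MeasurableSpace α] (q : ℝ≥0∞) (g : α → ℝ≥0∞)
    (μ : Measure α) : ℝ≥0∞ :=
  if q = ∞ then essSup g μ else (∫⁻ x, g x ^ q.toReal ∂μ) ^ (1 / q.toReal)

/-- The mixed norm `‖F‖_{L^q(L^r)}` of `F : ℝ^d × ℝ → ℂ`. -/
def mixedNorm (d : ℕ) (q r : ℝ≥0∞) (F : Euc d → ℝ → ℂ) : ℝ≥0∞ :=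
  lqNorm q (fun x => lqNorm r (fun t => (‖F x t‖₊ : ℝ≥0∞)) volume) volume

/-- The operator norm `‖𝒜_j‖_{L^p → L^q(L^r)}`. -/
def AjOpNorm (d : ℕ) (χ β₀ : ℝ → ℝ) (j : ℕ) (p q r : ℝ≥0∞) : ℝ≥0∞ :=
  ⨆ (f : Euc d → ℂ) (_ : eLpNorm f p volume ≤ 1), mixedNorm d q r (Aj d χ β₀ j f)

/-- An axis-parallel cube in `ℝ^d` with lower corner `a` and side length `h`. -/
def cubeSet (d : ℕ) (a : Euc d) (h : ℝ) : Set (Euc d) :=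
  {y | ∀ i, a i ≤ y i ∧ y i ≤ a i + h}

/-- The maximal function `𝔐_{r,n} F(x) = sup_{j ≥ n} sup_{Q ∈ 𝒬_{n-j}(x)}
⨍_Q ‖𝒜_j f_j(y,·)‖_{L^r} dy`, where `𝒬_L(x)` is the family of cubes containing `x`
of side length in `(2^{L-1}, 2^L]`. -/
def maxFn (d : ℕ) (χ β₀ : ℝ → ℝ) (r : ℝ≥0∞) (n : ℕ) (F : ℕ → Euc d → ℂ)
    (x : Euc d) : ℝ≥0∞ :=
  ⨆ (j : ℕ) (_ : n ≤ j) (a : Euc d) (h : ℝ)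
      (_ : (2 : ℝ) ^ ((n : ℤ) - j - 1) < h) (_ : h ≤ (2 : ℝ) ^ ((n : ℤ) - j))
      (_ : x ∈ cubeSet d a h),
    (volume (cubeSet d a h))⁻¹ *
      ∫⁻ y in cubeSet d a h,
        lqNorm r (fun t => (‖Aj d χ β₀ j (F j) y t‖₊ : ℝ≥0∞)) volume

/-- The `ℓ^q` norm of a sequence in `ℝ≥0∞`, with the supremum convention at `q = ∞`. -/
def lqSeq (q : ℝ≥0∞) (g : ℕ → ℝ≥0∞) : ℝ≥0∞ :=
  if q = ∞ then ⨆ j, g j else (∑' j, g j ^ q.toReal) ^ (1 / q.toReal)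

instance euc_nontrivial {d : ℕ} [hd : Fact (2 ≤ d)] : Nontrivial (Euc d) := by
  have : 0 < d := by have := hd.out; omega
  have : Nonempty (Fin d) := ⟨⟨0, this⟩⟩
  infer_instance

lemma toSphere_univ_ne {d : ℕ} [hd : Fact (2 ≤ d)] :
    (volume : Measure (Euc d)).toSphere Set.univ ≠ 0 := by
  rw [Ne, Measure.measure_univ_eq_zero]
  exact Measure.toSphere_ne_zero _

lemma toSphere_univ_ne_top {d : ℕ} :
    (volume : Measure (Euc d)).toSphere Set.univ ≠ ∞ := measure_ne_top _ _

instance sphere_prob {d : ℕ} [hd : Fact (2 ≤ d)] : IsProbabilityMeasure (sphereMeasure d) := by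
  constructor
  rw [sphereMeasure, Measure.smul_apply, Measure.map_apply measurable_subtype_coe .univ]
  simp only [preimage_univ, smul_eq_mul]
  exact ENNReal.inv_mul_cancel toSphere_univ_ne toSphere_univ_ne_top

lemma sphere_ae_norm {d : ℕ} : ∀ᵐ y ∂(sphereMeasure d), ‖y‖ = 1 := by
  rw [sphereMeasure]
  apply Measure.ae_smul_measure
  rw [ae_map_iff measurable_subtype_coe.aemeasurable
    (measurableSet_eq_fun measurable_norm measurable_const)]
  exact ae_of_all _ (fun x => by simp)

/-- radial part of Lebesgue measure -/
def radM (d : ℕ) : Measure ℝ :=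
  ((volume : Measure (Euc d)).toSphere Set.univ) •
    ((Measure.volumeIoiPow (d - 1)).map Subtype.val)

instance radM_sf {d : ℕ} : SFinite (radM d) := by
  rw [radM]; infer_instance

lemma radM_ae_pos {d : ℕ} : ∀ᵐ t ∂(radM d), 0 < t := by
  rw [radM]
  apply Measure.ae_smul_measure
  rw [ae_map_iff measurable_subtype_coe.aemeasurable measurableSet_Ioi]
  exact ae_of_all _ (fun x => x.2)

lemma polar_map {d : ℕ} [hd : Fact (2 ≤ d)] :
    (volume : Measure (Euc d)) =
      ((radM d).prod (sphereMeasure d)).map (fun z => z.1 • z.2) := by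
  have h1 := (volume : Measure (Euc d)).measurePreserving_homeomorphUnitSphereProd
  have h2 : (radM d).prod (sphereMeasure d) =
      (((volume : Measure (Euc d)).toSphere).prod (Measure.volumeIoiPow (d-1))).map
        (fun z => ((z.2 : ℝ), (z.1 : Euc d))) := by
    have hs : ((volume : Measure (Euc d)).toSphere).prod (Measure.volumeIoiPow (d-1))
      = ((Measure.volumeIoiPow (d-1)).prod ((volume : Measure (Euc d)).toSphere)).map Prod.swap :=
        (Measure.prod_swap).symm
    rw [hs, Measure.map_map (by fun_prop) (by fun_prop), radM, sphereMeasure,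
      Measure.prod_smul_left, Measure.prod_smul_right, smul_smul,
      ENNReal.mul_inv_cancel toSphere_univ_ne toSphere_univ_ne_top, one_smul,
      Measure.map_prod_map _ _ measurable_subtype_coe measurable_subtype_coe]
    rfl
  have hfin : Module.finrank ℝ (Euc d) = d := by simp
  rw [hfin] at h1
  rw [h2, Measure.map_map (by fun_prop) (by fun_prop), ← h1.map_eq,
    Measure.map_map (by fun_prop) (h1.measurable)]
  have h3 : ((fun z : ℝ × Euc d => z.1 • z.2) ∘ fun z : (sphere (0 : Euc d) 1) × (Ioi (0:ℝ)) => ((z.2 : ℝ), (z.1 : Euc d))) ∘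
      (homeomorphUnitSphereProd (Euc d)) = Subtype.val := by
    funext x
    have := (homeomorphUnitSphereProd (Euc d)).symm_apply_apply x
    conv_rhs => rw [← this]
    rfl
  rw [h3, map_comap_subtype_coe (measurableSet_singleton _).compl, restrict_compl_singleton]

lemma polar_lintegral {d : ℕ} [hd : Fact (2 ≤ d)] {g : Euc d → ℝ≥0∞} (hg : Measurable g) :
    ∫⁻ u, g u = ∫⁻ t, ∫⁻ y, g (t • y) ∂(sphereMeasure d) ∂(radM d) := by
  conv_lhs => rw [polar_map]
  rw [lintegral_map hg (by fun_prop), lintegral_prod]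
  exact (hg.comp (by fun_prop)).aemeasurable

lemma radM_lintegral {d : ℕ} {g : ℝ → ℝ≥0∞} (hg : Measurable g) :
    ∫⁻ t, g t ∂(radM d) = ((volume : Measure (Euc d)).toSphere Set.univ) *
      ∫⁻ t in Ioi 0, ENNReal.ofReal (t ^ (d-1)) * g t := by
  rw [radM, lintegral_smul_measure, lintegral_map hg measurable_subtype_coe, Measure.volumeIoiPow,
    lintegral_withDensity_eq_lintegral_mul _ (by fun_prop) (by fun_prop), smul_eq_mul]
  congr 1
  have h := setLIntegral_subtype (μ := volume) (s := Ioi (0:ℝ)) measurableSet_Ioi univ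
    (fun t => ENNReal.ofReal (t ^ (d-1)) * g t)
  rw [image_univ, Subtype.range_coe, Measure.restrict_univ] at h
  rw [← h]
  rfl

lemma radM_lower {d : ℕ} [hd : Fact (2 ≤ d)] : ∃ C : ℝ≥0, ∀ g : ℝ → ℝ≥0∞, Measurable g →
    ∫⁻ t in Icc (1/2) 4, g t ≤ C * ∫⁻ t, g t ∂(radM d) := by
  set K := (volume : Measure (Euc d)).toSphere Set.univ with hK
  have hK0 : K ≠ 0 := toSphere_univ_ne
  have hKt : K ≠ ∞ := toSphere_univ_ne_top
  have hp : (2:ℝ≥0∞)^(d-1) ≠ ∞ := by simp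
  have hKi : K⁻¹ ≠ ∞ := by simp [hK0]
  refine ⟨((2:ℝ≥0∞)^(d-1) * K⁻¹).toNNReal, fun g hg => ?_⟩
  rw [ENNReal.coe_toNNReal (ENNReal.mul_ne_top hp hKi), radM_lintegral hg, ← hK]
  rw [mul_assoc, ← mul_assoc K⁻¹, ENNReal.inv_mul_cancel hK0 hKt, one_mul,
    ← lintegral_const_mul _ (by fun_prop)]
  calc ∫⁻ t in Icc (1/2) 4, g t
      ≤ ∫⁻ t in Icc (1/2) 4, 2^(d-1) * (ENNReal.ofReal (t ^ (d-1)) * g t) := by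
        apply setLIntegral_mono (by fun_prop)
        intro t ht
        rw [← mul_assoc]
        have : (1:ℝ≥0∞) ≤ 2^(d-1) * ENNReal.ofReal (t ^ (d-1)) := by
          have h2 : (2:ℝ≥0∞) = ENNReal.ofReal 2 := by simp
          rw [h2, ← ENNReal.ofReal_pow (by norm_num), ← ENNReal.ofReal_mul (by positivity),
            ← mul_pow]
          rw [ENNReal.one_le_ofReal]
          exact one_le_pow₀ (by linarith [ht.1])
        calc g t = 1 * g t := (one_mul _).symm
          _ ≤ _ := by gcongr
    _ ≤ _ := by
        apply lintegral_mono_set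
        intro t ht
        have := ht.1
        simp only [mem_Ioi]; linarith

lemma sphere_lintegral_eq {d : ℕ} [hd : Fact (2 ≤ d)] {g : Euc d → ℝ≥0∞} (hg : Measurable g) :
    ∫⁻ y, g y ∂(sphereMeasure d) =
      (volume (ball (0 : Euc d) 1))⁻¹ * ∫⁻ u in ball (0 : Euc d) 1, g (‖u‖⁻¹ • u) := by
  have key : ∀ g : Euc d → ℝ≥0∞, Measurable g → ∫⁻ u in ball (0 : Euc d) 1, g (‖u‖⁻¹ • u) =
      (radM d (Iio 1)) * ∫⁻ y, g y ∂(sphereMeasure d) := by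
    intro g hg
    rw [← lintegral_indicator measurableSet_ball, polar_lintegral
      (Measurable.indicator (by fun_prop) measurableSet_ball)]
    rw [← setLIntegral_one, ← lintegral_indicator measurableSet_Iio,
      ← lintegral_mul_const _ (by
        exact (measurable_const).indicator measurableSet_Iio)]
    apply lintegral_congr_ae
    filter_upwards [radM_ae_pos] with t ht
    rw [← lintegral_const_mul _ hg]
    apply lintegral_congr_ae
    filter_upwards [sphere_ae_norm] with y hy
    have h1 : ‖t • y‖ = t := by rw [norm_smul, hy, Real.norm_of_nonneg ht.le, mul_one]
    by_cases h : t < 1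
    · rw [indicator_of_mem (by simpa [h1] using h), indicator_of_mem (by simpa using h), h1,
        smul_smul, inv_mul_cancel₀ ht.ne', one_smul, one_mul]
    · rw [indicator_of_notMem (by simpa [h1] using h), indicator_of_notMem (by simpa using h),
        zero_mul]
  have k1 := key (fun _ => 1) measurable_const
  simp only [lintegral_const, measure_univ, mul_one, Measure.restrict_apply_univ, one_mul] at k1
  rw [key g hg, ← k1, ← mul_assoc, ENNReal.inv_mul_cancel (measure_ball_pos _ _ one_pos).ne'
    measure_ball_lt_top.ne, one_mul]

lemma sphere_rot {d : ℕ} [hd : Fact (2 ≤ d)] (A : Euc d ≃ₗᵢ[ℝ] Euc d) :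
    MeasurePreserving A (sphereMeasure d) (sphereMeasure d) := by
  refine ⟨A.continuous.measurable, ?_⟩
  ext s hs
  have hm : Measurable (s.indicator (fun _ => (1:ℝ≥0∞))) := measurable_const.indicator hs
  rw [← lintegral_indicator_one hs, ← lintegral_indicator_one hs]
  change ∫⁻ a, s.indicator (fun _ => (1:ℝ≥0∞)) a ∂_ = ∫⁻ a, s.indicator (fun _ => (1:ℝ≥0∞)) a ∂_
  rw [lintegral_map hm A.continuous.measurable, sphere_lintegral_eq hm,
    sphere_lintegral_eq (g := fun a => s.indicator (fun _ => (1:ℝ≥0∞)) (A a)) (hm.comp A.continuous.measurable)]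
  congr 1
  rw [← lintegral_indicator measurableSet_ball, ← lintegral_indicator measurableSet_ball]
  have h4 := (A.measurePreserving).lintegral_comp
    (f := (ball (0 : Euc d) 1).indicator (fun u => s.indicator (fun _ => (1:ℝ≥0∞)) (‖u‖⁻¹ • u)))
    (Measurable.indicator (by fun_prop) measurableSet_ball)
  rw [← h4]
  apply lintegral_congr
  intro u
  have e : A (‖u‖⁻¹ • u) = ‖A u‖⁻¹ • A u := by
    rw [A.norm_map]; exact A.toLinearEquiv.map_smul _ _
  have hi : A u ∈ ball (0 : Euc d) 1 ↔ u ∈ ball (0 : Euc d) 1 := by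
    rw [mem_ball, mem_ball, dist_zero_right, dist_zero_right, A.norm_map]
  by_cases hu : u ∈ ball (0 : Euc d) 1
  · rw [indicator_of_mem hu, indicator_of_mem (hi.2 hu)]
    exact congrArg _ e
  · rw [indicator_of_notMem hu, indicator_of_notMem (fun h => hu (hi.1 h))]

lemma sphere_small_ball {d : ℕ} [hd : Fact (2 ≤ d)] : ∃ C : ℝ≥0, ∀ (w : Euc d) (δ : ℝ),
    ‖w‖ = 1 → 0 < δ → δ ≤ 1 → sphereMeasure d (ball w δ) ≤ C * ENNReal.ofReal δ := by
  refine ⟨2 * 2 ^ d, fun w δ hw hδ hδ1 => ?_⟩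
  have hm : Measurable ((ball w δ).indicator (fun _ => (1:ℝ≥0∞))) :=
    measurable_const.indicator measurableSet_ball
  have hB0 : volume (ball (0 : Euc d) 1) ≠ 0 := (measure_ball_pos _ _ one_pos).ne'
  have hBt : volume (ball (0 : Euc d) 1) ≠ ∞ := measure_ball_lt_top.ne
  set N := ⌊1/δ⌋₊ with hN
  have hsub : (ball (0 : Euc d) 1 ∩ {u | ‖u‖⁻¹ • u ∈ ball w δ}) ⊆
      ⋃ k ∈ Finset.range (N+1), ball ((k * δ) • w) (2 * δ) := by
    rintro u ⟨hu1, hu2⟩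
    rw [mem_ball, dist_zero_right] at hu1
    rw [mem_ofPred_eq, mem_ball, dist_eq_norm] at hu2
    simp only [mem_iUnion, exists_prop, Finset.mem_range]
    refine ⟨⌊‖u‖/δ⌋₊, ?_, ?_⟩
    · apply Nat.lt_succ_of_le
      apply Nat.floor_le_floor
      gcongr
    rw [mem_ball, dist_eq_norm]
    set k := ⌊‖u‖/δ⌋₊
    have hk1 : (k:ℝ) * δ ≤ ‖u‖ := by
      have := Nat.floor_le (a := ‖u‖/δ) (by positivity)
      rwa [le_div_iff₀ hδ] at this
    have hk2 : ‖u‖ < (k+1) * δ := by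
      have := Nat.lt_floor_add_one (‖u‖/δ)
      rwa [div_lt_iff₀ hδ] at this
    have e : u - (k*δ) • w = ‖u‖ • (‖u‖⁻¹ • u - w) + (‖u‖ - k * δ) • w := by
      rcases eq_or_ne u 0 with rfl | h0
      · simp
      · rw [smul_sub, smul_smul, mul_inv_cancel₀ (norm_ne_zero_iff.2 h0), one_smul, sub_smul]; abel
    rw [e]
    calc _ ≤ ‖u‖ * ‖‖u‖⁻¹ • u - w‖ + (‖u‖ - k * δ) * 1 := by
          refine (norm_add_le _ _).trans ?_
          rw [norm_smul, norm_smul, hw, norm_norm, Real.norm_of_nonneg (by linarith)]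
      _ ≤ 1 * ‖‖u‖⁻¹ • u - w‖ + (‖u‖ - k * δ) * 1 := by gcongr
      _ < 2 * δ := by linarith
  rw [← setLIntegral_one, ← lintegral_indicator measurableSet_ball, sphere_lintegral_eq hm]
  have h1 : ∫⁻ u in ball (0 : Euc d) 1, (ball w δ).indicator (fun _ => (1:ℝ≥0∞)) (‖u‖⁻¹ • u)
      = volume (ball (0 : Euc d) 1 ∩ {u | ‖u‖⁻¹ • u ∈ ball w δ}) := by
    have hms : MeasurableSet {u : Euc d | ‖u‖⁻¹ • u ∈ ball w δ} := by
      have : Measurable (fun u : Euc d => ‖u‖⁻¹ • u) := by fun_prop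
      exact this measurableSet_ball
    rw [inter_comm, ← Measure.restrict_apply hms, ← lintegral_indicator_one hms]
    rfl
  rw [h1]
  have h2 : volume (ball (0 : Euc d) 1 ∩ {u | ‖u‖⁻¹ • u ∈ ball w δ}) ≤
      (N+1) * (ENNReal.ofReal ((2*δ)^d) * volume (ball (0 : Euc d) 1)) := by
    refine (measure_mono hsub).trans ((measure_biUnion_finset_le _ _).trans ?_)
    have : ∀ k ∈ Finset.range (N+1), volume (ball ((k * δ) • w) (2 * δ)) =
        (ENNReal.ofReal ((2*δ)^d) * volume (ball (0 : Euc d) 1)) := by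
      intro k _
      rw [Measure.addHaar_ball _ _ (by positivity)]
      simp
    rw [Finset.sum_congr rfl this]
    simp
  calc _ ≤ (volume (ball (0 : Euc d) 1))⁻¹ * ((N+1) * (ENNReal.ofReal ((2*δ)^d) * volume (ball (0 : Euc d) 1))) := by gcongr
    _ = ((N+1) * ENNReal.ofReal ((2*δ)^d)) * ((volume (ball (0 : Euc d) 1))⁻¹ * volume (ball (0 : Euc d) 1)) := by ring
    _ = (N+1) * ENNReal.ofReal ((2*δ)^d) := by
      rw [ENNReal.inv_mul_cancel hB0 hBt, mul_one]
    _ = ENNReal.ofReal ((N+1) * (2*δ)^d) := by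
      rw [ENNReal.ofReal_mul (by positivity), ENNReal.ofReal_add (by positivity) (by norm_num)]; simp
    _ ≤ ENNReal.ofReal ((2 * 2^d) * δ) := by
      apply ENNReal.ofReal_le_ofReal
      have hNd : (N:ℝ) * δ ≤ 1 := by
        have := Nat.floor_le (a := 1/δ) (by positivity)
        rwa [le_div_iff₀ hδ] at this
      obtain ⟨e, rfl⟩ : ∃ e, d = e + 2 := ⟨d - 2, by have := hd.out; omega⟩
      have : δ^e ≤ 1 := pow_le_one₀ hδ.le hδ1
      rw [mul_pow, pow_add δ e 2]
      have h3 : (N + 1) * (2^(e+2) * (δ^e * δ^2)) = (2^(e+2) * δ) * (δ^e * ((N:ℝ) * δ + δ)) := by ring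
      rw [h3]
      calc (2^(e+2) * δ) * (δ^e * ((N:ℝ) * δ + δ)) ≤ (2^(e+2) * δ) * (1 * (1 + 1)) := by gcongr
        _ = _ := by ring
    _ = _ := by
      rw [ENNReal.ofReal_mul (by positivity), ENNReal.ofReal_mul (by norm_num),
        ENNReal.ofReal_pow (by norm_num)]
      simp

lemma plancherel_le {d : ℕ} {f : Euc d → ℂ} (hf : Integrable f) :
    ∫⁻ x, ‖𝓕 f x‖ₑ ^ 2 ≤ ∫⁻ x, ‖f x‖ₑ ^ 2 := by
  by_cases htop : ∫⁻ x, ‖f x‖ₑ ^ 2 = ∞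
  · rw [htop]; exact le_top
  have h2 : MemLp f 2 := by
    refine ⟨hf.1, ?_⟩
    rw [eLpNorm_lt_top_iff_lintegral_rpow_enorm_lt_top (by norm_num) (by norm_num)]
    simpa using Ne.lt_top htop
  have hF : Continuous (𝓕 f) :=
    VectorFourier.fourierIntegral_continuous Real.continuous_fourierChar
      (innerSL ℝ).continuous₂ hf
  set F : Lp ℂ 2 (volume : Measure (Euc d)) := h2.toLp f with hFdef
  have hae : ∀ᵐ x, (𝓕 F : Lp ℂ 2 (volume : Measure (Euc d))) x = 𝓕 f x := by
    apply ae_eq_of_integral_contDiff_smul_eq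
    · exact (Lp.memLp _).locallyIntegrable (by norm_num)
    · exact hF.locallyIntegrable
    intro g hg hgs
    have hg1 : ContDiff ℝ (⊤ : ℕ∞) (fun x => (g x : ℂ)) := by
      exact Complex.ofRealCLM.contDiff.comp hg
    have hg2 : HasCompactSupport (fun x => (g x : ℂ)) := hgs.comp_left (g := Complex.ofReal) (by simp)
    set φ : SchwartzMap (Euc d) ℂ := hg2.toSchwartzMap hg1 with hφ
    have e1 := congrArg (fun T => T φ) (Lp.fourier_toTemperedDistribution_eq F)
    simp only [TemperedDistribution.fourier_apply, Lp.toTemperedDistribution_apply] at e1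
    have hφa : ∀ x, φ x = (g x : ℂ) := fun x => rfl
    have e2 : ∫ x, g x • (𝓕 F : Lp ℂ 2 (volume : Measure (Euc d))) x =
        ∫ x, φ x • (𝓕 F : Lp ℂ 2 (volume : Measure (Euc d))) x := by
      simp [hφa]
    have e3 : ∫ x, g x • 𝓕 f x = ∫ x, φ x • 𝓕 f x := by
      simp [hφa]
    rw [e2, e3, ← e1]
    have e4 : ∫ x, (𝓕 φ) x • F x = ∫ x, (𝓕 φ) x • f x := by
      apply integral_congr_ae
      filter_upwards [h2.coeFn_toLp] with x hx
      rw [hFdef, hx]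
    rw [e4]
    have e5 := VectorFourier.integral_fourierIntegral_smul_eq_flip (μ := (volume : Measure (Euc d)))
      (ν := (volume : Measure (Euc d))) (e := Real.fourierChar) (L := innerₗ (Euc d)) (f := (φ : Euc d → ℂ)) (g := f)
      Real.continuous_fourierChar
      (innerSL ℝ).continuous₂ φ.integrable hf
    rw [flip_innerₗ] at e5
    exact e5
  have hn := Lp.norm_fourier_eq F
  rw [Lp.norm_def, Lp.norm_def, ENNReal.toReal_eq_toReal_iff' (Lp.eLpNorm_ne_top _) (Lp.eLpNorm_ne_top _),
    eLpNorm_congr_ae hae, eLpNorm_congr_ae h2.coeFn_toLp] at hn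
  have a1 := eLpNorm_nnreal_pow_eq_lintegral (μ := (volume : Measure (Euc d))) (f := f) (p := 2) (by norm_num)
  have a2 := eLpNorm_nnreal_pow_eq_lintegral (μ := (volume : Measure (Euc d))) (f := 𝓕 f) (p := 2) (by norm_num)
  simp only [NNReal.coe_ofNat, ENNReal.coe_ofNat] at a1 a2
  rw [hn, a1] at a2
  simp only [ENNReal.rpow_ofNat] at a2
  exact a2.symm.le

/-- characteristic function of the sphere -/
def sigHat (d : ℕ) (η : Euc d) : ℂ := ∫ y, (Real.fourierChar (-(inner ℝ y η)) : ℂ) ∂(sphereMeasure d)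

lemma sigHat_radial {d : ℕ} [hd : Fact (2 ≤ d)] {η η' : Euc d} (h : ‖η‖ = ‖η'‖) :
    sigHat d η = sigHat d η' := by
  set A := (ℝ ∙ (η - η'))ᗮ.reflection with hA
  have h1 : A η = η' := Submodule.reflection_sub h
  have h2 := (sphere_rot A).integral_comp A.toHomeomorph.measurableEmbedding
    (fun y => (Real.fourierChar (-(inner ℝ y η')) : ℂ))
  rw [sigHat, sigHat, ← h2]
  congr 1
  funext y
  rw [← h1, A.inner_map_map]

/-- radialisation -/
def radz {d : ℕ} (b : Euc d → ℂ) (ξ : Euc d) : ℂ := ∫ y, b (‖ξ‖ • y) ∂(sphereMeasure d)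

lemma polar_integral {d : ℕ} [hd : Fact (2 ≤ d)] {F : Euc d → ℂ} (hF : Integrable F) :
    ∫ ξ, F ξ = ∫ t, ∫ y, F (t • y) ∂(sphereMeasure d) ∂(radM d) := by
  have hm : Measurable (fun z : ℝ × Euc d => z.1 • z.2) := by fun_prop
  have h1 : Integrable F (((radM d).prod (sphereMeasure d)).map (fun z => z.1 • z.2)) := by
    rw [← polar_map]; exact hF
  conv_lhs => rw [polar_map]
  rw [integral_map hm.aemeasurable h1.1]
  rw [integrable_map_measure h1.1 hm.aemeasurable] at h1
  exact integral_prod _ h1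

lemma radz_cont {d : ℕ} [hd : Fact (2 ≤ d)] {b : Euc d → ℂ} (hb : Continuous b) {M : ℝ}
    (hM : ∀ x, ‖b x‖ ≤ M) : Continuous (radz b) := by
  apply continuous_of_dominated (bound := fun _ => M)
  · intro x; exact (by fun_prop : Continuous fun y => b (‖x‖ • y)).aestronglyMeasurable
  · intro x; exact ae_of_all _ fun y => hM _
  · exact integrable_const _
  · exact ae_of_all _ fun y => by fun_prop

lemma radz_supp {d : ℕ} [hd : Fact (2 ≤ d)] {b : Euc d → ℂ}
    (hbi : HasCompactSupport b) : HasCompactSupport (radz b) := by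
  obtain ⟨K, hK⟩ := hbi.isCompact.isBounded.subset_closedBall 0
  apply HasCompactSupport.of_support_subset_isCompact (isCompact_closedBall (0 : Euc d) K)
  intro ξ hξ
  by_contra hcon
  apply hξ
  rw [radz, integral_eq_zero_of_ae]
  filter_upwards [sphere_ae_norm] with y hy
  by_contra h
  have := hK (subset_tsupport _ h)
  simp only [mem_closedBall, dist_zero_right, norm_smul, norm_norm, hy, mul_one] at this hcon
  exact hcon this

lemma radz_smul {d : ℕ} [hd : Fact (2 ≤ d)] (b : Euc d → ℂ) {t : ℝ} (ht : 0 < t) {y : Euc d} (hy : ‖y‖ = 1) :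
    radz b (t • y) = ∫ y, b (t • y) ∂(sphereMeasure d) := by
  rw [radz, norm_smul, hy, mul_one, Real.norm_of_nonneg ht.le]

lemma radz_adj {d : ℕ} [hd : Fact (2 ≤ d)] {b g : Euc d → ℂ} {M : ℝ} (hb : Continuous b)
    (hbi : HasCompactSupport b) (hg : Continuous g) (hgb : ∀ x, ‖g x‖ ≤ M) :
    ∫ ξ, radz b ξ * g ξ = ∫ ξ, b ξ * radz g ξ := by
  obtain ⟨K, hK⟩ := hb.bounded_above_of_compact_support hbi
  have i1 : Integrable (fun ξ => radz b ξ * g ξ) :=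
    ((radz_cont hb hK).mul hg).integrable_of_hasCompactSupport (radz_supp hbi).mul_right
  have i2 : Integrable (fun ξ => b ξ * radz g ξ) :=
    (hb.mul (radz_cont hg hgb)).integrable_of_hasCompactSupport hbi.mul_right
  rw [polar_integral i1, polar_integral i2]
  apply integral_congr_ae
  filter_upwards [radM_ae_pos] with t ht
  have e1 : ∫ y, radz b (t • y) * g (t • y) ∂(sphereMeasure d) =
      ∫ y, (∫ y, b (t • y) ∂(sphereMeasure d)) * g (t • y) ∂(sphereMeasure d) := by
    apply integral_congr_ae
    filter_upwards [sphere_ae_norm] with y hy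
    rw [radz_smul b ht hy]
  have e2 : ∫ y, b (t • y) * radz g (t • y) ∂(sphereMeasure d) =
      ∫ y, b (t • y) * (∫ y, g (t • y) ∂(sphereMeasure d)) ∂(sphereMeasure d) := by
    apply integral_congr_ae
    filter_upwards [sphere_ae_norm] with y hy
    rw [radz_smul g ht hy]
  rw [e1, e2, integral_const_mul, integral_mul_const]

lemma radz_fourier {d : ℕ} [hd : Fact (2 ≤ d)] {b : Euc d → ℂ} (hb : Continuous b)
    (hbi : HasCompactSupport b) (u : Euc d) :
    𝓕 (radz b) u = ∫ ξ, b ξ * sigHat d (‖u‖ • ξ) := by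
  have h := radz_adj (g := fun ξ => (Real.fourierChar (-(inner ℝ ξ u)) : ℂ)) (M := 1) hb hbi
    (by fun_prop) (fun x => (Circle.norm_coe _).le)
  have e : ∀ ξ, radz (fun ξ => (Real.fourierChar (-(inner ℝ ξ u)) : ℂ)) ξ = sigHat d (‖u‖ • ξ) := by
    intro ξ
    have : sigHat d (‖u‖ • ξ) = sigHat d (‖ξ‖ • u) := sigHat_radial (by simp [norm_smul, mul_comm])
    rw [this, radz, sigHat]
    simp only [real_inner_smul_left, real_inner_smul_right]
  simp only [e] at h
  rw [← h, Real.fourier_eq]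
  congr 1
  funext ξ
  rw [Circle.smul_def, smul_eq_mul, mul_comm]

lemma gauss_bound {d : ℕ} {R : ℝ} (hR : 0 < R) (x₀ v : Euc d) :
    ‖∫ y : Euc d, ((Real.exp (-(Real.pi / R^2) * ‖y - x₀‖^2) : ℝ) : ℂ) * (Real.fourierChar (inner ℝ y v) : ℂ)‖
      = R ^ d * Real.exp (-(Real.pi * R^2 * ‖v‖^2)) := by
  have hb : 0 < Real.pi / R^2 := by positivity
  rw [← integral_add_right_eq_self _ x₀]
  have h := fourier_gaussian_innerProductSpace (V := Euc d) (b := ((Real.pi / R^2 : ℝ) : ℂ))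
    (by rw [Complex.ofReal_re]; exact hb) (-v)
  rw [Real.fourier_eq] at h
  have e : ∀ y : Euc d, ((Real.exp (-(Real.pi / R^2) * ‖y + x₀ - x₀‖^2) : ℝ) : ℂ) * (Real.fourierChar (inner ℝ (y + x₀) v) : ℂ)
     = (Real.fourierChar (inner ℝ x₀ v) : ℂ) * (Real.fourierChar (-inner ℝ y (-v)) • Complex.exp (-((Real.pi / R^2 : ℝ) : ℂ) * (‖y‖:ℂ)^2)) := by
    intro y
    rw [Circle.smul_def, smul_eq_mul, inner_add_left, AddChar.map_add_eq_mul, inner_neg_right, neg_neg]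
    simp
    ring
  simp_rw [e]
  rw [integral_const_mul, norm_mul, Circle.norm_coe, one_mul, h, norm_mul, norm_neg]
  congr 1
  · rw [← Complex.ofReal_div, Complex.norm_cpow_eq_rpow_re_of_pos (by positivity)]
    have : ((Module.finrank ℝ (Euc d) : ℂ)/2).re = d / 2 := by
      simp
    rw [this]
    have : Real.pi / (Real.pi / R^2) = R^2 := by field_simp
    rw [this, ← Real.rpow_natCast R 2, ← Real.rpow_mul hR.le, ← Real.rpow_natCast R d]
    congr 1; push_cast; ring
  · rw [← Complex.ofReal_pow, ← Complex.ofReal_pow, ← Complex.ofReal_neg, ← Complex.ofReal_mul, ← Complex.ofReal_div,Complex.norm_exp, Complex.ofReal_re]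
    congr 1
    field_simp

lemma kern_bound {d : ℕ} [hd : Fact (2 ≤ d)] : ∃ C : ℝ≥0, ∀ (w : Euc d) (A : ℝ), ‖w‖ = 1 → 1 ≤ A →
    ∫⁻ y, ENNReal.ofReal (Real.exp (-(Real.pi * A^2 * ‖y - w‖^2))) ∂(sphereMeasure d) ≤
      C * ENNReal.ofReal (A ^ (-(1/2:ℝ))) := by
  obtain ⟨C, hC⟩ := sphere_small_ball (d := d)
  refine ⟨C + 1, fun w A hw hA => ?_⟩
  have hA0 : 0 < A := by linarith
  set δ := A ^ (-(1/2:ℝ)) with hδ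
  have hδ0 : 0 < δ := by positivity
  have hδ1 : δ ≤ 1 := Real.rpow_le_one_of_one_le_of_nonpos hA (by norm_num)
  have hδ2 : δ ^ 2 = A⁻¹ := by
    rw [hδ, ← Real.rpow_natCast, ← Real.rpow_mul hA0.le, ← Real.rpow_neg_one]; norm_num
  have key : ∀ y : Euc d, ENNReal.ofReal (Real.exp (-(Real.pi * A^2 * ‖y - w‖^2))) ≤
      (ball w δ).indicator (fun _ => (1:ℝ≥0∞)) y + ENNReal.ofReal δ := by
    intro y
    by_cases hy : y ∈ ball w δ
    · rw [indicator_of_mem hy]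
      refine le_trans ?_ le_self_add
      rw [ENNReal.ofReal_le_one, Real.exp_le_one_iff]
      have : 0 ≤ Real.pi * A^2 * ‖y - w‖^2 := by positivity
      linarith
    · rw [indicator_of_notMem hy, zero_add]
      apply ENNReal.ofReal_le_ofReal
      rw [mem_ball, dist_eq_norm, not_lt] at hy
      have h1 : A ≤ Real.pi * A^2 * ‖y - w‖^2 := by
        have h2 : A⁻¹ ≤ ‖y - w‖^2 := by rw [← hδ2]; gcongr
        have h3 : A^2 * A⁻¹ = A := by field_simp
        have h4 : 0 ≤ A^2 * ‖y - w‖^2 := by positivity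
        have h5 : A ≤ A^2 * ‖y - w‖^2 := by
          calc A = A^2 * A⁻¹ := h3.symm
            _ ≤ _ := by gcongr
        nlinarith [Real.pi_gt_three]
      calc Real.exp (-(Real.pi * A^2 * ‖y - w‖^2)) ≤ Real.exp (-A) := by
            apply Real.exp_le_exp.2; linarith
        _ ≤ A⁻¹ := by
            rw [Real.exp_neg]
            apply inv_anti₀ hA0
            linarith [Real.add_one_le_exp A]
        _ ≤ δ := by rw [← hδ2]; nlinarith
  calc _ ≤ ∫⁻ y, ((ball w δ).indicator (fun _ => (1:ℝ≥0∞)) y + ENNReal.ofReal δ) ∂(sphereMeasure d) :=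
        lintegral_mono key
    _ = sphereMeasure d (ball w δ) + ENNReal.ofReal δ := by
        rw [lintegral_add_right _ measurable_const]
        simp [lintegral_indicator measurableSet_ball]
    _ ≤ C * ENNReal.ofReal δ + ENNReal.ofReal δ := by gcongr; exact hC w δ hw hδ0 hδ1
    _ = _ := by push_cast; ring

lemma ennreal_mul_le (a b : ℝ≥0∞) : a * b ≤ a^2 + b^2 := by
  rcases le_total a b with h | h
  · calc a * b ≤ b * b := by gcongr
      _ = b^2 := by ring
      _ ≤ _ := le_add_self
  · calc a * b ≤ a * a := by gcongr
      _ = a^2 := by ring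
      _ ≤ _ := le_self_add

lemma quad_form {d : ℕ} [hd : Fact (2 ≤ d)] {g : Euc d → ℂ} (hg : Continuous g) {M : ℝ}
    (hM : ∀ x, ‖g x‖ ≤ M) {R ρ : ℝ} (hR : 0 < R) (x₀ : Euc d) {J : ℝ≥0∞}
    (hJ : ∀ w : Euc d, ‖w‖ = 1 → ∫⁻ y, ENNReal.ofReal (R^d * Real.exp (-(Real.pi * (R*ρ)^2 * ‖y - w‖^2)))
      ∂(sphereMeasure d) ≤ J) :
    ∫⁻ y, ENNReal.ofReal (Real.exp (-(Real.pi / R^2) * ‖y - x₀‖^2)) *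
      ‖∫ w, g w * (Real.fourierChar (inner ℝ y (ρ • w)) : ℂ) ∂(sphereMeasure d)‖ₑ ^ 2 ≤
      2 * J * ∫⁻ w, ‖g w‖ₑ^2 ∂(sphereMeasure d) := by
  set σ := sphereMeasure d with hσ
  set φ : Euc d → ℝ := fun y => Real.exp (-(Real.pi / R^2) * ‖y - x₀‖^2) with hφ
  have hφi : Integrable φ := by
    have := (GaussianFourier.integrable_cexp_neg_mul_sq_norm_add (V := Euc d) (b := ((Real.pi / R^2 : ℝ) : ℂ))
      (by rw [Complex.ofReal_re]; positivity) 0 0).norm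
    have h2 := this.comp_sub_right x₀
    refine h2.congr (ae_of_all _ fun y => ?_)
    simp only [zero_mul, add_zero, Complex.norm_exp, hφ]
    rw [← Complex.ofReal_neg, ← Complex.ofReal_pow, ← Complex.ofReal_mul, Complex.ofReal_re]
  set G : Euc d → ℂ := fun y => ∫ w, g w * (Real.fourierChar (inner ℝ y (ρ • w)) : ℂ) ∂σ with hG
  have hM0 : 0 ≤ M := (norm_nonneg _).trans (hM 0)
  have hGb : ∀ y, ‖G y‖ ≤ M := by
    intro y
    have := norm_integral_le_of_norm_le_const (μ := σ) (f := fun w => g w * (Real.fourierChar (inner ℝ y (ρ • w)) : ℂ)) (C := M)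
      (ae_of_all _ fun w => by rw [norm_mul, Circle.norm_coe, mul_one]; exact hM _)
    rw [hG]; simpa using this
  have hGc : Continuous G := by
    apply continuous_of_dominated (bound := fun _ => M)
    · intro y; exact (by fun_prop : Continuous fun w => g w * (Real.fourierChar (inner ℝ y (ρ • w)) : ℂ)).aestronglyMeasurable
    · intro y; exact ae_of_all _ fun w => by rw [norm_mul, Circle.norm_coe, mul_one]; exact hM _
    · exact integrable_const _
    · exact ae_of_all _ fun w => by fun_prop
  let P : Euc d → Euc d × Euc d → ℂ := fun y z =>
    ((φ y : ℝ) : ℂ) * ((g z.1 * (Real.fourierChar (inner ℝ y (ρ • z.1)) : ℂ)) *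
      (starRingEnd ℂ) (g z.2 * (Real.fourierChar (inner ℝ y (ρ • z.2)) : ℂ)))
  have hPi : Integrable (Function.uncurry P) ((volume : Measure (Euc d)).prod (σ.prod σ)) := by
    have h1 : Integrable (fun x : Euc d × (Euc d × Euc d) => φ x.1 * (M*M)) ((volume : Measure (Euc d)).prod (σ.prod σ)) :=
      hφi.mul_prod (integrable_const (M*M))
    refine h1.mono' ?_ (ae_of_all _ fun x => ?_)
    · apply Continuous.aestronglyMeasurable
      simp only [P, Function.uncurry, hφ]
      fun_prop
    · simp only [P, Function.uncurry, norm_mul, RCLike.norm_conj, Circle.norm_coe, mul_one]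
      rw [Complex.norm_real, Real.norm_of_nonneg (Real.exp_pos _).le]
      gcongr
      · exact hM _
      · exact hM _
  have hPG : ∀ y, ∫ z, P y z ∂(σ.prod σ) = ((φ y * ‖G y‖^2 : ℝ) : ℂ) := by
    intro y
    simp only [P]
    rw [integral_const_mul, integral_prod_mul (f := fun w => g w * (Real.fourierChar (inner ℝ y (ρ • w)) : ℂ))
      (g := fun w => (starRingEnd ℂ) (g w * (Real.fourierChar (inner ℝ y (ρ • w)) : ℂ))), integral_conj,
      Complex.mul_conj, Complex.normSq_eq_norm_sq]
    push_cast; rfl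
  have hint : Integrable (fun y => φ y * ‖G y‖^2) := by
    refine (hφi.mul_const (M^2)).mono' ?_ (ae_of_all _ fun y => ?_)
    · exact hφi.1.mul (by fun_prop)
    · rw [norm_mul, norm_pow, norm_norm, Real.norm_of_nonneg (Real.exp_pos _).le]
      gcongr
      exact hGb y
  have e1 : ∫⁻ y, ENNReal.ofReal (φ y) * ‖G y‖ₑ^2 = ‖∫ y, ((φ y * ‖G y‖^2 : ℝ) : ℂ)‖ₑ := by
    rw [integral_complex_ofReal, ← ofReal_norm, Complex.norm_real, Real.norm_eq_abs, abs_of_nonneg (integral_nonneg fun y => by positivity),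
      ofReal_integral_eq_lintegral_ofReal hint (ae_of_all _ fun y => by positivity)]
    apply lintegral_congr; intro y
    rw [ENNReal.ofReal_mul (Real.exp_pos _).le, ENNReal.ofReal_pow (norm_nonneg _), ofReal_norm]
  rw [e1]
  simp_rw [← hPG]
  rw [integral_integral_swap hPi]
  have hPy : ∀ z : Euc d × Euc d, ‖∫ y, P y z‖ₑ = ‖g z.1‖ₑ * ‖g z.2‖ₑ *
      ENNReal.ofReal (R^d * Real.exp (-(Real.pi * (R*ρ)^2 * ‖z.1 - z.2‖^2))) := by
    intro z
    have : ∀ y, P y z = (g z.1 * (starRingEnd ℂ) (g z.2)) * (((φ y : ℝ) : ℂ) *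
        (Real.fourierChar (inner ℝ y (ρ • (z.1 - z.2))) : ℂ)) := by
      intro y
      simp only [P]
      rw [smul_sub, inner_sub_right, sub_eq_add_neg, AddChar.map_add_eq_mul, AddChar.map_neg_eq_inv]
      simp only [map_mul, Circle.coe_mul, Circle.coe_inv_eq_conj]
      ring
    simp_rw [this]
    rw [integral_const_mul, enorm_mul, enorm_mul, ← ofReal_norm (∫ y, _), gauss_bound hR, norm_smul]
    congr 2
    · rw [← ofReal_norm, ← ofReal_norm, RCLike.norm_conj]
    · congr 3
      rw [mul_pow, mul_pow, Real.norm_eq_abs, sq_abs]; ring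
  set K : Euc d × Euc d → ℝ≥0∞ := fun z => ENNReal.ofReal (R^d * Real.exp (-(Real.pi * (R*ρ)^2 * ‖z.1 - z.2‖^2))) with hK
  have hKm : Measurable K := by simp only [hK]; fun_prop
  have hgm0 := hg.measurable
  have hgm : Measurable (fun w => ‖g w‖ₑ^2) := by have := hg.measurable; fun_prop
  have t1 : ∫⁻ z, ‖g z.2‖ₑ^2 * K z ∂(σ.prod σ) ≤ J * ∫⁻ w, ‖g w‖ₑ^2 ∂σ := by
    rw [lintegral_prod_symm' _ (by fun_prop)]
    rw [← lintegral_const_mul _ hgm]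
    apply lintegral_mono_ae
    filter_upwards [sphere_ae_norm] with w hw
    rw [lintegral_const_mul _ (by fun_prop), mul_comm]
    gcongr
    exact hJ w hw
  have t2 : ∫⁻ z, ‖g z.1‖ₑ^2 * K z ∂(σ.prod σ) ≤ J * ∫⁻ w, ‖g w‖ₑ^2 ∂σ := by
    rw [lintegral_prod _ (by fun_prop)]
    rw [← lintegral_const_mul _ hgm]
    apply lintegral_mono_ae
    filter_upwards [sphere_ae_norm] with w hw
    rw [lintegral_const_mul _ (by fun_prop), mul_comm]
    gcongr
    refine le_trans (le_of_eq ?_) (hJ w hw)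
    simp only [hK, norm_sub_rev]
  calc ‖∫ z, ∫ y, P y z ∂(volume) ∂(σ.prod σ)‖ₑ ≤ ∫⁻ z, ‖∫ y, P y z‖ₑ ∂(σ.prod σ) := enorm_integral_le_lintegral_enorm _
    _ ≤ ∫⁻ z, (‖g z.1‖ₑ^2 * K z + ‖g z.2‖ₑ^2 * K z) ∂(σ.prod σ) := by
        apply lintegral_mono; intro z
        beta_reduce
        rw [hPy, ← add_mul]
        gcongr
        exact ennreal_mul_le _ _
    _ = ∫⁻ z, ‖g z.1‖ₑ^2 * K z ∂(σ.prod σ) + ∫⁻ z, ‖g z.2‖ₑ^2 * K z ∂(σ.prod σ) :=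
        lintegral_add_left (by fun_prop) _
    _ ≤ _ := by rw [mul_assoc, two_mul]; exact add_le_add t2 t1

lemma sphAvg_fourier {d : ℕ} [hd : Fact (2 ≤ d)] {a : Euc d → ℂ} (ha : Continuous a)
    (hac : HasCompactSupport a) (y u : Euc d) :
    sphAvg (𝓕⁻ a) ‖u‖ y = 𝓕 (radz (fun ξ => a ξ * (Real.fourierChar (inner ℝ y ξ) : ℂ))) u := by
  have hai : Integrable a := ha.integrable_of_hasCompactSupport hac
  have hs : HasCompactSupport (fun ξ => a ξ * (Real.fourierChar (inner ℝ y ξ) : ℂ)) := hac.mul_right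
  have hrf := radz_fourier (b := fun ξ => a ξ * (Real.fourierChar (inner ℝ y ξ) : ℂ)) (by fun_prop) hs u
  rw [hrf, sphAvg]
  simp only [Real.fourierInv_eq, Circle.smul_def, smul_eq_mul]
  rw [integral_integral_swap]
  · congr 1
    funext ξ
    rw [sigHat, ← integral_const_mul]
    congr 1
    funext w
    rw [inner_sub_right, sub_eq_add_neg, AddChar.map_add_eq_mul, Circle.coe_mul, real_inner_comm,
      real_inner_smul_right, real_inner_smul_right, real_inner_comm ξ w]
    ring
  · have h1 : Integrable (fun x : Euc d × Euc d => (1:ℝ) * ‖a x.2‖) ((sphereMeasure d).prod volume) :=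
      (integrable_const (1:ℝ)).mul_prod hai.norm
    refine h1.mono' ?_ (ae_of_all _ fun x => ?_)
    · apply Continuous.aestronglyMeasurable
      simp only [Function.uncurry_def]
      fun_prop
    · simp only [Function.uncurry]
      rw [norm_mul, Circle.norm_coe]

lemma sphAvg_l2 {d : ℕ} [hd : Fact (2 ≤ d)] : ∃ C : ℝ≥0, ∀ (a : Euc d → ℂ), Continuous a → HasCompactSupport a →
    ∀ (ρ₀ R : ℝ) (x₀ : Euc d), 0 < ρ₀ → 0 < R → 1 ≤ R * ρ₀ → (∀ ξ, ‖ξ‖ < ρ₀ → a ξ = 0) →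
    ∫⁻ y in closedBall x₀ R, ∫⁻ t in Icc (1/2) 4, ‖sphAvg (𝓕⁻ a) t y‖ₑ^2 ≤
      C * ENNReal.ofReal (R^d * (R * ρ₀) ^ (-(1/2:ℝ))) * ∫⁻ ξ, ‖a ξ‖ₑ^2 := by
  obtain ⟨C₁, hC₁⟩ := kern_bound (d := d)
  obtain ⟨C₂, hC₂⟩ := radM_lower (d := d)
  refine ⟨C₂ * Real.toNNReal (Real.exp Real.pi) * (2 * C₁), fun a ha hac ρ₀ R x₀ hρ hR hRρ hsupp => ?_⟩
  set σ := sphereMeasure d with hσ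
  obtain ⟨M, hM⟩ := ha.bounded_above_of_compact_support hac
  let b : Euc d → Euc d → ℂ := fun y ξ => a ξ * (Real.fourierChar (inner ℝ y ξ) : ℂ)
  have hbc : ∀ y, Continuous (b y) := fun y => by simp only [b]; fun_prop
  have hbs : ∀ y, HasCompactSupport (b y) := fun y => hac.mul_right
  have hbM : ∀ y x, ‖b y x‖ ≤ M := fun y x => by
    simp only [b]; rw [norm_mul, Circle.norm_coe, mul_one]; exact hM x
  let G : ℝ → Euc d → ℂ := fun ρ y => ∫ w, b y (ρ • w) ∂σ
  have hGc : Continuous (fun z : ℝ × Euc d => G z.1 z.2) := by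
    apply continuous_of_dominated (bound := fun _ => M)
    · intro z; exact (by simp only [b]; fun_prop : Continuous fun w => b z.2 (z.1 • w)).aestronglyMeasurable
    · intro z; exact ae_of_all _ fun w => hbM _ _
    · exact integrable_const _
    · exact ae_of_all _ fun w => by simp only [b]; fun_prop
  have step1 : ∀ y, ∫⁻ t in Icc (1/2) 4, ‖sphAvg (𝓕⁻ a) t y‖ₑ^2 ≤ C₂ * ∫⁻ ρ, ‖G ρ y‖ₑ^2 ∂(radM d) := by
    intro y
    have hri : Integrable (radz (b y)) :=
      (radz_cont (hbc y) (hbM y)).integrable_of_hasCompactSupport (radz_supp (hbs y))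
    have hF : Continuous (𝓕 (radz (b y))) :=
      VectorFourier.fourierIntegral_continuous Real.continuous_fourierChar
        (innerSL ℝ).continuous₂ hri
    have hsm : Continuous (fun t : ℝ => sphAvg (𝓕⁻ a) |t| y) := by
      obtain ⟨e, he⟩ : ∃ e : Euc d, ‖e‖ = 1 := by
        have := euc_nontrivial (d := d)
        exact exists_norm_eq _ zero_le_one
      have : (fun t : ℝ => sphAvg (𝓕⁻ a) |t| y) = fun t => 𝓕 (radz (b y)) (t • e) := by
        funext t
        rw [← sphAvg_fourier ha hac, norm_smul, he, mul_one, Real.norm_eq_abs]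
      rw [this]; fun_prop
    calc ∫⁻ t in Icc (1/2) 4, ‖sphAvg (𝓕⁻ a) t y‖ₑ^2
        = ∫⁻ t in Icc (1/2) 4, ‖sphAvg (𝓕⁻ a) |t| y‖ₑ^2 := by
          apply setLIntegral_congr_fun measurableSet_Icc
          intro t ht
          have : |t| = t := abs_of_nonneg (by linarith [ht.1])
          simp only [this]
      _ ≤ C₂ * ∫⁻ t, ‖sphAvg (𝓕⁻ a) |t| y‖ₑ^2 ∂(radM d) := hC₂ _ (by have := hsm.measurable; fun_prop)
      _ = C₂ * ∫⁻ u, ‖𝓕 (radz (b y)) u‖ₑ^2 := by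
          rw [polar_lintegral (g := fun u => ‖𝓕 (radz (b y)) u‖ₑ^2) (by have := hF.measurable; fun_prop)]
          congr 1
          apply lintegral_congr_ae
          filter_upwards [radM_ae_pos] with t ht
          have : ∀ᵐ w ∂σ, ‖𝓕 (radz (b y)) (t • w)‖ₑ^2 = ‖sphAvg (𝓕⁻ a) |t| y‖ₑ^2 := by
            filter_upwards [sphere_ae_norm] with w hw
            rw [← sphAvg_fourier ha hac, norm_smul, hw, mul_one, Real.norm_eq_abs]
          rw [lintegral_congr_ae this]
          simp
      _ ≤ C₂ * ∫⁻ u, ‖radz (b y) u‖ₑ^2 := by gcongr 1; exact plancherel_le hri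
      _ = C₂ * ∫⁻ ρ, ‖G ρ y‖ₑ^2 ∂(radM d) := by
          rw [polar_lintegral (g := fun u => ‖radz (b y) u‖ₑ^2)
            (by have := (radz_cont (hbc y) (hbM y)).measurable; fun_prop)]
          congr 1
          apply lintegral_congr_ae
          filter_upwards [radM_ae_pos] with t ht
          have : ∀ᵐ w ∂σ, ‖radz (b y) (t • w)‖ₑ^2 = ‖G t y‖ₑ^2 := by
            filter_upwards [sphere_ae_norm] with w hw
            rw [radz_smul _ ht hw]
          rw [lintegral_congr_ae this]
          simp
  have hGm := hGc.measurable
  set J : ℝ≥0∞ := C₁ * ENNReal.ofReal (R^d * (R * ρ₀) ^ (-(1/2:ℝ))) with hJ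
  have step2 : ∀ᵐ ρ ∂(radM d), ∫⁻ y in closedBall x₀ R, ‖G ρ y‖ₑ^2 ≤
      ENNReal.ofReal (Real.exp Real.pi) * (2 * J * ∫⁻ w, ‖a (ρ • w)‖ₑ^2 ∂σ) := by
    filter_upwards [radM_ae_pos] with ρ hρpos
    by_cases hlt : ρ < ρ₀
    · have : ∀ y, G ρ y = 0 := by
        intro y
        simp only [G]
        apply integral_eq_zero_of_ae
        filter_upwards [sphere_ae_norm] with w hw
        simp only [b]
        rw [hsupp, zero_mul]; rfl
        rw [norm_smul, hw, mul_one, Real.norm_of_nonneg hρpos.le]; exact hlt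
      simp [this]
    rw [not_lt] at hlt
    have hRρ' : R * ρ₀ ≤ R * ρ := by gcongr
    have hq := quad_form (d := d) (g := fun w => a (ρ • w)) (by fun_prop) (fun x => hM _) (R := R) (ρ := ρ) hR x₀ (J := J)
      (by
        intro w hw
        have := hC₁ w (R * ρ) hw (hRρ.trans hRρ')
        simp_rw [ENNReal.ofReal_mul (pow_nonneg hR.le d)]
        rw [lintegral_const_mul _ (by fun_prop), hJ]
        calc _ ≤ ENNReal.ofReal (R^d) * (C₁ * ENNReal.ofReal ((R * ρ) ^ (-(1/2:ℝ)))) := by gcongr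
          _ ≤ ENNReal.ofReal (R^d) * (C₁ * ENNReal.ofReal ((R * ρ₀) ^ (-(1/2:ℝ)))) := by
            gcongr 2
            apply ENNReal.ofReal_le_ofReal
            exact Real.rpow_le_rpow_of_nonpos (by positivity) hRρ' (by norm_num)
          _ = _ := by rw [ENNReal.ofReal_mul (pow_nonneg hR.le d)]; ring)
    refine le_trans ?_ (mul_le_mul_right hq _)
    have hGy : ∀ y, G ρ y = ∫ w, a (ρ • w) * (Real.fourierChar (inner ℝ y (ρ • w)) : ℂ) ∂σ := fun y => rfl
    have hGy2 : ∀ y, ENNReal.ofReal (Real.exp (-(Real.pi / R^2) * ‖y - x₀‖^2)) * ‖∫ w, a (ρ • w) * (Real.fourierChar (inner ℝ y (ρ • w)) : ℂ) ∂σ‖ₑ^2 = ENNReal.ofReal (Real.exp (-(Real.pi / R^2) * ‖y - x₀‖^2)) * ‖G ρ y‖ₑ^2 := fun y => rfl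
    rw [lintegral_congr hGy2]
    rw [← lintegral_const_mul _ (by fun_prop)]
    refine le_trans ?_ (setLIntegral_le_lintegral (closedBall x₀ R) _)
    apply setLIntegral_mono' measurableSet_closedBall
    intro y hy
    rw [← mul_assoc, ← ENNReal.ofReal_mul (Real.exp_pos _).le, ← Real.exp_add]
    have : 1 ≤ ENNReal.ofReal (Real.exp (Real.pi + -(Real.pi/R^2) * ‖y - x₀‖^2)) := by
      rw [ENNReal.one_le_ofReal, Real.one_le_exp_iff]
      rw [mem_closedBall, dist_eq_norm] at hy
      have h1 : ‖y - x₀‖^2 ≤ R^2 := by gcongr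
      have h2 : Real.pi/R^2 * ‖y - x₀‖^2 ≤ Real.pi/R^2 * R^2 := by gcongr
      rw [div_mul_cancel₀ _ (by positivity)] at h2
      linarith
    calc ‖G ρ y‖ₑ^2 = 1 * ‖G ρ y‖ₑ^2 := (one_mul _).symm
      _ ≤ _ := by gcongr
  have ham := ha.measurable
  calc ∫⁻ y in closedBall x₀ R, ∫⁻ t in Icc (1/2) 4, ‖sphAvg (𝓕⁻ a) t y‖ₑ^2
      ≤ ∫⁻ y in closedBall x₀ R, C₂ * ∫⁻ ρ, ‖G ρ y‖ₑ^2 ∂(radM d) := lintegral_mono fun y => step1 y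
    _ = C₂ * ∫⁻ y in closedBall x₀ R, ∫⁻ ρ, ‖G ρ y‖ₑ^2 ∂(radM d) := lintegral_const_mul' _ _ ENNReal.coe_ne_top
    _ = C₂ * ∫⁻ ρ, (∫⁻ y in closedBall x₀ R, ‖G ρ y‖ₑ^2) ∂(radM d) := by
        rw [lintegral_lintegral_swap]
        have := hGm.comp measurable_swap
        simp only [Function.uncurry_def]
        exact (this.enorm.pow_const 2).aemeasurable
    _ ≤ C₂ * ∫⁻ ρ, ENNReal.ofReal (Real.exp Real.pi) * (2 * J * ∫⁻ w, ‖a (ρ • w)‖ₑ^2 ∂σ) ∂(radM d) := by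
        gcongr 1
        exact lintegral_mono_ae step2
    _ = C₂ * (ENNReal.ofReal (Real.exp Real.pi) * (2 * J * ∫⁻ ξ, ‖a ξ‖ₑ^2)) := by
        rw [lintegral_const_mul' _ _ ENNReal.ofReal_ne_top, lintegral_const_mul' _ _ (by
          rw [hJ]; exact ENNReal.mul_ne_top (by simp) (ENNReal.mul_ne_top ENNReal.coe_ne_top ENNReal.ofReal_ne_top)),
          polar_lintegral (g := fun ξ => ‖a ξ‖ₑ^2) (by fun_prop)]
    _ = _ := by
        rw [hJ]
        push_cast
        rw [ENNReal.ofReal]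
        ring

def BB (d : ℕ) (β₀ : ℝ → ℝ) (ξ : Euc d) : ℂ := (β₀ ‖ξ‖ : ℂ)

lemma BB_contDiff {d : ℕ} {β₀ : ℝ → ℝ} (hβ : IsBump β₀) : ContDiff ℝ (⊤ : ℕ∞) (BB d β₀) := by
  have h : ContDiff ℝ (⊤ : ℕ∞) (fun ξ : Euc d => β₀ ‖ξ‖) := by
    rw [contDiff_iff_contDiffAt]
    intro x
    by_cases hx : x = 0
    · have : (fun ξ : Euc d => β₀ ‖ξ‖) =ᶠ[nhds x] fun _ => (1:ℝ) := by
        have : ball (0 : Euc d) (1/2) ∈ nhds x := by rw [hx]; exact ball_mem_nhds _ (by norm_num)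
        filter_upwards [this] with ξ hξ
        apply hβ.2.1
        rw [mem_ball, dist_zero_right] at hξ
        rwa [abs_of_nonneg (norm_nonneg _)]
      exact contDiffAt_const.congr_of_eventuallyEq this
    · exact hβ.1.contDiffAt.comp x (contDiffAt_norm ℝ hx)
  exact Complex.ofRealCLM.contDiff.comp h

lemma BB_supp {d : ℕ} {β₀ : ℝ → ℝ} (hβ : IsBump β₀) : HasCompactSupport (BB d β₀) := by
  apply HasCompactSupport.of_support_subset_isCompact (isCompact_closedBall (0 : Euc d) 1)
  intro ξ hξ
  by_contra hcon
  apply hξ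
  rw [mem_closedBall, dist_zero_right, not_le] at hcon
  simp only [BB]
  rw [hβ.2.2 _ (by rwa [abs_of_nonneg (norm_nonneg _)])]
  simp

def BS (d : ℕ) {β₀ : ℝ → ℝ} (hβ : IsBump β₀) : SchwartzMap (Euc d) ℂ :=
  𝓕⁻ ((BB_supp (d := d) hβ).toSchwartzMap (BB_contDiff hβ))

def mJ (d : ℕ) (β₀ : ℝ → ℝ) (j : ℕ) (ξ : Euc d) : ℂ := (betaJ β₀ j ‖ξ‖ : ℂ)

def psiJ (d : ℕ) (β₀ : ℝ → ℝ) (j : ℕ) : Euc d → ℂ := 𝓕⁻ (mJ d β₀ j)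

lemma mJ_zero {d : ℕ} {β₀ : ℝ → ℝ} : mJ d β₀ 0 = BB d β₀ := rfl

lemma mJ_succ {d : ℕ} {β₀ : ℝ → ℝ} (j : ℕ) : mJ d β₀ (j+1) =
    (fun ξ => BB d β₀ (((2:ℝ)^(j+1))⁻¹ • ξ)) - (fun ξ => BB d β₀ (((2:ℝ)^j)⁻¹ • ξ)) := by
  funext ξ
  simp only [mJ, betaJ, BB, Pi.sub_apply, norm_smul, norm_inv, norm_pow, Real.norm_ofNat]
  rw [← Complex.ofReal_sub, zpow_neg, zpow_neg]
  norm_cast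

lemma BBs_cont {d : ℕ} {β₀ : ℝ → ℝ} (hβ : IsBump β₀) (c : ℝ) : Continuous (fun ξ => BB d β₀ (c • ξ)) := by
  have := (BB_contDiff (d := d) hβ).continuous
  fun_prop

lemma BBs_supp {d : ℕ} {β₀ : ℝ → ℝ} (hβ : IsBump β₀) {c : ℝ} (hc : c ≠ 0) :
    HasCompactSupport (fun ξ => BB d β₀ (c • ξ)) :=
  (BB_supp (d := d) hβ).comp_homeomorph (Homeomorph.smulOfNeZero c hc)

lemma mJ_cont {d : ℕ} {β₀ : ℝ → ℝ} (hβ : IsBump β₀) (j : ℕ) : Continuous (mJ d β₀ j) := by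
  cases j with
  | zero => exact (BB_contDiff (d := d) hβ).continuous
  | succ j => rw [mJ_succ]; exact (BBs_cont hβ _).sub (BBs_cont hβ _)

lemma mJ_supp {d : ℕ} {β₀ : ℝ → ℝ} (hβ : IsBump β₀) (j : ℕ) : HasCompactSupport (mJ d β₀ j) := by
  cases j with
  | zero => exact BB_supp (d := d) hβ
  | succ j => rw [mJ_succ]; exact (BBs_supp hβ (by positivity)).sub (BBs_supp hβ (by positivity))

lemma mJ_low {d : ℕ} {β₀ : ℝ → ℝ} (hβ : IsBump β₀) (j : ℕ) (ξ : Euc d) (h : ‖ξ‖ < 2^j/2) :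
    mJ d β₀ (j+1) ξ = 0 := by
  rw [mJ_succ, Pi.sub_apply]
  have key : ∀ k : ℕ, j ≤ k → BB d β₀ (((2:ℝ)^k)⁻¹ • ξ) = 1 := by
    intro k hk
    rw [BB, hβ.2.1]; simp
    rw [abs_of_nonneg (norm_nonneg _), norm_smul, norm_inv, norm_pow, Real.norm_ofNat, inv_mul_lt_iff₀ (by positivity)]
    have : (2:ℝ)^j ≤ 2^k := pow_le_pow_right₀ (by norm_num) hk
    linarith
  rw [key _ (Nat.le_succ _), key _ le_rfl, sub_self]

lemma mJ_bound {d : ℕ} {β₀ : ℝ → ℝ} (hβ : IsBump β₀) : ∃ C : ℝ, ∀ (j : ℕ) (ξ : Euc d), ‖mJ d β₀ j ξ‖ ≤ C := by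
  obtain ⟨M, hM⟩ := (BB_contDiff (d := d) hβ).continuous.bounded_above_of_compact_support (BB_supp hβ)
  have hM0 : 0 ≤ M := (norm_nonneg _).trans (hM 0)
  refine ⟨M + M, fun j ξ => ?_⟩
  cases j with
  | zero => rw [mJ_zero]; linarith [hM ξ]
  | succ j => rw [mJ_succ]; exact (norm_sub_le _ _).trans (add_le_add (hM _) (hM _))

lemma fourierInv_dil {d : ℕ} {β₀ : ℝ → ℝ} (hβ : IsBump β₀) {c : ℝ} (hc : 0 < c) (x : Euc d) :
    𝓕⁻ (fun ξ => BB d β₀ (c⁻¹ • ξ)) x = (c^d : ℝ) • BS d hβ (c • x) := by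
  have e1 : BS d hβ (c • x) = 𝓕⁻ (BB d β₀) (c • x) := by
    rw [BS, SchwartzMap.fourierInv_coe]; rfl
  rw [e1, Real.fourierInv_eq, Real.fourierInv_eq]
  have := Measure.integral_comp_smul (volume : Measure (Euc d))
    (fun ξ => Real.fourierChar (inner ℝ ξ (c • x)) • BB d β₀ ξ) c⁻¹
  simp only [finrank_euclideanSpace_fin] at this
  rw [inv_pow, inv_inv, abs_of_pos (by positivity)] at this
  rw [← this]
  congr 1
  funext ξ
  rw [real_inner_smul_left, real_inner_smul_right, inv_mul_cancel_left₀ hc.ne']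

lemma psiJ_succ {d : ℕ} {β₀ : ℝ → ℝ} (hβ : IsBump β₀) (j : ℕ) (x : Euc d) : psiJ d β₀ (j+1) x =
    (((2:ℝ)^(j+1))^d : ℝ) • BS d hβ ((2:ℝ)^(j+1) • x) - (((2:ℝ)^j)^d : ℝ) • BS d hβ ((2:ℝ)^j • x) := by
  rw [psiJ, mJ_succ, ← fourierInv_dil hβ (by positivity), ← fourierInv_dil hβ (by positivity)]
  simp only [Real.fourierInv_eq]
  rw [← integral_sub]
  · congr 1; funext v; rw [Pi.sub_apply, smul_sub]
  · refine Continuous.integrable_of_hasCompactSupport ?_ ?_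
    · have := BBs_cont (d := d) hβ (((2:ℝ)^(j+1))⁻¹); 
      fun_prop
    · exact (BBs_supp (d := d) hβ (by positivity)).smul_left
  · refine Continuous.integrable_of_hasCompactSupport ?_ ?_
    · have := BBs_cont (d := d) hβ (((2:ℝ)^(j))⁻¹); 
      fun_prop
    · exact (BBs_supp (d := d) hβ (by positivity)).smul_left

lemma psiJ_zero {d : ℕ} {β₀ : ℝ → ℝ} (hβ : IsBump β₀) (x : Euc d) : psiJ d β₀ 0 x = BS d hβ x := by
  rw [BS, SchwartzMap.fourierInv_coe]; rfl

lemma BS_dil_l1 {d : ℕ} {β₀ : ℝ → ℝ} (hβ : IsBump β₀) {c : ℝ} (hc : 0 < c) :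
    ∫⁻ x, ‖(c^d : ℝ) • BS d hβ (c • x)‖ₑ = ∫⁻ x, ‖BS d hβ x‖ₑ := by
  have hi : Integrable (fun x => BS d hβ (c • x)) := (BS d hβ).integrable.comp_smul hc.ne'
  have hi2 : Integrable (fun x => (c^d : ℝ) • BS d hβ (c • x)) := hi.smul (c^d : ℝ)
  rw [← ofReal_integral_norm_eq_lintegral_enorm (BS d hβ).integrable,
    ← ofReal_integral_norm_eq_lintegral_enorm hi2]
  simp only [norm_smul]
  rw [integral_const_mul, Measure.integral_comp_smul volume (fun x => ‖BS d hβ x‖) c]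
  simp only [finrank_euclideanSpace_fin]
  rw [abs_of_pos (by positivity), Real.norm_of_nonneg (by positivity), smul_eq_mul,
    mul_inv_cancel_left₀ (by positivity)]

lemma psiJ_cont {d : ℕ} {β₀ : ℝ → ℝ} (hβ : IsBump β₀) (j : ℕ) : Continuous (psiJ d β₀ j) := by
  cases j with
  | zero => exact (BS d hβ).continuous.congr fun x => (psiJ_zero hβ x).symm
  | succ j =>
    have : Continuous (BS d hβ) := (BS d hβ).continuous
    refine Continuous.congr ?_ fun x => (psiJ_succ hβ j x).symm
    fun_prop

lemma psiJ_l1 {d : ℕ} {β₀ : ℝ → ℝ} (hβ : IsBump β₀) : ∃ C : ℝ≥0, ∀ j, ∫⁻ x, ‖psiJ d β₀ j x‖ₑ ≤ C := by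
  have hfin : ∫⁻ x, ‖BS d hβ x‖ₑ ≠ ∞ := (BS d hβ).integrable.2.ne
  lift (∫⁻ x, ‖BS d hβ x‖ₑ) to ℝ≥0 using hfin with A hA
  refine ⟨A + A, fun j => ?_⟩
  cases j with
  | zero => simp only [psiJ_zero hβ]; rw [← hA]; push_cast; exact le_self_add
  | succ j =>
    simp only [psiJ_succ hβ]
    have : Continuous (BS d hβ) := (BS d hβ).continuous
    calc _ ≤ ∫⁻ x, (‖(((2:ℝ)^(j+1))^d : ℝ) • BS d hβ ((2:ℝ)^(j+1) • x)‖ₑ + ‖(((2:ℝ)^j)^d : ℝ) • BS d hβ ((2:ℝ)^j • x)‖ₑ) :=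
          lintegral_mono fun x => enorm_sub_le
      _ = _ := by
          rw [lintegral_add_left (by have := this.measurable; fun_prop), BS_dil_l1 hβ (by positivity), BS_dil_l1 hβ (by positivity), ← hA]
          push_cast; rfl

lemma psiJ_tail {d : ℕ} {β₀ : ℝ → ℝ} (hβ : IsBump β₀) : ∃ C : ℝ, 0 ≤ C ∧ ∀ (j : ℕ) (x : Euc d), 1 ≤ ‖x‖ →
    (2^j * ‖x‖)^(d+1) * ‖psiJ d β₀ j x‖ ≤ C := by
  obtain ⟨C, hC⟩ := (BS d hβ).decay (2*d+1) 0
  simp only [norm_iteratedFDeriv_zero] at hC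
  obtain ⟨hCp, hC⟩ := hC
  have key : ∀ (k : ℕ) (x : Euc d), 1 ≤ ‖x‖ → (2^k * ‖x‖)^(d+1) * ‖(((2:ℝ)^k)^d : ℝ) • BS d hβ ((2:ℝ)^k • x)‖ ≤ C := by
    intro k x hx
    refine le_trans ?_ (hC ((2:ℝ)^k • x))
    rw [norm_smul, norm_smul, Real.norm_of_nonneg (by positivity), Real.norm_of_nonneg (by positivity), ← mul_assoc]
    gcongr
    have : 2 * d + 1 = (d+1) + d := by ring
    rw [this, pow_add _ (d+1) d]
    gcongr
    nlinarith [pow_pos (two_pos : (0:ℝ) < 2) k]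
  refine ⟨C + 2^(d+1) * C, by positivity, fun j x hx => ?_⟩
  cases j with
  | zero =>
    rw [psiJ_zero hβ]
    have := key 0 x hx
    simp only [pow_zero, one_pow, one_smul, one_mul] at this ⊢
    have : 0 ≤ 2^(d+1) * C := by positivity
    linarith
  | succ j =>
    rw [psiJ_succ hβ]
    have k1 := key (j+1) x hx
    have k2 := key j x hx
    calc _ ≤ (2^(j+1) * ‖x‖)^(d+1) * (‖(((2:ℝ)^(j+1))^d : ℝ) • BS d hβ ((2:ℝ)^(j+1) • x)‖ + ‖(((2:ℝ)^j)^d : ℝ) • BS d hβ ((2:ℝ)^j • x)‖) := by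
          gcongr; exact norm_sub_le _ _
      _ = _ + 2^(d+1) * ((2^j * ‖x‖)^(d+1) * ‖(((2:ℝ)^j)^d : ℝ) • BS d hβ ((2:ℝ)^j • x)‖) := by
          rw [mul_add]; congr 1; rw [← mul_assoc, ← mul_pow]; congr 2; ring
      _ ≤ _ := by gcongr

lemma freqLoc_conv {d : ℕ} {β₀ : ℝ → ℝ} (hβ : IsBump β₀) (j : ℕ) {f : Euc d → ℂ} (hf : Integrable f) (x : Euc d) :
    freqLoc d β₀ j f x = ∫ u, psiJ d β₀ j (x - u) * f u := by
  have hm : Integrable (mJ d β₀ j) := (mJ_cont hβ j).integrable_of_hasCompactSupport (mJ_supp hβ j)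
  rw [freqLoc, Real.fourierInv_eq]
  change ∫ v, Real.fourierChar (inner ℝ v x) • (mJ d β₀ j v * 𝓕 f v) = _
  have e1 : ∀ v, Real.fourierChar (inner ℝ v x) • (mJ d β₀ j v * 𝓕 f v) =
      ∫ u, ((Real.fourierChar (inner ℝ v (x - u)) : ℂ) * mJ d β₀ j v) * f u := by
    intro v
    rw [Circle.smul_def, smul_eq_mul, Real.fourier_eq, ← integral_const_mul, ← integral_const_mul]
    congr 1; funext u
    rw [Circle.smul_def, smul_eq_mul, inner_sub_right, sub_eq_add_neg, AddChar.map_add_eq_mul, Circle.coe_mul,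
      real_inner_comm u v]
    ring
  simp_rw [e1]
  rw [integral_integral_swap]
  · congr 1; funext u
    rw [integral_mul_const, psiJ, Real.fourierInv_eq]
    simp only [Circle.smul_def, smul_eq_mul]
  · have h1 : Integrable (fun z : Euc d × Euc d => ‖mJ d β₀ j z.1‖ * ‖f z.2‖) (volume.prod volume) :=
      hm.norm.mul_prod hf.norm
    refine h1.mono' ?_ (ae_of_all _ fun z => ?_)
    · simp only [Function.uncurry_def]
      have := mJ_cont (d := d) hβ j
      refine AEStronglyMeasurable.mul ?_ hf.1.comp_snd
      exact (by fun_prop : Continuous fun z : Euc d × Euc d => (Real.fourierChar (inner ℝ z.1 (x - z.2)) : ℂ) * mJ d β₀ j z.1).aestronglyMeasurable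
    · simp only [Function.uncurry]
      rw [norm_mul, norm_mul, Circle.norm_coe, one_mul]

lemma freqLoc_nonint {d : ℕ} {β₀ : ℝ → ℝ} (j : ℕ) {f : Euc d → ℂ} (hf : ¬ Integrable f) :
    freqLoc d β₀ j f = 0 := by
  have h : 𝓕 f = 0 := by
    funext ξ
    rw [Real.fourier_eq]
    apply integral_undef
    rwa [Real.fourierIntegral_convergent_iff]
  funext x
  rw [freqLoc, Real.fourierInv_eq, h]
  simp

lemma Aj_nonint {d : ℕ} {χ β₀ : ℝ → ℝ} (j : ℕ) {f : Euc d → ℂ} (hf : ¬ Integrable f) (y : Euc d) (t : ℝ) :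
    Aj d χ β₀ j f y t = 0 := by
  rw [Aj, freqLoc_nonint j hf, sphAvg]; simp

lemma psiJ_bdd {d : ℕ} {β₀ : ℝ → ℝ} (hβ : IsBump β₀) (j : ℕ) : ∃ M : ℝ≥0, ∀ x, ‖psiJ d β₀ j x‖ ≤ M := by
  refine ⟨Real.toNNReal (∫ ξ, ‖mJ d β₀ j ξ‖), fun x => ?_⟩
  rw [Real.coe_toNNReal _ (integral_nonneg fun _ => norm_nonneg _), psiJ, Real.fourierInv_eq]
  refine (norm_integral_le_integral_norm _).trans (le_of_eq ?_)
  simp only [Circle.norm_smul]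

lemma freqLoc_bdd {d : ℕ} {β₀ : ℝ → ℝ} (hβ : IsBump β₀) (j : ℕ) : ∃ M : ℝ≥0, ∀ (f : Euc d → ℂ), Integrable f →
    ∀ x, ‖freqLoc d β₀ j f x‖ ≤ M * ∫ u, ‖f u‖ := by
  obtain ⟨M, hM⟩ := psiJ_bdd (d := d) hβ j
  refine ⟨M, fun f hf x => ?_⟩
  rw [freqLoc_conv hβ j hf, ← integral_const_mul]
  apply norm_integral_le_of_norm_le (hf.norm.const_mul _)
  exact ae_of_all _ fun u => by rw [norm_mul]; gcongr; exact hM _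

lemma freqLoc_cont {d : ℕ} {β₀ : ℝ → ℝ} (hβ : IsBump β₀) (j : ℕ) {f : Euc d → ℂ} (hf : Integrable f) :
    Continuous (freqLoc d β₀ j f) := by
  obtain ⟨M, hM⟩ := psiJ_bdd (d := d) hβ j
  have hc := psiJ_cont (d := d) hβ j
  rw [show freqLoc d β₀ j f = fun x => ∫ u, psiJ d β₀ j (x - u) * f u from funext (freqLoc_conv hβ j hf)]
  apply continuous_of_dominated (bound := fun u => M * ‖f u‖)
  · intro x
    exact (by fun_prop : Continuous fun u => psiJ d β₀ j (x - u)).aestronglyMeasurable.mul hf.1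
  · intro x; exact ae_of_all _ fun u => by rw [norm_mul]; gcongr; exact hM _
  · exact hf.norm.const_mul _
  · exact ae_of_all _ fun u => by fun_prop

lemma Aj_cont {d : ℕ} [hd : Fact (2 ≤ d)] {χ β₀ : ℝ → ℝ} (hχ : IsCutoff χ) (hβ : IsBump β₀) (j : ℕ) {f : Euc d → ℂ} (hf : Integrable f) :
    Continuous (fun z : Euc d × ℝ => Aj d χ β₀ j f z.1 z.2) := by
  have h1 := freqLoc_cont hβ j hf
  obtain ⟨M, hM⟩ := freqLoc_bdd (d := d) hβ j
  have h2 : Continuous χ := hχ.1.continuous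
  have h3 : Continuous (fun z : Euc d × ℝ => sphAvg (freqLoc d β₀ j f) z.2 z.1) := by
    apply continuous_of_dominated (bound := fun _ => M * ∫ u, ‖f u‖)
    · intro z
      exact (by fun_prop : Continuous fun y => freqLoc d β₀ j f (z.1 - z.2 • y)).aestronglyMeasurable
    · intro x; exact ae_of_all _ fun u => hM f hf _
    · exact integrable_const _
    · exact ae_of_all _ fun u => by fun_prop
  simp only [Aj]
  fun_prop

lemma Aj_meas {d : ℕ} [hd : Fact (2 ≤ d)] {χ β₀ : ℝ → ℝ} (hχ : IsCutoff χ) (hβ : IsBump β₀) (j : ℕ) (f : Euc d → ℂ) :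
    Measurable (fun z : Euc d × ℝ => Aj d χ β₀ j f z.1 z.2) := by
  by_cases hf : Integrable f
  · exact (Aj_cont hχ hβ j hf).measurable
  · simp only [Aj_nonint j hf]; exact measurable_const

lemma chi_bdd {χ : ℝ → ℝ} (hχ : IsCutoff χ) : ∃ M : ℝ≥0, 1 ≤ M ∧ ∀ t, ‖χ t‖ ≤ M := by
  have hs : HasCompactSupport χ := HasCompactSupport.of_support_subset_isCompact isCompact_Icc hχ.2.2
  obtain ⟨M, hM⟩ := hχ.1.continuous.bounded_above_of_compact_support hs
  refine ⟨Real.toNNReal M + 1, le_add_self, fun t => (hM t).trans ?_⟩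
  push_cast
  linarith [Real.le_coe_toNNReal M]

lemma Aj_enorm_le {d : ℕ} [hd : Fact (2 ≤ d)] {χ : ℝ → ℝ} (hχ : IsCutoff χ) : ∃ M : ℝ≥0, 1 ≤ M ∧ ∀ (β₀ : ℝ → ℝ) (j : ℕ) (f : Euc d → ℂ)
    (y : Euc d) (t : ℝ), ‖Aj d χ β₀ j f y t‖ₑ ≤ (Icc (1/2) 4).indicator (fun t => M * ‖sphAvg (freqLoc d β₀ j f) t y‖ₑ) t := by
  obtain ⟨M, hM1, hM⟩ := chi_bdd hχ
  refine ⟨M, hM1, fun β₀ j f y t => ?_⟩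
  by_cases ht : t ∈ Icc (1/2:ℝ) 4
  · rw [indicator_of_mem ht, Aj, enorm_mul]
    gcongr
    rw [← ofReal_norm, Complex.norm_real, ← ENNReal.ofReal_coe_nnreal]
    exact ENNReal.ofReal_le_ofReal (hM t)
  · have : χ t = 0 := by
      by_contra h; exact ht (hχ.2.2 h)
    simp [Aj, this]

lemma Aj_bdd {d : ℕ} [hd : Fact (2 ≤ d)] {χ β₀ : ℝ → ℝ} (hχ : IsCutoff χ) (hβ : IsBump β₀) (j : ℕ) : ∃ M : ℝ≥0,
    ∀ (f : Euc d → ℂ), Integrable f → ∀ y t, ‖Aj d χ β₀ j f y t‖ ≤ M * ∫ u, ‖f u‖ := by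
  obtain ⟨M, hM1, hM⟩ := chi_bdd hχ
  obtain ⟨M', hM'⟩ := freqLoc_bdd (d := d) hβ j
  refine ⟨M * M', fun f hf y t => ?_⟩
  rw [Aj, norm_mul, Complex.norm_real]
  push_cast
  rw [mul_assoc]
  gcongr
  · exact hM t
  · have := norm_integral_le_of_norm_le_const (μ := sphereMeasure d) (f := fun w => freqLoc d β₀ j f (y - t • w)) (C := M' * ∫ u, ‖f u‖)
      (ae_of_all _ fun w => hM' f hf _)
    rw [sphAvg]; simpa using this

lemma Aj_sum {d : ℕ} [hd : Fact (2 ≤ d)] {χ β₀ : ℝ → ℝ} (hχ : IsCutoff χ) (hβ : IsBump β₀) (j : ℕ) {ι : Type*} (s : Finset ι)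
    (c : ι → ℂ) (f : ι → Euc d → ℂ) (hf : ∀ i ∈ s, Integrable (f i)) (y : Euc d) (t : ℝ) :
    Aj d χ β₀ j (fun x => ∑ i ∈ s, c i * f i x) y t = ∑ i ∈ s, c i * Aj d χ β₀ j (f i) y t := by
  have hi : Integrable (fun x => ∑ i ∈ s, c i * f i x) := integrable_finsetSum _ fun i hi => (hf i hi).const_mul _
  obtain ⟨M, hM⟩ := psiJ_bdd (d := d) hβ j
  have hc := psiJ_cont (d := d) hβ j
  have e1 : ∀ x, freqLoc d β₀ j (fun x => ∑ i ∈ s, c i * f i x) x = ∑ i ∈ s, c i * freqLoc d β₀ j (f i) x := by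
    intro x
    rw [freqLoc_conv hβ j hi]
    simp_rw [Finset.mul_sum]
    rw [integral_finsetSum]
    · apply Finset.sum_congr rfl
      intro i his
      rw [freqLoc_conv hβ j (hf i his), ← integral_const_mul]
      congr 1; funext u; ring
    · intro i his
      refine Integrable.bdd_mul (c := M) ((hf i his).const_mul _) ?_ (ae_of_all _ fun u => hM _)
      exact (by fun_prop : Continuous fun u => psiJ d β₀ j (x - u)).aestronglyMeasurable
  simp only [Aj, sphAvg]
  simp_rw [e1]
  rw [integral_finsetSum, Finset.mul_sum]
  · apply Finset.sum_congr rfl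
    intro i his
    rw [integral_const_mul]; ring
  · intro i his
    have h1 := freqLoc_cont hβ j (hf i his)
    obtain ⟨M', hM'⟩ := freqLoc_bdd (d := d) hβ j
    apply Integrable.const_mul
    refine (integrable_const (M' * ∫ u, ‖f i u‖)).mono' ?_ (ae_of_all _ fun w => hM' _ (hf i his) _)
    exact (by fun_prop : Continuous fun w => freqLoc d β₀ j (f i) (y - t • w)).aestronglyMeasurable

lemma Aj_sub {d : ℕ} [hd : Fact (2 ≤ d)] {χ β₀ : ℝ → ℝ} (hχ : IsCutoff χ) (hβ : IsBump β₀) (j : ℕ)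
    {f g : Euc d → ℂ} (hf : Integrable f) (hg : Integrable g) (y : Euc d) (t : ℝ) :
    Aj d χ β₀ j (fun x => f x - g x) y t = Aj d χ β₀ j f y t - Aj d χ β₀ j g y t := by
  have := Aj_sum hχ hβ j (Finset.univ : Finset (Fin 2)) ![1, -1] ![f, g] (by
    intro i _; fin_cases i
    · exact hf
    · exact hg) y t
  simp only [Fin.sum_univ_two, Matrix.cons_val_zero, Matrix.cons_val_one, one_mul, neg_mul, ← sub_eq_add_neg] at this
  exact this

lemma Aj_smul {d : ℕ} [hd : Fact (2 ≤ d)] {χ β₀ : ℝ → ℝ} (hχ : IsCutoff χ) (hβ : IsBump β₀) (j : ℕ)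
    {f : Euc d → ℂ} (hf : Integrable f) (c : ℂ) (y : Euc d) (t : ℝ) :
    Aj d χ β₀ j (fun x => c * f x) y t = c * Aj d χ β₀ j f y t := by
  have := Aj_sum hχ hβ j (Finset.univ : Finset (Fin 1)) ![c] ![f] (by
    intro i _; fin_cases i
    exact hf) y t
  simpa using this

lemma jensen_le {α : Type*} [MeasurableSpace α] {μ : Measure α} {g : α → ℝ≥0∞} (hg : AEMeasurable g μ) {s : ℝ} (hs : 1 ≤ s) :
    (∫⁻ x, g x ∂μ) ^ s ≤ (μ univ) ^ (s - 1) * ∫⁻ x, g x ^ s ∂μ := by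
  rcases hs.eq_or_lt with rfl | hs
  · simp
  have hpq : s.HolderConjugate (s / (s-1)) := Real.HolderConjugate.conjExponent hs
  have h := ENNReal.lintegral_mul_le_Lp_mul_Lq μ hpq hg (aemeasurable_const (b := (1:ℝ≥0∞)))
  simp only [Pi.mul_apply, mul_one, ENNReal.one_rpow, lintegral_const, one_mul] at h
  have hs0 : 0 < s := by linarith
  calc _ ≤ ((∫⁻ x, g x ^ s ∂μ) ^ (1/s) * (μ univ) ^ (1/(s/(s-1)))) ^ s := by gcongr
    _ = _ := by
      rw [ENNReal.mul_rpow_of_nonneg _ _ hs0.le, ← ENNReal.rpow_mul, ← ENNReal.rpow_mul, mul_comm]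
      congr 2
      · have : s - 1 ≠ 0 := by linarith
        field_simp
      · rw [one_div_mul_cancel hs0.ne', ENNReal.rpow_one]

lemma jensen_weight {α : Type*} [MeasurableSpace α] {μ : Measure α} {k g : α → ℝ≥0∞} (hk : Measurable k)
    (hg : AEMeasurable g μ) {s : ℝ} (hs : 1 ≤ s) :
    (∫⁻ x, k x * g x ∂μ) ^ s ≤ (∫⁻ x, k x ∂μ) ^ (s - 1) * ∫⁻ x, k x * g x ^ s ∂μ := by
  have hac := withDensity_absolutelyContinuous μ k
  have h := jensen_le (hg.mono_ac hac) hs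
  rw [lintegral_withDensity_eq_lintegral_mul₀ hk.aemeasurable hg,
    lintegral_withDensity_eq_lintegral_mul₀ hk.aemeasurable (hg.pow_const s),
    withDensity_apply _ MeasurableSet.univ, Measure.restrict_univ] at h
  exact h

lemma freqLoc_Ls {d : ℕ} {β₀ : ℝ → ℝ} (hβ : IsBump β₀) {s : ℝ} (hs : 1 ≤ s) : ∃ C : ℝ≥0, ∀ (j : ℕ) (f : Euc d → ℂ),
    Integrable f → ∫⁻ x, ‖freqLoc d β₀ j f x‖ₑ ^ s ≤ C * ∫⁻ x, ‖f x‖ₑ ^ s := by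
  obtain ⟨C, hC⟩ := psiJ_l1 (d := d) hβ
  refine ⟨C ^ s, fun j f hf => ?_⟩
  have hpc := (psiJ_cont (d := d) hβ j).measurable
  have hC' : ∀ x : Euc d, ∫⁻ u, ‖psiJ d β₀ j (x - u)‖ₑ ≤ C := fun x => by
    rw [lintegral_sub_left_eq_self (fun u => ‖psiJ d β₀ j u‖ₑ) x]; exact hC j
  have hs1 : 0 ≤ s - 1 := by linarith
  calc ∫⁻ x, ‖freqLoc d β₀ j f x‖ₑ ^ s
      ≤ ∫⁻ x, (C:ℝ≥0∞)^(s-1) * ∫⁻ u, ‖psiJ d β₀ j (x - u)‖ₑ * ‖f u‖ₑ ^ s := by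
        apply lintegral_mono; intro x
        beta_reduce
        rw [freqLoc_conv hβ j hf]
        calc _ ≤ (∫⁻ u, ‖psiJ d β₀ j (x - u)‖ₑ * ‖f u‖ₑ) ^ s := by
              gcongr
              refine (enorm_integral_le_lintegral_enorm _).trans (le_of_eq ?_)
              simp only [enorm_mul]
          _ ≤ _ := jensen_weight (by fun_prop) hf.1.enorm hs
          _ ≤ _ := by gcongr; exact hC' x
    _ = (C:ℝ≥0∞)^(s-1) * ∫⁻ x, ∫⁻ u, ‖psiJ d β₀ j (x - u)‖ₑ * ‖f u‖ₑ ^ s := by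
        rw [lintegral_const_mul']
        exact ENNReal.rpow_ne_top_of_nonneg hs1 ENNReal.coe_ne_top
    _ = (C:ℝ≥0∞)^(s-1) * ∫⁻ u, ∫⁻ x, ‖psiJ d β₀ j (x - u)‖ₑ * ‖f u‖ₑ ^ s := by
        rw [lintegral_lintegral_swap]
        refine AEMeasurable.mul ?_ ?_
        · exact Measurable.aemeasurable (by fun_prop)
        · exact (hf.1.enorm.pow_const s).comp_snd
    _ ≤ (C:ℝ≥0∞)^(s-1) * ∫⁻ u, C * ‖f u‖ₑ ^ s := by
        gcongr with u
        rw [lintegral_mul_const _ (by fun_prop), lintegral_sub_right_eq_self (fun x => ‖psiJ d β₀ j x‖ₑ) u]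
        gcongr; exact hC j
    _ = _ := by
        rw [lintegral_const_mul' _ _ ENNReal.coe_ne_top, ← mul_assoc, ENNReal.coe_rpow_of_nonneg _ (by linarith)]
        congr 1
        have := ENNReal.rpow_add_of_nonneg (x := (C:ℝ≥0∞)) (s-1) 1 hs1 zero_le_one
        rw [ENNReal.rpow_one] at this
        rw [← this]; congr 1; ring

/-- uniform bound in `L^s(dt)` at every point -/
lemma Aj_pt {d : ℕ} [hd : Fact (2 ≤ d)] {χ β₀ : ℝ → ℝ} (hχ : IsCutoff χ) (hβ : IsBump β₀) {s : ℝ} (hs : 1 ≤ s) :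
    ∃ C : ℝ≥0, ∀ (j : ℕ) (f : Euc d → ℂ), Integrable f → ∀ y, ∫⁻ t, ‖Aj d χ β₀ j f y t‖ₑ ^ s ≤ C * ∫⁻ x, ‖f x‖ₑ ^ s := by
  obtain ⟨M, hM1, hM⟩ := Aj_enorm_le (d := d) hχ
  obtain ⟨C₁, hC₁⟩ := freqLoc_Ls (d := d) hβ hs
  obtain ⟨C₂, hC₂⟩ := radM_lower (d := d)
  have hs0 : 0 < s := by linarith
  refine ⟨M^s * C₂ * C₁, fun j f hf y => ?_⟩
  set h := freqLoc d β₀ j f with hh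
  have hc : Continuous h := freqLoc_cont hβ j hf
  have hm := hc.measurable
  calc ∫⁻ t, ‖Aj d χ β₀ j f y t‖ₑ ^ s
      ≤ ∫⁻ t, (Icc (1/2:ℝ) 4).indicator (fun t => (M:ℝ≥0∞)^s * ∫⁻ w, ‖h (y - t • w)‖ₑ^s ∂(sphereMeasure d)) t := by
        apply lintegral_mono; intro t; beta_reduce
        have := hM β₀ j f y t
        by_cases ht : t ∈ Icc (1/2:ℝ) 4
        · rw [indicator_of_mem ht] at this ⊢
          calc _ ≤ (M * ∫⁻ w, ‖h (y - t • w)‖ₑ ∂(sphereMeasure d)) ^ s := by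
                gcongr
                refine this.trans ?_
                gcongr
                exact enorm_integral_le_lintegral_enorm _
            _ ≤ _ := by
                rw [ENNReal.mul_rpow_of_nonneg _ _ hs0.le]
                gcongr
                refine (jensen_le (by fun_prop) hs).trans ?_
                simp
        · rw [indicator_of_notMem ht] at this ⊢
          rw [nonpos_iff_eq_zero.1 this, ENNReal.zero_rpow_of_pos hs0]
    _ = (M:ℝ≥0∞)^s * ∫⁻ t in Icc (1/2:ℝ) 4, ∫⁻ w, ‖h (y - t • w)‖ₑ^s ∂(sphereMeasure d) := by
        rw [lintegral_indicator measurableSet_Icc, lintegral_const_mul']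
        exact ENNReal.rpow_ne_top_of_nonneg hs0.le ENNReal.coe_ne_top
    _ ≤ (M:ℝ≥0∞)^s * (C₂ * ∫⁻ t, ∫⁻ w, ‖h (y - t • w)‖ₑ^s ∂(sphereMeasure d) ∂(radM d)) := by
        gcongr
        apply hC₂
        apply Measurable.lintegral_prod_right' (f := fun z : ℝ × Euc d => ‖h (y - z.1 • z.2)‖ₑ^s)
        fun_prop
    _ = (M:ℝ≥0∞)^s * (C₂ * ∫⁻ x, ‖h x‖ₑ^s) := by
        rw [← polar_lintegral (g := fun u => ‖h (y - u)‖ₑ^s) (by fun_prop),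
          lintegral_sub_left_eq_self (fun u => ‖h u‖ₑ^s) y]
    _ ≤ (M:ℝ≥0∞)^s * (C₂ * (C₁ * ∫⁻ x, ‖f x‖ₑ ^ s)) := by gcongr; exact hC₁ j f hf
    _ = _ := by push_cast; rw [ENNReal.coe_rpow_of_nonneg _ hs0.le]; ring

def RR (d n j : ℕ) : ℝ := (d + 4) * (2:ℝ) ^ ((n:ℤ) - j)

lemma RR_pos (d n j : ℕ) : 0 < RR d n j := by unfold RR; positivity

/-- local average of `s`-th powers -/
def SS (d : ℕ) (χ β₀ : ℝ → ℝ) (n j : ℕ) (s : ℝ) (f : Euc d → ℂ) (x : Euc d) : ℝ≥0∞ :=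
  (ENNReal.ofReal (RR d n j ^ d))⁻¹ * ∫⁻ y in closedBall x (RR d n j), ∫⁻ t, ‖Aj d χ β₀ j f y t‖ₑ ^ s

lemma vol_ball_RR (d n j : ℕ) (x : Euc d) : volume (closedBall x (RR d n j)) =
    ENNReal.ofReal (RR d n j ^ d) * volume (ball (0 : Euc d) 1) := by
  rw [Measure.addHaar_closedBall _ _ (RR_pos d n j).le, finrank_euclideanSpace_fin]

lemma ofReal_RR_ne (d n j : ℕ) : ENNReal.ofReal (RR d n j ^ d) ≠ 0 := by
  have := RR_pos d n j
  simp only [ne_eq, ENNReal.ofReal_eq_zero, not_le]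
  positivity

lemma SS_pt {d : ℕ} [hd : Fact (2 ≤ d)] {χ β₀ : ℝ → ℝ} (hχ : IsCutoff χ) (hβ : IsBump β₀) {s : ℝ} (hs : 1 ≤ s) :
    ∃ C : ℝ≥0, ∀ (n j : ℕ) (f : Euc d → ℂ), Integrable f → ∀ x, SS d χ β₀ n j s f x ≤ C * ∫⁻ x, ‖f x‖ₑ ^ s := by
  obtain ⟨C, hC⟩ := Aj_pt (d := d) hχ hβ hs
  have hfin : volume (ball (0 : Euc d) 1) ≠ ∞ := measure_ball_lt_top.ne
  lift volume (ball (0 : Euc d) 1) to ℝ≥0 using hfin with V hV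
  refine ⟨V * C, fun n j f hf x => ?_⟩
  calc _ ≤ (ENNReal.ofReal (RR d n j ^ d))⁻¹ * ∫⁻ y in closedBall x (RR d n j), C * ∫⁻ x, ‖f x‖ₑ ^ s := by
        rw [SS]; gcongr with y; exact hC j f hf y
    _ = _ := by
        rw [setLIntegral_const, vol_ball_RR, ← hV, mul_left_comm, ENNReal.inv_mul_cancel_left (ofReal_RR_ne d n j) ENNReal.ofReal_ne_top]
        push_cast; ring

lemma SS_two {d : ℕ} [hd : Fact (2 ≤ d)] {χ β₀ : ℝ → ℝ} (hχ : IsCutoff χ) (hβ : IsBump β₀) :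
    ∃ C : ℝ≥0, ∀ (n j : ℕ), n ≤ j → ∀ (f : Euc d → ℂ), Integrable f → ∀ x, SS d χ β₀ n j 2 f x ≤
      C * (2:ℝ≥0∞) ^ (-((n:ℝ) * (1/2))) * ∫⁻ x, ‖f x‖ₑ ^ (2:ℝ) := by
  obtain ⟨C₁, hC₁⟩ := SS_pt (d := d) hχ hβ (s := 2) (by norm_num)
  obtain ⟨C₂, hC₂⟩ := sphAvg_l2 (d := d)
  obtain ⟨M, hM1, hM⟩ := Aj_enorm_le (d := d) hχ
  obtain ⟨B, hB⟩ := mJ_bound (d := d) hβ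
  refine ⟨C₁ + M^2 * C₂ * (Real.toNNReal B)^2, fun n j hnj f hf x => ?_⟩
  rcases Nat.eq_zero_or_pos j with rfl | hj
  · obtain rfl : n = 0 := by omega
    refine (hC₁ 0 0 f hf x).trans ?_
    simp only [Nat.cast_zero, zero_mul, neg_zero, ENNReal.rpow_zero, mul_one]
    gcongr
    exact le_self_add
  obtain ⟨k, rfl⟩ : ∃ k, j = k + 1 := ⟨j - 1, by omega⟩
  set a : Euc d → ℂ := fun ξ => mJ d β₀ (k+1) ξ * 𝓕 f ξ with ha
  have hFc : Continuous (𝓕 f) :=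
    VectorFourier.fourierIntegral_continuous Real.continuous_fourierChar
      (innerSL ℝ).continuous₂ hf
  have hac : Continuous a := (mJ_cont hβ _).mul hFc
  have has : HasCompactSupport a := (mJ_supp hβ _).mul_right
  have hfl : freqLoc d β₀ (k+1) f = 𝓕⁻ a := rfl
  set R := RR d n (k+1) with hR
  have hRp : 0 < R := RR_pos _ _ _
  have hRρ : (2:ℝ)^n ≤ R * (2^k/2) := by
    have : R * (2^k/2) = (d+4) / 4 * (2:ℝ)^n := by
      rw [hR, RR]
      rw [zpow_sub₀ (by norm_num)]
      norm_cast
      rw [pow_succ]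
      push_cast
      field_simp
      ring
    rw [this]
    have : (1:ℝ) ≤ ((d:ℝ)+4)/4 := by linarith [(Nat.cast_nonneg d : (0:ℝ) ≤ d)]
    nlinarith [pow_pos (two_pos : (0:ℝ) < 2) n]
  have hRρ1 : 1 ≤ R * (2^k/2) := (one_le_pow₀ (by norm_num)).trans hRρ
  have main := hC₂ a hac has (2^k/2) R x (by positivity) hRp hRρ1 (fun ξ hξ => by
    simp only [ha]; rw [mJ_low hβ k ξ hξ, zero_mul])
  have hL2 : ∫⁻ ξ, ‖a ξ‖ₑ^2 ≤ (Real.toNNReal B : ℝ≥0∞)^2 * ∫⁻ x, ‖f x‖ₑ ^ 2 := by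
    calc _ ≤ ∫⁻ ξ, (Real.toNNReal B : ℝ≥0∞)^2 * ‖𝓕 f ξ‖ₑ^2 := by
          apply lintegral_mono; intro ξ
          simp only [ha]
          rw [enorm_mul, mul_pow]
          gcongr
          rw [← ofReal_norm]
          exact ENNReal.ofReal_le_ofReal (hB _ _)
      _ = (Real.toNNReal B : ℝ≥0∞)^2 * ∫⁻ ξ, ‖𝓕 f ξ‖ₑ^2 := by
          rw [lintegral_const_mul' _ _ (by simp)]
      _ ≤ _ := by gcongr 1; exact plancherel_le hf
  have hexp : ENNReal.ofReal (R^d * (R * (2^k/2)) ^ (-(1/2:ℝ))) ≤ ENNReal.ofReal (R^d) * (2:ℝ≥0∞) ^ (-((n:ℝ) * (1/2))) := by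
    rw [ENNReal.ofReal_mul (by positivity)]
    gcongr
    rw [show (2:ℝ≥0∞) = ENNReal.ofReal 2 by simp, ENNReal.ofReal_rpow_of_pos (by norm_num)]
    apply ENNReal.ofReal_le_ofReal
    calc (R * (2^k/2)) ^ (-(1/2:ℝ)) ≤ ((2:ℝ)^n)^ (-(1/2:ℝ)) :=
          Real.rpow_le_rpow_of_nonpos (by positivity) hRρ (by norm_num)
      _ = _ := by rw [← Real.rpow_natCast, ← Real.rpow_mul (by norm_num)]; congr 1; ring
  have hin : ∀ y, ∫⁻ t, ‖Aj d χ β₀ (k+1) f y t‖ₑ ^ (2:ℝ) ≤ (M:ℝ≥0∞)^2 * ∫⁻ t in Icc (1/2) 4, ‖sphAvg (𝓕⁻ a) t y‖ₑ^2 := by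
    intro y
    rw [← lintegral_const_mul' _ _ (by simp), ← lintegral_indicator measurableSet_Icc]
    apply lintegral_mono; intro t; beta_reduce
    have := hM β₀ (k+1) f y t
    by_cases ht : t ∈ Icc (1/2:ℝ) 4
    · rw [indicator_of_mem ht] at this ⊢
      rw [ENNReal.rpow_two, ← mul_pow]
      gcongr
      rw [← hfl]; exact this
    · rw [indicator_of_notMem ht] at this ⊢
      rw [nonpos_iff_eq_zero.1 this]; simp
  calc SS d χ β₀ n (k+1) 2 f x ≤ (ENNReal.ofReal (R ^ d))⁻¹ *
        ∫⁻ y in closedBall x R, (M:ℝ≥0∞)^2 * ∫⁻ t in Icc (1/2) 4, ‖sphAvg (𝓕⁻ a) t y‖ₑ^2 := by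
        rw [SS]; gcongr with y; exact hin y
    _ = (ENNReal.ofReal (R ^ d))⁻¹ * ((M:ℝ≥0∞)^2 * ∫⁻ y in closedBall x R, ∫⁻ t in Icc (1/2) 4, ‖sphAvg (𝓕⁻ a) t y‖ₑ^2) := by
        rw [lintegral_const_mul' _ _ (by simp)]
    _ ≤ (ENNReal.ofReal (R ^ d))⁻¹ * ((M:ℝ≥0∞)^2 * (C₂ * (ENNReal.ofReal (R^d) * (2:ℝ≥0∞) ^ (-((n:ℝ) * (1/2)))) * ((Real.toNNReal B : ℝ≥0∞)^2 * ∫⁻ x, ‖f x‖ₑ ^ 2))) := by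
        gcongr
        refine main.trans ?_
        gcongr
    _ = ((ENNReal.ofReal (R ^ d))⁻¹ * ENNReal.ofReal (R^d)) * ((M:ℝ≥0∞)^2 * C₂ * (Real.toNNReal B : ℝ≥0∞)^2 * (2:ℝ≥0∞) ^ (-((n:ℝ) * (1/2))) * ∫⁻ x, ‖f x‖ₑ ^ 2) := by ring
    _ = ((M:ℝ≥0∞)^2 * C₂ * (Real.toNNReal B : ℝ≥0∞)^2) * (2:ℝ≥0∞) ^ (-((n:ℝ) * (1/2))) * ∫⁻ x, ‖f x‖ₑ ^ (2:ℝ) := by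
        rw [ENNReal.inv_mul_cancel (ofReal_RR_ne _ _ _) ENNReal.ofReal_ne_top, one_mul]
        simp only [ENNReal.rpow_two]
    _ ≤ _ := by
        gcongr
        push_cast
        exact le_add_self

lemma geom_sum {η : ℝ} (hη : 0 < η) : ∃ K : ℝ, 0 < K ∧ ∀ (ι : Type) [Fintype ι] (k : ι → ℤ), Function.Injective k →
    ∀ τ : ℝ, ∑ i, (2:ℝ) ^ (-(η * |k i - τ|)) ≤ K := by
  have hsum : Summable (fun l : ℤ => (2:ℝ) ^ (-(η * |(l:ℝ)|))) := by
    rw [summable_int_iff_summable_nat_and_neg]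
    have hg : Summable (fun n : ℕ => ((2:ℝ)^(-η))^n) :=
      summable_geometric_of_lt_one (by positivity) (Real.rpow_lt_one_of_one_lt_of_neg (by norm_num) (by linarith))
    have e : ∀ n : ℕ, (2:ℝ) ^ (-(η * |((n:ℤ):ℝ)|)) = ((2:ℝ)^(-η))^n := by
      intro n
      rw [← Real.rpow_natCast, ← Real.rpow_mul (by norm_num)]
      congr 1
      simp
    constructor
    · exact hg.congr fun n => (e n).symm
    · refine hg.congr fun n => ?_
      rw [← e]; congr 3; push_cast; rw [abs_neg]
  have hpos : 0 < ∑' l : ℤ, (2:ℝ) ^ (-(η * |(l:ℝ)|)) :=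
    hsum.tsum_pos (fun l => by positivity) 0 (by positivity)
  refine ⟨2^η * ∑' l : ℤ, (2:ℝ) ^ (-(η * |(l:ℝ)|)), by positivity, fun ι _ k hk τ => ?_⟩
  set m := round τ with hm
  have h1 : ∀ i, (2:ℝ) ^ (-(η * |k i - τ|)) ≤ 2^η * (2:ℝ) ^ (-(η * |((k i - m : ℤ):ℝ)|)) := by
    intro i
    rw [← Real.rpow_add (by norm_num)]
    apply Real.rpow_le_rpow_of_exponent_le (by norm_num)
    have h2 : |τ - m| ≤ 1/2 := abs_sub_round τ
    have h3 : |((k i - m : ℤ):ℝ)| ≤ |k i - τ| + |τ - m| := by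
      push_cast
      exact abs_sub_le _ _ _
    nlinarith
  calc _ ≤ ∑ i, 2^η * (2:ℝ) ^ (-(η * |((k i - m : ℤ):ℝ)|)) := Finset.sum_le_sum fun i _ => h1 i
    _ = 2^η * ∑ i, (2:ℝ) ^ (-(η * |((k i - m : ℤ):ℝ)|)) := by rw [Finset.mul_sum]
    _ ≤ _ := by
      gcongr
      have hinj : Function.Injective (fun i => k i - m) := fun a b h => hk (by simpa using h)
      have := hsum.sum_le_tsum (Finset.univ.map ⟨fun i => k i - m, hinj⟩) (fun l _ => by positivity)
      rw [Finset.sum_map] at this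
      exact this

lemma orth (M : ℕ) [NeZero M] (i l : ZMod M) :
    ∑ w : ZMod M, ZMod.stdAddChar (-(l * w)) * ZMod.stdAddChar (i * w) = (if i = l then (M:ℂ) else 0) := by
  have h := AddChar.sum_mulShift (i - l) (ZMod.isPrimitive_stdAddChar M)
  rw [ZMod.card] at h
  simp only [sub_eq_zero] at h
  push_cast at h
  rw [← h]
  apply Finset.sum_congr rfl
  intro w _
  rw [← AddChar.map_add_eq_mul]
  congr 1; ring

lemma char_norm (M : ℕ) [NeZero M] (x : ZMod M) : ‖(ZMod.stdAddChar x : ℂ)‖ = 1 := AddChar.norm_apply _ _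

/-- the averaged size of random sums -/
def avgC {M : ℕ} [NeZero M] (u : ZMod M → ℝ) (a : ZMod M → ℂ) : ℝ :=
  (M:ℝ)⁻¹ * ∑ w : ZMod M, ‖∑ i, (ZMod.stdAddChar (i * w) * (u i : ℂ)) * a i‖

lemma avgC_nonneg {M : ℕ} [NeZero M] (u : ZMod M → ℝ) (a : ZMod M → ℂ) : 0 ≤ avgC u a := by
  unfold avgC; positivity

lemma pw_lambda {M : ℕ} [NeZero M] (u v : ZMod M → ℝ) (hu : ∀ i, 0 < u i) (hv : ∀ i, 0 < v i) (a : ZMod M → ℂ)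
    {r : ℝ} (hr : 0 < r) : ‖∑ i, a i‖ ≤ (∑ i, (u i + r * v i)⁻¹) * (avgC u a + r * avgC v a) := by
  have hM : (M:ℂ) ≠ 0 := by exact_mod_cast NeZero.ne M
  let m : ZMod M → ℂ := fun w => ∑ l, ZMod.stdAddChar (-(l * w)) * (((u l + r * v l)⁻¹ : ℝ) : ℂ)
  let F : ZMod M → ℂ := fun w => ∑ i, (ZMod.stdAddChar (i * w) * (u i : ℂ)) * a i + (r:ℂ) * ∑ i, (ZMod.stdAddChar (i * w) * (v i : ℂ)) * a i
  have key : ∑ i, a i = (M:ℂ)⁻¹ * ∑ w, m w * F w := by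
    have e1 : ∀ w, m w * F w = ∑ l, ∑ i, (ZMod.stdAddChar (-(l * w)) * ZMod.stdAddChar (i * w)) *
        ((((u l + r * v l)⁻¹ : ℝ) : ℂ) * (((u i + r * v i : ℝ) : ℂ) * a i)) := by
      intro w
      have : F w = ∑ i, ZMod.stdAddChar (i * w) * (((u i + r * v i : ℝ) : ℂ) * a i) := by
        simp only [F]
        rw [Finset.mul_sum, ← Finset.sum_add_distrib]
        apply Finset.sum_congr rfl; intro i _
        push_cast; ring
      rw [this]
      simp only [m]
      rw [Finset.sum_mul_sum]
      apply Finset.sum_congr rfl; intro l _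
      apply Finset.sum_congr rfl; intro i _
      ring
    simp_rw [e1]
    rw [Finset.sum_comm]
    rw [Finset.mul_sum]
    apply Finset.sum_congr rfl; intro l _
    rw [Finset.sum_comm]
    simp_rw [← Finset.sum_mul, orth]
    simp only [ite_mul, zero_mul, Finset.sum_ite_eq', Finset.mem_univ, if_true]
    have : ((u l + r * v l : ℝ) : ℂ) ≠ 0 := by
      rw [Complex.ofReal_ne_zero]
      have := hu l; have := hv l; positivity
    rw [Complex.ofReal_inv]
    field_simp
  have hm : ∀ w, ‖m w‖ ≤ ∑ i, (u i + r * v i)⁻¹ := by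
    intro w
    refine (norm_sum_le _ _).trans (Finset.sum_le_sum fun l _ => ?_)
    rw [norm_mul, char_norm, one_mul, Complex.norm_real, Real.norm_of_nonneg]
    have := hu l; have := hv l; positivity
  have hS : 0 ≤ ∑ i, (u i + r * v i)⁻¹ := Finset.sum_nonneg fun l _ => by
    have := hu l; have := hv l; positivity
  rw [key, norm_mul, norm_inv, Complex.norm_natCast]
  calc _ ≤ (M:ℝ)⁻¹ * ∑ w, (∑ i, (u i + r * v i)⁻¹) * (‖∑ i, (ZMod.stdAddChar (i * w) * (u i : ℂ)) * a i‖ + r * ‖∑ i, (ZMod.stdAddChar (i * w) * (v i : ℂ)) * a i‖) := by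
        gcongr
        refine (norm_sum_le _ _).trans (Finset.sum_le_sum fun w _ => ?_)
        rw [norm_mul]
        gcongr
        · exact hm w
        · refine (norm_add_le _ _).trans ?_
          rw [norm_mul, Complex.norm_real, Real.norm_of_nonneg hr.le]
    _ = _ := by
        rw [← Finset.mul_sum, Finset.sum_add_distrib, ← Finset.mul_sum, avgC, avgC]; ring

lemma pw_interp {θ c : ℝ} (hθ0 : 0 < θ) (hθ1 : θ < 1) (hc : c ≠ 0) : ∃ K : ℝ, 0 < K ∧
    ∀ (M : ℕ) [NeZero M] (k : ZMod M → ℤ), Function.Injective k → ∀ a : ZMod M → ℂ,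
    ‖∑ i, a i‖ ≤ K * (avgC (fun i => (2:ℝ)^(k i * (c * θ))) a ^ (1-θ) * avgC (fun i => (2:ℝ)^(k i * (-(c * (1-θ))))) a ^ θ) := by
  obtain ⟨K, hK, hgeom⟩ := geom_sum (η := |c| * min θ (1-θ)) (by
    have : 0 < min θ (1-θ) := lt_min hθ0 (by linarith)
    have := abs_pos.2 hc
    positivity)
  refine ⟨K * 2, by positivity, fun M _ k hk a => ?_⟩
  set u : ZMod M → ℝ := fun i => (2:ℝ)^(k i * (c * θ)) with hu
  set v : ZMod M → ℝ := fun i => (2:ℝ)^(k i * (-(c * (1-θ)))) with hv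
  have step : ∀ A B : ℝ, avgC u a ≤ A → avgC v a ≤ B → 0 < A → 0 < B → ‖∑ i, a i‖ ≤ K * 2 * (A^(1-θ) * B^θ) := by
    intro A B hA hB hA0 hB0
    obtain ⟨τ, hτ⟩ : ∃ τ : ℝ, A / B = (2:ℝ)^(c * τ) := by
      refine ⟨Real.logb 2 (A/B) / c, ?_⟩
      rw [mul_div_cancel₀ _ hc, Real.rpow_logb (by norm_num) (by norm_num) (by positivity)]
    have h := pw_lambda u v (fun i => by simp only [hu]; positivity) (fun i => by simp only [hv]; positivity) a
      (r := A/B) (by positivity)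
    have hS : ∑ i, (u i + A/B * v i)⁻¹ ≤ (A/B)^(-θ) * K := by
      calc _ ≤ ∑ i, (A/B)^(-θ) * (2:ℝ) ^ (-((|c| * min θ (1-θ)) * |k i - τ|)) := by
            apply Finset.sum_le_sum; intro i _
            rw [hτ]
            have hmin1 : min θ (1-θ) ≤ θ := min_le_left _ _
            have hmin2 : min θ (1-θ) ≤ 1-θ := min_le_right _ _
            have hmin0 : 0 ≤ min θ (1-θ) := le_min hθ0.le (by linarith)
            have habs : |c| * min θ (1-θ) * |k i - τ| = min θ (1-θ) * |c * (k i - τ)| := by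
              rw [abs_mul]; ring
            have hR : ((2:ℝ)^(c*τ))^(-θ) * (2:ℝ)^(-(min θ (1-θ) * |c * (k i - τ)|)) = (2:ℝ)^(c*τ*(-θ) + -(min θ (1-θ) * |c * (k i - τ)|)) := by
              rw [← Real.rpow_mul (by norm_num), ← Real.rpow_add (by norm_num)]
            rw [habs, hR]
            set z := c * (k i - τ) with hz
            rcases le_total 0 z with hz0 | hz0
            · calc _ ≤ (u i)⁻¹ := by
                    apply inv_anti₀
                    · simp only [hu]; positivity
                    · have : 0 < v i := by simp only [hv]; positivity
                      have : 0 < (2:ℝ)^(c*τ) * v i := by positivity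
                      linarith
                _ ≤ _ := by
                    simp only [hu]
                    rw [← Real.rpow_neg (by norm_num)]
                    apply Real.rpow_le_rpow_of_exponent_le (by norm_num)
                    rw [abs_of_nonneg hz0]
                    nlinarith
            · calc _ ≤ ((2:ℝ)^(c*τ) * v i)⁻¹ := by
                    apply inv_anti₀
                    · simp only [hv]; positivity
                    · have : 0 < u i := by simp only [hu]; positivity
                      linarith
                _ ≤ _ := by
                    simp only [hv]
                    rw [← Real.rpow_add (by norm_num), ← Real.rpow_neg (by norm_num)]
                    apply Real.rpow_le_rpow_of_exponent_le (by norm_num)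
                    rw [abs_of_nonpos hz0]
                    nlinarith
        _ = (A/B)^(-θ) * ∑ i, (2:ℝ) ^ (-((|c| * min θ (1-θ)) * |k i - τ|)) := by rw [Finset.mul_sum]
        _ ≤ _ := by gcongr; exact hgeom (ZMod M) k hk τ
    have hAB : avgC u a + A/B * avgC v a ≤ 2 * A := by
      have : A/B * avgC v a ≤ A/B * B := by gcongr
      rw [div_mul_cancel₀ _ hB0.ne'] at this
      linarith
    calc _ ≤ _ := h
      _ ≤ ((A/B)^(-θ) * K) * (2 * A) := by
          have h1 := avgC_nonneg u a
          have h2 := avgC_nonneg v a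
          gcongr
      _ = K * 2 * (A^(1-θ) * B^θ) := by
          rw [Real.div_rpow hA0.le hB0.le, Real.rpow_neg hB0.le, div_inv_eq_mul, Real.rpow_sub hA0, Real.rpow_one,
            Real.rpow_neg hA0.le]
          field_simp
  have hA := avgC_nonneg u a
  have hB := avgC_nonneg v a
  have hlim : Filter.Tendsto (fun δ : ℝ => K * 2 * ((avgC u a + δ)^(1-θ) * (avgC v a + δ)^θ)) (nhdsWithin 0 (Ioi 0))
      (nhds (K * 2 * ((avgC u a + 0)^(1-θ) * (avgC v a + 0)^θ))) := by
    apply Filter.Tendsto.mono_left _ nhdsWithin_le_nhds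
    apply ContinuousAt.tendsto
    have c1 : ContinuousAt (fun δ : ℝ => (avgC u a + δ)^(1-θ)) 0 :=
      ContinuousAt.rpow_const (by fun_prop) (Or.inr (by linarith))
    have c2 : ContinuousAt (fun δ : ℝ => (avgC v a + δ)^θ) 0 :=
      ContinuousAt.rpow_const (by fun_prop) (Or.inr (by linarith))
    exact continuousAt_const.mul (c1.mul c2)
  rw [add_zero, add_zero] at hlim
  apply ge_of_tendsto hlim
  filter_upwards [self_mem_nhdsWithin] with δ hδ
  rw [mem_Ioi] at hδ
  exact step _ _ (by linarith) (by linarith) (by linarith) (by linarith)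

/-- bounded level functions -/
def Good {d : ℕ} (f : Euc d → ℂ) : Prop :=
  Measurable f ∧ Integrable f ∧ ∃ N : ℕ, ∀ x, f x = 0 ∨ ((2:ℝ)^(-(N:ℝ)) ≤ ‖f x‖ ∧ ‖f x‖ < (2:ℝ)^(N:ℝ))

/-- level set of index k -/
def lvl {d : ℕ} (f : Euc d → ℂ) (k : ℤ) (x : Euc d) : ℂ :=
  {x | (2:ℝ)^k ≤ ‖f x‖ ∧ ‖f x‖ < (2:ℝ)^(k+1)}.indicator f x

lemma lvl_meas {d : ℕ} {f : Euc d → ℂ} (hf : Measurable f) (k : ℤ) :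
    MeasurableSet {x | (2:ℝ)^k ≤ ‖f x‖ ∧ ‖f x‖ < (2:ℝ)^(k+1)} := by
  apply MeasurableSet.inter
  · exact measurableSet_le measurable_const hf.norm
  · exact measurableSet_lt hf.norm measurable_const

lemma lvl_eq {d : ℕ} (f : Euc d → ℂ) (k : ℤ) (x : Euc d) (hx : f x ≠ 0) :
    lvl f k x = if k = Int.log 2 ‖f x‖ then f x else 0 := by
  have h0 : 0 < ‖f x‖ := norm_pos_iff.2 hx
  unfold lvl
  have e1 := Int.zpow_le_iff_le_log (R := ℝ) (b := 2) (by norm_num) h0 (x := k)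
  have e2 := Int.lt_zpow_iff_log_lt (R := ℝ) (b := 2) (by norm_num) h0 (x := k+1)
  push_cast at e1 e2
  simp only [indicator, mem_ofPred_eq, e1, e2]
  split_ifs with h1 h2 h2
  · rfl
  · exact absurd (by omega) h2
  · exact absurd ⟨by omega, by omega⟩ h1
  · rfl

lemma lvl_zero {d : ℕ} (f : Euc d → ℂ) (k : ℤ) (x : Euc d) (hx : f x = 0) : lvl f k x = 0 := by
  unfold lvl
  simp [indicator, hx]

/-- random sums of weighted level functions -/
def rnd {d : ℕ} (f : Euc d → ℂ) (M : ℕ) [NeZero M] (k : ZMod M → ℤ) (e : ℝ) (w : ZMod M) (x : Euc d) : ℂ :=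
  ∑ i, (ZMod.stdAddChar (i * w) * (((2:ℝ)^(k i * e) : ℝ) : ℂ)) * lvl f (k i) x

lemma rnd_norm {d : ℕ} (f : Euc d → ℂ) (M : ℕ) [NeZero M] (k : ZMod M → ℤ) (hk : Function.Injective k)
    (hk2 : ∀ x, f x ≠ 0 → ∃ i, k i = Int.log 2 ‖f x‖) (e : ℝ) (w : ZMod M) (x : Euc d) (hx : f x ≠ 0) :
    ‖rnd f M k e w x‖ = (2:ℝ)^(Int.log 2 ‖f x‖ * e) * ‖f x‖ := by
  obtain ⟨i, hi⟩ := hk2 x hx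
  unfold rnd
  rw [Finset.sum_eq_single i]
  · rw [lvl_eq f _ x hx, if_pos hi, norm_mul, norm_mul, char_norm, one_mul, Complex.norm_real,
      Real.norm_of_nonneg (by positivity), hi]
  · intro b _ hb
    rw [lvl_eq f _ x hx, if_neg, mul_zero]
    intro h
    exact hb (hk (h.trans hi.symm))
  · simp

lemma rnd_norm0 {d : ℕ} (f : Euc d → ℂ) (M : ℕ) [NeZero M] (k : ZMod M → ℤ) 
     (e : ℝ) (w : ZMod M) (x : Euc d) (hx : f x = 0) :
    rnd f M k e w x = 0 := by
  unfold rnd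
  apply Finset.sum_eq_zero
  intro i _
  rw [lvl_zero f _ x hx, mul_zero]

lemma lvl_sum {d : ℕ} (f : Euc d → ℂ) (M : ℕ) [NeZero M] (k : ZMod M → ℤ) (hk : Function.Injective k)
    (hk2 : ∀ x, f x ≠ 0 → ∃ i, k i = Int.log 2 ‖f x‖) (x : Euc d) : ∑ i, lvl f (k i) x = f x := by
  by_cases hx : f x = 0
  · rw [hx]; exact Finset.sum_eq_zero fun i _ => lvl_zero f _ x hx
  obtain ⟨i, hi⟩ := hk2 x hx
  rw [Finset.sum_eq_single i]
  · rw [lvl_eq f _ x hx, if_pos hi]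
  · intro b _ hb
    rw [lvl_eq f _ x hx, if_neg]
    intro h
    exact hb (hk (h.trans hi.symm))
  · simp

lemma log_bd {r : ℝ} (hr : 0 < r) : (2:ℝ)^((Int.log 2 r : ℤ):ℝ) ≤ r ∧ r ≤ 2 * (2:ℝ)^((Int.log 2 r : ℤ):ℝ) := by
  have h1 := Int.zpow_log_le_self (R := ℝ) (b := 2) (by norm_num) hr
  have h2 := (Int.lt_zpow_succ_log_self (R := ℝ) (b := 2) (by norm_num) r).le
  push_cast at h1 h2
  rw [Real.rpow_intCast]
  refine ⟨h1, h2.trans ?_⟩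
  rw [zpow_add₀ (by norm_num)]; norm_num
  linarith

lemma rnd_pow {p s : ℝ} (hp : 1 ≤ p) (hs : 1 ≤ s) {r : ℝ} (hr : 0 < r) :
    ((2:ℝ)^(Int.log 2 r * (p/s-1)) * r)^s ≤ (2:ℝ)^(s*|p/s-1|) * r^p := by
  obtain ⟨h1, h2⟩ := log_bd hr
  set l : ℝ := ((Int.log 2 r : ℤ):ℝ)
  have key : (2:ℝ)^(l * (p/s-1)) ≤ (2:ℝ)^|p/s-1| * r^(p/s-1) := by
    rw [Real.rpow_mul (by norm_num)]
    rcases le_total 0 (p/s-1) with h | h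
    · rw [abs_of_nonneg h]
      have : ((2:ℝ)^l)^(p/s-1) ≤ r^(p/s-1) := Real.rpow_le_rpow (by positivity) h1 h
      have h3 : (1:ℝ) ≤ (2:ℝ)^(p/s-1) := Real.one_le_rpow (by norm_num) h
      have h4 : 0 < r^(p/s-1) := by positivity
      nlinarith
    · rw [abs_of_nonpos h]
      have h5 : r / 2 ≤ (2:ℝ)^l := by linarith
      calc _ ≤ (r/2)^(p/s-1) := Real.rpow_le_rpow_of_nonpos (by positivity) h5 h
        _ = _ := by
          rw [Real.div_rpow hr.le (by norm_num), Real.rpow_neg (by norm_num)]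
          field_simp
  calc _ ≤ ((2:ℝ)^|p/s-1| * r^(p/s-1) * r)^s := by gcongr
    _ = (2:ℝ)^(s*|p/s-1|) * r^p := by
      rw [mul_assoc, ← Real.rpow_add_one hr.ne', Real.mul_rpow (by positivity) (by positivity), ← Real.rpow_mul (by norm_num), ← Real.rpow_mul hr.le, mul_comm s]
      congr 2
      field_simp
      ring

lemma rnd_good {d : ℕ} {f : Euc d → ℂ} (hf : Good f) (M : ℕ) [NeZero M] (k : ZMod M → ℤ) (hk : Function.Injective k)
    (hk2 : ∀ x, f x ≠ 0 → ∃ i, k i = Int.log 2 ‖f x‖) (e : ℝ) (w : ZMod M) : Good (rnd f M k e w) := by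
  obtain ⟨hm, hi, N, hN⟩ := hf
  refine ⟨?_, ?_, ?_⟩
  · unfold rnd
    apply Finset.measurable_sum
    intro i _
    exact (hm.indicator (lvl_meas hm _)).const_mul _
  · unfold rnd
    apply integrable_finsetSum
    intro i _
    exact (hi.indicator (lvl_meas hm _)).const_mul _
  · obtain ⟨m, hm⟩ : ∃ m : ℕ, ∀ i : ZMod M, |k i * e| ≤ m := by
      obtain ⟨m, hm⟩ := exists_nat_ge (∑ i : ZMod M, |k i * e|)
      exact ⟨m, fun i => (Finset.single_le_sum (f := fun i : ZMod M => |k i * e|) (fun i _ => abs_nonneg _) (Finset.mem_univ i)).trans hm⟩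
    refine ⟨m + N, fun x => ?_⟩
    by_cases hx : f x = 0
    · left; exact rnd_norm0 f M k e w x hx
    right
    rw [rnd_norm f M k hk hk2 e w x hx]
    obtain ⟨i, hi⟩ := hk2 x hx
    rw [← hi]
    obtain ⟨h1, h2⟩ := (hN x).resolve_left hx
    have h3 := abs_le.1 (hm i)
    have h4 : (2:ℝ)^(-(m:ℝ)) ≤ (2:ℝ)^(k i * e) := Real.rpow_le_rpow_of_exponent_le (by norm_num) h3.1
    have h5 : (2:ℝ)^(k i * e) ≤ (2:ℝ)^(m:ℝ) := Real.rpow_le_rpow_of_exponent_le (by norm_num) h3.2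
    push_cast
    rw [neg_add, Real.rpow_add (by norm_num), Real.rpow_add (by norm_num)]
    constructor
    · gcongr
    · have : 0 < (2:ℝ)^(m:ℝ) := by positivity
      calc _ ≤ (2:ℝ)^(m:ℝ) * ‖f x‖ := by gcongr
        _ < _ := by gcongr

lemma rnd_Lp {d : ℕ} {f : Euc d → ℂ} (M : ℕ) [NeZero M] (k : ZMod M → ℤ) (hk : Function.Injective k)
    (hk2 : ∀ x, f x ≠ 0 → ∃ i, k i = Int.log 2 ‖f x‖) {p s : ℝ} (hp : 1 ≤ p) (hs : 1 ≤ s) (w : ZMod M) :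
    ∫⁻ x, ‖rnd f M k (p/s-1) w x‖ₑ^s ≤ ENNReal.ofReal ((2:ℝ)^(s*|p/s-1|)) * ∫⁻ x, ‖f x‖ₑ^p := by
  rw [← lintegral_const_mul' _ _ ENNReal.ofReal_ne_top]
  apply lintegral_mono
  intro x
  simp only
  by_cases hx : f x = 0
  · rw [rnd_norm0 f M k _ w x hx]
    simp [show 0 < s by linarith]
  · rw [← ofReal_norm, ← ofReal_norm, rnd_norm f M k hk hk2 _ w x hx, ENNReal.ofReal_rpow_of_nonneg (by positivity) (by linarith), ENNReal.ofReal_rpow_of_nonneg (by positivity) (by linarith), ← ENNReal.ofReal_mul (by positivity)]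
    exact ENNReal.ofReal_le_ofReal (rnd_pow hp hs (norm_pos_iff.2 hx))

lemma good_levels {d : ℕ} {f : Euc d → ℂ} (hf : Good f) : ∃ (M : ℕ) (_ : NeZero M) (k : ZMod M → ℤ), Function.Injective k ∧
    ∀ x, f x ≠ 0 → ∃ i, k i = Int.log 2 ‖f x‖ := by
  obtain ⟨hm, hi, N, hN⟩ := hf
  refine ⟨2*N+1, ⟨by omega⟩, fun i => (i.val : ℤ) - N, ?_, ?_⟩
  · intro a b h
    simp only [sub_left_inj, Nat.cast_inj] at h
    exact ZMod.val_injective _ h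
  · intro x hx
    have h0 : 0 < ‖f x‖ := norm_pos_iff.2 hx
    obtain ⟨h1, h2⟩ := (hN x).resolve_left hx
    have e1 := Int.zpow_le_iff_le_log (R := ℝ) (b := 2) (by norm_num) h0 (x := -(N:ℤ))
    have e2 := Int.lt_zpow_iff_log_lt (R := ℝ) (b := 2) (by norm_num) h0 (x := (N:ℤ))
    have h1' := e1.1 (by rw [← Real.rpow_intCast]; push_cast; exact h1)
    have h2' := e2.1 (by rw [← Real.rpow_intCast]; push_cast; exact h2)
    refine ⟨((Int.log 2 ‖f x‖ + N).toNat : ZMod (2*N+1)), ?_⟩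
    beta_reduce
    rw [ZMod.val_natCast, Nat.mod_eq_of_lt (by omega)]
    omega

lemma avg_jensen {M : ℕ} [NeZero M] (z : ZMod M → ℝ≥0∞) {s : ℝ} (hs : 1 ≤ s) :
    ((M:ℝ≥0∞)⁻¹ * ∑ w, z w)^s ≤ (M:ℝ≥0∞)⁻¹ * ∑ w, z w ^ s := by
  rw [Finset.mul_sum, Finset.mul_sum]
  apply ENNReal.rpow_arith_mean_le_arith_mean_rpow _ _ _ _ hs
  rw [Finset.sum_const, Finset.card_univ, ZMod.card, nsmul_eq_mul, ENNReal.mul_inv_cancel]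
  · exact_mod_cast NeZero.ne M
  · exact ENNReal.natCast_ne_top M

lemma avg_le {M : ℕ} [NeZero M] (z : ZMod M → ℝ≥0∞) {B : ℝ≥0∞} (hB : ∀ w, z w ≤ B) :
    (M:ℝ≥0∞)⁻¹ * ∑ w, z w ≤ B := by
  calc _ ≤ (M:ℝ≥0∞)⁻¹ * ∑ w : ZMod M, B := by gcongr with w; exact hB w
    _ = B := by
      rw [Finset.sum_const, Finset.card_univ, ZMod.card, nsmul_eq_mul, ← mul_assoc, ENNReal.inv_mul_cancel, one_mul]
      · exact_mod_cast NeZero.ne M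
      · exact ENNReal.natCast_ne_top M

/-- the measure defining SS -/
def nuM (d n j : ℕ) (x : Euc d) : Measure (Euc d × ℝ) :=
  (ENNReal.ofReal (RR d n j ^ d))⁻¹ • ((volume.restrict (closedBall x (RR d n j))).prod volume)

lemma SS_eq {d : ℕ} [hd : Fact (2 ≤ d)] {χ β₀ : ℝ → ℝ} (hχ : IsCutoff χ) (hβ : IsBump β₀) (n j : ℕ) (s : ℝ) (f : Euc d → ℂ) (x : Euc d) :
    SS d χ β₀ n j s f x = ∫⁻ z, ‖Aj d χ β₀ j f z.1 z.2‖ₑ ^ s ∂(nuM d n j x) := by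
  unfold SS nuM
  rw [lintegral_smul_measure, lintegral_prod]
  · rfl
  · exact ((Aj_meas hχ hβ j f).enorm.pow_const s).aemeasurable

lemma interp {d : ℕ} [hd : Fact (2 ≤ d)] {χ β₀ : ℝ → ℝ} (hχ : IsCutoff χ) (hβ : IsBump β₀) {p p0 p1 θ : ℝ}
    (hp : 1 ≤ p) (hp0 : 1 ≤ p0) (hp1 : 1 ≤ p1) (hθ0 : 0 < θ) (hθ1 : θ < 1) (h : 1/p = (1-θ)/p1 + θ/p0) :
    ∃ C : ℝ≥0, ∀ f : Euc d → ℂ, Good f → ∃ (M : ℕ) (_ : NeZero M) (g1 g0 : ZMod M → Euc d → ℂ),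
      (∀ w, Good (g1 w) ∧ ∫⁻ x, ‖g1 w x‖ₑ^p1 ≤ C * ∫⁻ x, ‖f x‖ₑ^p) ∧
      (∀ w, Good (g0 w) ∧ ∫⁻ x, ‖g0 w x‖ₑ^p0 ≤ C * ∫⁻ x, ‖f x‖ₑ^p) ∧
      ∀ n j x, SS d χ β₀ n j p f x ≤ C * (((M:ℝ≥0∞)⁻¹ * ∑ w, SS d χ β₀ n j p1 (g1 w) x)^(p*(1-θ)/p1) *
        ((M:ℝ≥0∞)⁻¹ * ∑ w, SS d χ β₀ n j p0 (g0 w) x)^(p*θ/p0)) := by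
  have hα : p*(1-θ)/p1 + p*θ/p0 = 1 := by
    have : p * (1/p) = p * ((1-θ)/p1 + θ/p0) := by rw [h]
    rw [mul_one_div_cancel (by linarith)] at this
    refine Eq.trans ?_ this.symm; ring
  have hα0 : 0 ≤ p*(1-θ)/p1 := div_nonneg (mul_nonneg (by linarith) (by linarith)) (by linarith)
  have hβ0 : 0 ≤ p*θ/p0 := by positivity
  by_cases hc : p/p1 - p/p0 = 0
  · have e01 : p1 = p0 := by
      have : p/p1 = p/p0 := by linarith
      field_simp at this
      have hp' : p ≠ 0 := by linarith
      exact this.symm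
    subst e01
    have e : p = p1 := by
      rw [← add_div, sub_add_cancel] at h
      field_simp at h
      exact h.symm
    subst e
    refine ⟨1, fun f hf => ⟨1, ⟨one_ne_zero⟩, fun _ => f, fun _ => f, fun _ => ⟨hf, by simp⟩, fun _ => ⟨hf, by simp⟩, fun n j x => ?_⟩⟩
    rw [← ENNReal.rpow_add_of_nonneg _ _ hα0 hβ0, hα]
    simp
  obtain ⟨K, hK, hpw⟩ := pw_interp hθ0 hθ1 hc
  set c := p/p1 - p/p0 with hcdef
  have hcθ : c * θ = p/p1 - 1 := by
    have : p*(1-θ)/p1 + p*θ/p0 = p/p1 - c * θ := by rw [hcdef]; ring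
    linarith
  have hcθ' : -(c * (1-θ)) = p/p0 - 1 := by
    have : p*(1-θ)/p1 + p*θ/p0 = p/p0 + c * (1-θ) := by rw [hcdef]; ring
    linarith
  rw [hcθ, hcθ'] at hpw
  refine ⟨max (Real.toNNReal (K^p)) (max (Real.toNNReal ((2:ℝ)^(p1*|p/p1-1|))) (Real.toNNReal ((2:ℝ)^(p0*|p/p0-1|)))), fun f hf => ?_⟩
  obtain ⟨M, hM, k, hk, hk2⟩ := good_levels hf
  refine ⟨M, hM, rnd f M k (p/p1-1), rnd f M k (p/p0-1), fun w => ⟨rnd_good hf M k hk hk2 _ w, ?_⟩,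
    fun w => ⟨rnd_good hf M k hk hk2 _ w, ?_⟩, fun n j x => ?_⟩
  · refine (rnd_Lp M k hk hk2 hp hp1 w).trans ?_
    gcongr
    exact ENNReal.coe_le_coe.2 ((le_max_left _ _).trans (le_max_right _ _))
  · refine (rnd_Lp M k hk hk2 hp hp0 w).trans ?_
    gcongr
    exact ENNReal.coe_le_coe.2 ((le_max_right _ _).trans (le_max_right _ _))
  have hint : ∀ i, Integrable (lvl f (k i)) := fun i => hf.2.1.indicator (lvl_meas hf.1 _)
  have hA : ∀ (e : ℝ) (z : Euc d × ℝ), (M:ℝ≥0∞)⁻¹ * ∑ w, ‖Aj d χ β₀ j (rnd f M k e w) z.1 z.2‖ₑ =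
      ENNReal.ofReal (avgC (fun i => (2:ℝ)^(k i * e)) (fun i => Aj d χ β₀ j (lvl f (k i)) z.1 z.2)) := by
    intro e z
    unfold avgC
    have hM0 : (0:ℝ) < M := by exact_mod_cast Nat.pos_of_ne_zero (NeZero.ne M)
    rw [ENNReal.ofReal_mul (by positivity), ENNReal.ofReal_inv_of_pos hM0, ENNReal.ofReal_natCast, ENNReal.ofReal_sum_of_nonneg (fun _ _ => norm_nonneg _)]
    congr 1
    apply Finset.sum_congr rfl
    intro w _
    rw [ofReal_norm]
    congr 1
    unfold rnd
    exact Aj_sum hχ hβ j Finset.univ (fun i => ZMod.stdAddChar (i * w) * (((2:ℝ)^(k i * e) : ℝ) : ℂ)) (fun i => lvl f (k i)) (fun i _ => hint i) _ _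
  have hAf : ∀ z : Euc d × ℝ, Aj d χ β₀ j f z.1 z.2 = ∑ i, Aj d χ β₀ j (lvl f (k i)) z.1 z.2 := by
    intro z
    have := Aj_sum hχ hβ j Finset.univ (fun i => (1:ℂ)) (fun i => lvl f (k i)) (fun i _ => hint i) z.1 z.2
    simp only [one_mul, lvl_sum f M k hk hk2] at this
    exact this
  let A1 : Euc d × ℝ → ℝ≥0∞ := fun z => (M:ℝ≥0∞)⁻¹ * ∑ w, ‖Aj d χ β₀ j (rnd f M k (p/p1-1) w) z.1 z.2‖ₑ
  let A0 : Euc d × ℝ → ℝ≥0∞ := fun z => (M:ℝ≥0∞)⁻¹ * ∑ w, ‖Aj d χ β₀ j (rnd f M k (p/p0-1) w) z.1 z.2‖ₑ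
  have mA : ∀ e, Measurable (fun z : Euc d × ℝ => (M:ℝ≥0∞)⁻¹ * ∑ w, ‖Aj d χ β₀ j (rnd f M k e w) z.1 z.2‖ₑ) := by
    intro e
    apply Measurable.const_mul
    apply Finset.measurable_sum
    intro w _
    exact (Aj_meas hχ hβ j _).enorm
  have pt : ∀ z : Euc d × ℝ, ‖Aj d χ β₀ j f z.1 z.2‖ₑ^p ≤ ENNReal.ofReal (K^p) * ((A1 z ^ p1)^(p*(1-θ)/p1) * (A0 z ^ p0)^(p*θ/p0)) := by
    intro z
    have h1 := hpw M k hk (fun i => Aj d χ β₀ j (lvl f (k i)) z.1 z.2)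
    rw [← hAf z] at h1
    have n1 := avgC_nonneg (fun i => (2:ℝ)^(k i * (p/p1-1))) (fun i => Aj d χ β₀ j (lvl f (k i)) z.1 z.2)
    have n0 := avgC_nonneg (fun i => (2:ℝ)^(k i * (p/p0-1))) (fun i => Aj d χ β₀ j (lvl f (k i)) z.1 z.2)
    have h2 : ‖Aj d χ β₀ j f z.1 z.2‖ₑ ≤ ENNReal.ofReal K * (A1 z ^ (1-θ) * A0 z ^ θ) := by
      simp only [A1, A0, hA]
      rw [← ofReal_norm, ENNReal.ofReal_rpow_of_nonneg n1 (by linarith), ENNReal.ofReal_rpow_of_nonneg n0 (by linarith),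
        ← ENNReal.ofReal_mul (by positivity), ← ENNReal.ofReal_mul hK.le]
      exact ENNReal.ofReal_le_ofReal h1
    calc _ ≤ (ENNReal.ofReal K * (A1 z ^ (1-θ) * A0 z ^ θ))^p := by gcongr
      _ = _ := by
        rw [ENNReal.mul_rpow_of_nonneg _ _ (by linarith), ENNReal.mul_rpow_of_nonneg _ _ (by linarith), ENNReal.ofReal_rpow_of_nonneg hK.le (by linarith)]
        simp only [← ENNReal.rpow_mul]
        have e1 : p1 * (p * (1 - θ) / p1) = (1-θ) * p := by field_simp
        have e2 : p0 * (p * θ / p0) = θ * p := by field_simp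
        rw [e1, e2]
  simp only [SS_eq hχ hβ]
  calc _ ≤ ∫⁻ z, ENNReal.ofReal (K^p) * ((A1 z ^ p1)^(p*(1-θ)/p1) * (A0 z ^ p0)^(p*θ/p0)) ∂(nuM d n j x) := lintegral_mono pt
    _ = ENNReal.ofReal (K^p) * ∫⁻ z, ((A1 z ^ p1)^(p*(1-θ)/p1) * (A0 z ^ p0)^(p*θ/p0)) ∂(nuM d n j x) := lintegral_const_mul' _ _ ENNReal.ofReal_ne_top
    _ ≤ ENNReal.ofReal (K^p) * ((∫⁻ z, A1 z ^ p1 ∂(nuM d n j x))^(p*(1-θ)/p1) * (∫⁻ z, A0 z ^ p0 ∂(nuM d n j x))^(p*θ/p0)) := by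
        gcongr
        exact ENNReal.lintegral_mul_norm_pow_le ((mA _).pow_const _).aemeasurable ((mA _).pow_const _).aemeasurable hα0 hβ0 hα
    _ ≤ _ := by
        have hJ : ∀ (e s : ℝ), 1 ≤ s → ∫⁻ z, ((M:ℝ≥0∞)⁻¹ * ∑ w, ‖Aj d χ β₀ j (rnd f M k e w) z.1 z.2‖ₑ)^s ∂(nuM d n j x) ≤
            (M:ℝ≥0∞)⁻¹ * ∑ w, ∫⁻ z, ‖Aj d χ β₀ j (rnd f M k e w) z.1 z.2‖ₑ^s ∂(nuM d n j x) := by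
          intro e s hs
          rw [← lintegral_finsetSum _ (fun w _ => (Aj_meas hχ hβ j _).enorm.pow_const s), ← lintegral_const_mul' _ _ (by
            rw [ENNReal.inv_ne_top]; exact_mod_cast NeZero.ne M)]
          exact lintegral_mono fun z => avg_jensen _ hs
        gcongr
        · exact ENNReal.coe_le_coe.2 (le_max_left _ _)
        · exact hJ _ _ hp1
        · exact hJ _ _ hp0

/-- step 1 : the gain at `q = ∞`. -/
lemma SS_gain {d : ℕ} [hd : Fact (2 ≤ d)] {χ β₀ : ℝ → ℝ} (hχ : IsCutoff χ) (hβ : IsBump β₀) {s : ℝ} (hs : 1 < s) :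
    ∃ ε : ℝ, 0 < ε ∧ ∃ C : ℝ≥0, ∀ (n j : ℕ), n ≤ j → ∀ f : Euc d → ℂ, Good f → ∀ x,
      SS d χ β₀ n j s f x ≤ C * (2:ℝ≥0∞) ^ (-((n:ℝ) * ε)) * ∫⁻ x, ‖f x‖ₑ ^ s := by
  have hs0 : 0 < 1/s := by positivity
  have hs1 : 1/s < 1 := by rw [div_lt_one (by linarith)]; exact hs
  obtain ⟨θ, hθ0, hθa, hθb⟩ : ∃ θ : ℝ, 0 < θ ∧ θ ≤ 1/s ∧ θ ≤ 1 - 1/s :=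
    ⟨min (1/s) (1-1/s), lt_min hs0 (by linarith), min_le_left _ _, min_le_right _ _⟩
  have hden : 0 < 1/s - θ/2 := by linarith
  set s1 := (1-θ)/(1/s-θ/2) with hs1d
  have hs11 : 1 ≤ s1 := by
    rw [hs1d, le_div_iff₀ hden]; linarith
  have hθ1 : θ < 1 := by linarith
  have heq : 1/s = (1-θ)/s1 + θ/2 := by
    have : (1-θ)/s1 = 1/s - θ/2 := by
      rw [hs1d, div_div_cancel₀]; linarith
    linarith
  have hα : s*(1-θ)/s1 + s*θ/2 = 1 := by
    have : s * (1/s) = s * ((1-θ)/s1 + θ/2) := by rw [← heq]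
    rw [mul_one_div_cancel (by linarith)] at this
    refine Eq.trans ?_ this.symm; ring
  have hα0 : 0 ≤ s*(1-θ)/s1 := div_nonneg (mul_nonneg (by linarith) (by linarith)) (by linarith)
  have hβ0 : 0 < s*θ/2 := by positivity
  obtain ⟨C1, hC1⟩ := interp (d := d) hχ hβ hs.le one_le_two hs11 hθ0 hθ1 heq
  obtain ⟨C2, hC2⟩ := SS_pt (d := d) hχ hβ hs11
  obtain ⟨C3, hC3⟩ := SS_two (d := d) hχ hβ
  refine ⟨1/2 * (s*θ/2), by positivity, C1 * ((C2 * C1)^(s*(1-θ)/s1) * (C3 * C1)^(s*θ/2)), fun n j hnj f hf x => ?_⟩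
  obtain ⟨M, hM, g1, g0, hg1, hg0, hS⟩ := hC1 f hf
  refine (hS n j x).trans ?_
  set I := ∫⁻ x, ‖f x‖ₑ ^ s
  have b1 : (M:ℝ≥0∞)⁻¹ * ∑ w, SS d χ β₀ n j s1 (g1 w) x ≤ C2 * C1 * I := by
    apply avg_le; intro w
    refine (hC2 n j (g1 w) (hg1 w).1.2.1 x).trans ?_
    rw [mul_assoc]; gcongr; exact (hg1 w).2
  have b0 : (M:ℝ≥0∞)⁻¹ * ∑ w, SS d χ β₀ n j 2 (g0 w) x ≤ C3 * C1 * ((2:ℝ≥0∞) ^ (-((n:ℝ) * (1/2))) * I) := by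
    apply avg_le; intro w
    refine (hC3 n j hnj (g0 w) (hg0 w).1.2.1 x).trans ?_
    calc _ ≤ C3 * (2:ℝ≥0∞) ^ (-((n:ℝ) * (1/2))) * (C1 * I) := by gcongr; exact (hg0 w).2
      _ = _ := by ring
  calc _ ≤ C1 * ((C2 * C1 * I)^(s*(1-θ)/s1) * (C3 * C1 * ((2:ℝ≥0∞) ^ (-((n:ℝ) * (1/2))) * I))^(s*θ/2)) := by gcongr
    _ = _ := by
      simp only [ENNReal.coe_mul, ENNReal.coe_rpow_of_nonneg _ hα0, ENNReal.coe_rpow_of_nonneg _ hβ0.le, ENNReal.mul_rpow_of_nonneg _ _ hα0, ENNReal.mul_rpow_of_nonneg _ _ hβ0.le,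
        ← ENNReal.rpow_mul]
      have e1 : I = I^(s*(1-θ)/s1) * I^(s*θ/2) := by
        rw [← ENNReal.rpow_add_of_nonneg _ _ hα0 hβ0.le, hα, ENNReal.rpow_one]
      conv_rhs => rw [e1]
      rw [show -((n:ℝ) * (1/2)) * (s*θ/2) = -((n:ℝ) * (1/2 * (s*θ/2))) by ring]
      ring

lemma Aj_congr {d : ℕ} {χ β₀ : ℝ → ℝ} (j : ℕ) {f g : Euc d → ℂ} (h : f =ᵐ[volume] g) : Aj d χ β₀ j f = Aj d χ β₀ j g := by
  have : 𝓕 f = 𝓕 g := by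
    ext ξ
    rw [Real.fourier_eq, Real.fourier_eq]
    apply integral_congr_ae
    filter_upwards [h] with x hx
    rw [hx]
  unfold Aj freqLoc
  rw [this]

lemma inner_meas {d : ℕ} [hd : Fact (2 ≤ d)] {χ β₀ : ℝ → ℝ} (hχ : IsCutoff χ) (hβ : IsBump β₀) (j : ℕ) (s : ℝ) (f : Euc d → ℂ) :
    Measurable (fun y => ∫⁻ t, ‖Aj d χ β₀ j f y t‖ₑ ^ s) :=
  ((Aj_meas hχ hβ j f).enorm.pow_const s).lintegral_prod_right'

lemma ball_meas {d : ℕ} {H : Euc d → ℝ≥0∞} (hH : Measurable H) (R : ℝ) :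
    Measurable (fun x => ∫⁻ y in closedBall x R, H y) := by
  have e : ∀ x, ∫⁻ y in closedBall x R, H y = ∫⁻ y, {z : Euc d × Euc d | dist z.2 z.1 ≤ R}.indicator (fun z => H z.2) (x, y) := by
    intro x
    rw [← lintegral_indicator measurableSet_closedBall]
    rfl
  simp_rw [e]
  apply Measurable.lintegral_prod_right'
  apply Measurable.indicator (hH.comp measurable_snd)
  exact measurableSet_le (measurable_snd.dist measurable_fst) measurable_const

lemma ball_tonelli {d : ℕ} {H : Euc d → ℝ≥0∞} (hH : Measurable H) (R : ℝ) :
    ∫⁻ x, ∫⁻ y in closedBall x R, H y = volume (closedBall (0 : Euc d) R) * ∫⁻ y, H y := by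
  have e : ∀ x, ∫⁻ y in closedBall x R, H y = ∫⁻ y, {z : Euc d × Euc d | dist z.2 z.1 ≤ R}.indicator (fun z => H z.2) (x, y) := by
    intro x
    rw [← lintegral_indicator measurableSet_closedBall]
    rfl
  simp_rw [e]
  rw [lintegral_lintegral_swap]
  · rw [← lintegral_const_mul _ hH]
    apply lintegral_congr; intro y
    have : ∀ x, {z : Euc d × Euc d | dist z.2 z.1 ≤ R}.indicator (fun z => H z.2) (x, y) = (closedBall y R).indicator (fun _ => H y) x := by
      intro x
      simp only [indicator, mem_closedBall, mem_ofPred_eq, dist_comm y x]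
    simp_rw [this]
    rw [lintegral_indicator measurableSet_closedBall, setLIntegral_const, mul_comm]
    congr 1
    rw [Measure.addHaar_closedBall_center]
  · apply Measurable.aemeasurable
    apply Measurable.indicator (hH.comp measurable_snd)
    exact measurableSet_le (measurable_snd.dist measurable_fst) measurable_const

lemma SS_meas {d : ℕ} [hd : Fact (2 ≤ d)] {χ β₀ : ℝ → ℝ} (hχ : IsCutoff χ) (hβ : IsBump β₀) (n j : ℕ) (s : ℝ) (f : Euc d → ℂ) :
    Measurable (SS d χ β₀ n j s f) :=
  (ball_meas (inner_meas hχ hβ j s f) _).const_mul _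

lemma SS_int {d : ℕ} [hd : Fact (2 ≤ d)] {χ β₀ : ℝ → ℝ} (hχ : IsCutoff χ) (hβ : IsBump β₀) (n j : ℕ) (s : ℝ) (f : Euc d → ℂ)
    {m : ℝ} (hm : 1 ≤ m) : ∫⁻ x, SS d χ β₀ n j s f x ^ m ≤ volume (ball (0 : Euc d) 1) ^ m *
      ∫⁻ y, (∫⁻ t, ‖Aj d χ β₀ j f y t‖ₑ ^ s) ^ m := by
  set G : Euc d → ℝ≥0∞ := fun y => ∫⁻ t, ‖Aj d χ β₀ j f y t‖ₑ ^ s with hG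
  have hGm : Measurable G := inner_meas hχ hβ j s f
  set V := volume (ball (0 : Euc d) 1) with hV
  set a := ENNReal.ofReal (RR d n j ^ d) with ha
  have ha0 : a ≠ 0 := ofReal_RR_ne d n j
  have hat : a ≠ ∞ := ENNReal.ofReal_ne_top
  have pt : ∀ x, SS d χ β₀ n j s f x ^ m ≤ a⁻¹ * V^(m-1) * ∫⁻ y in closedBall x (RR d n j), G y ^ m := by
    intro x
    have h1 := jensen_le (μ := volume.restrict (closedBall x (RR d n j))) hGm.aemeasurable hm
    rw [Measure.restrict_apply_univ, vol_ball_RR, ← ha, ← hV] at h1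
    unfold SS
    rw [← ha]
    rw [ENNReal.mul_rpow_of_nonneg _ _ (by linarith)]
    calc _ ≤ a⁻¹^m * ((a * V)^(m-1) * ∫⁻ y in closedBall x (RR d n j), G y ^ m) := by gcongr
      _ = _ := by
        rw [ENNReal.mul_rpow_of_nonneg _ _ (by linarith), ← mul_assoc, ← mul_assoc]
        congr 2
        rw [ENNReal.inv_rpow, ← ENNReal.rpow_neg, ← ENNReal.rpow_add _ _ ha0 hat, show -m + (m-1) = -1 by ring, ENNReal.rpow_neg_one]
  calc _ ≤ ∫⁻ x, a⁻¹ * V^(m-1) * ∫⁻ y in closedBall x (RR d n j), G y ^ m := lintegral_mono pt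
    _ = a⁻¹ * V^(m-1) * (a * V * ∫⁻ y, G y ^ m) := by
      rw [lintegral_const_mul _ (ball_meas (hGm.pow_const m) _), ball_tonelli (hGm.pow_const m), vol_ball_RR]
    _ = _ := by
      have : V^m = V^(m-1) * V := by
        nth_rw 3 [← ENNReal.rpow_one V]
        rw [← ENNReal.rpow_add_of_nonneg _ _ (by linarith) (by norm_num)]; congr 1; ring
      rw [this]
      calc _ = (a⁻¹ * a) * (V^(m-1) * V * ∫⁻ y, G y ^ m) := by ring
        _ = _ := by rw [ENNReal.inv_mul_cancel ha0 hat, one_mul]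

/-- consequence of the hypothesis -/
def HypE (d : ℕ) (χ β₀ : ℝ → ℝ) (p0 q0 : ℝ) (K : ℝ≥0) : Prop := ∀ (j : ℕ) (f : Euc d → ℂ), Integrable f →
  ∫⁻ y, (∫⁻ t, ‖Aj d χ β₀ j f y t‖ₑ ^ p0) ^ (q0/p0) ≤ K * (2:ℝ≥0∞)^(-((j:ℝ) * d)) * (∫⁻ x, ‖f x‖ₑ ^ p0)^(q0/p0)

lemma hypE_of {d : ℕ} [hd : Fact (2 ≤ d)] {χ β₀ : ℝ → ℝ} (hχ : IsCutoff χ) (hβ : IsBump β₀) 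
    (p₀ q₀ : ℝ≥0∞) (hp₀1 : 1 < p₀) (hp₀q₀ : p₀ ≤ q₀) (hq₀ : q₀ ≠ ∞)
    (C₀ : ℝ≥0)
    (hC₀ : ∀ j : ℕ, (2 : ℝ≥0∞) ^ (((j : ℝ) * d) / q₀.toReal) *
      AjOpNorm d χ β₀ j p₀ q₀ p₀ ≤ C₀) : ∃ K : ℝ≥0, HypE d χ β₀ p₀.toReal q₀.toReal K := by
  have hp₀t : p₀ ≠ ∞ := ne_top_of_le_ne_top hq₀ hp₀q₀
  have hp0 : p₀ ≠ 0 := (zero_lt_one.trans hp₀1).ne'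
  have P1 : 0 < p₀.toReal := ENNReal.toReal_pos hp0 hp₀t
  have Q1 : 0 < q₀.toReal := ENNReal.toReal_pos ((zero_lt_one.trans hp₀1).trans_le hp₀q₀).ne' hq₀
  set P := p₀.toReal
  set Q := q₀.toReal
  refine ⟨(C₀+1)^Q, fun j f hf => ?_⟩
  have hop : AjOpNorm d χ β₀ j p₀ q₀ p₀ ≤ C₀ * (2:ℝ≥0∞)^(-(((j:ℝ) * d)/Q)) := by
    have h := hC₀ j
    rw [ENNReal.rpow_neg, ← div_eq_mul_inv, ENNReal.le_div_iff_mul_le (Or.inl (by simp)) (Or.inl (by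
      exact ENNReal.rpow_ne_top_of_nonneg (by positivity) (by simp))), mul_comm]
    exact h
  have hmix : ∀ g : Euc d → ℂ, mixedNorm d q₀ p₀ (Aj d χ β₀ j g) = (∫⁻ y, (∫⁻ t, ‖Aj d χ β₀ j g y t‖ₑ ^ P) ^ (Q/P))^(1/Q) := by
    intro g
    unfold mixedNorm lqNorm
    simp only [hq₀, hp₀t, if_false]
    congr 1
    apply lintegral_congr; intro y
    rw [← ENNReal.rpow_mul]
    congr 1
    change 1 / P * Q = Q / P
    field_simp
  have heL : eLpNorm f p₀ volume = (∫⁻ x, ‖f x‖ₑ ^ P)^(1/P) := eLpNorm_eq_lintegral_rpow_enorm_toReal hp0 hp₀t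
  set a := eLpNorm f p₀ volume with ha
  have hRa : (∫⁻ x, ‖f x‖ₑ ^ P)^(Q/P) = a^Q := by
    rw [heL, ← ENNReal.rpow_mul]; congr 1; field_simp
  rw [hRa]
  by_cases ha0 : a = 0
  · have : f =ᵐ[volume] 0 := (eLpNorm_eq_zero_iff hf.1 hp0).1 ha0
    have h2 := Aj_smul hχ hβ j hf (0:ℂ)
    have hz : ∀ y t, Aj d χ β₀ j f y t = 0 := by
      intro y t
      have h3 := h2 y t
      rw [Aj_congr j this]
      simp only [zero_mul] at h3
      exact h3
    simp [hz, P1, Q1, div_pos Q1 P1]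
  by_cases hat : a = ∞
  · rw [hat, ENNReal.top_rpow_of_pos Q1, ENNReal.mul_top]
    · exact le_top
    · apply mul_ne_zero
      · have : (0:ℝ≥0) < (C₀+1)^Q := by positivity
        exact_mod_cast this.ne'
      · simp
  set c : ℝ := a.toReal with hc
  have hc0 : 0 < c := ENNReal.toReal_pos ha0 hat
  have hca : ‖(c:ℂ)⁻¹‖ₑ = a⁻¹ := by
    rw [enorm_inv (by exact_mod_cast hc0.ne')]
    congr 1
    rw [← ofReal_norm, Complex.norm_real, Real.norm_of_nonneg hc0.le, hc, ENNReal.ofReal_toReal hat]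
  have h1 : eLpNorm (fun x => (c:ℂ)⁻¹ * f x) p₀ volume ≤ 1 := by
    have := eLpNorm_const_smul (c:ℂ)⁻¹ f p₀ volume
    have e : ((c:ℂ)⁻¹ • f) = fun x => (c:ℂ)⁻¹ * f x := rfl
    rw [e] at this
    rw [this, hca, ← ha, ENNReal.inv_mul_cancel ha0 hat]
  have h2 : mixedNorm d q₀ p₀ (Aj d χ β₀ j (fun x => (c:ℂ)⁻¹ * f x)) ≤ C₀ * (2:ℝ≥0∞)^(-(((j:ℝ) * d)/Q)) :=
    le_trans (le_iSup₂ (f := fun (f : Euc d → ℂ) (_ : eLpNorm f p₀ volume ≤ 1) => mixedNorm d q₀ p₀ (Aj d χ β₀ j f)) _ h1) hop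
  rw [hmix, one_div, ENNReal.rpow_inv_le_iff Q1] at h2
  have h3 : ∀ y, (∫⁻ t, ‖Aj d χ β₀ j (fun x => (c:ℂ)⁻¹ * f x) y t‖ₑ ^ P) ^ (Q/P) = (a⁻¹)^Q * (∫⁻ t, ‖Aj d χ β₀ j f y t‖ₑ ^ P) ^ (Q/P) := by
    intro y
    have e : ∀ t, ‖Aj d χ β₀ j (fun x => (c:ℂ)⁻¹ * f x) y t‖ₑ ^ P = (a⁻¹)^P * ‖Aj d χ β₀ j f y t‖ₑ ^ P := by
      intro t
      rw [Aj_smul hχ hβ j hf, enorm_mul, hca, ENNReal.mul_rpow_of_nonneg _ _ P1.le]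
    simp_rw [e]
    rw [lintegral_const_mul' _ _ (ENNReal.rpow_ne_top_of_nonneg P1.le (ENNReal.inv_ne_top.2 ha0)), ENNReal.mul_rpow_of_nonneg _ _ (by positivity), ← ENNReal.rpow_mul]
    congr 2; field_simp
  simp_rw [h3] at h2
  rw [lintegral_const_mul' _ _ (ENNReal.rpow_ne_top_of_nonneg Q1.le (ENNReal.inv_ne_top.2 ha0))] at h2
  set J := ∫⁻ y, (∫⁻ t, ‖Aj d χ β₀ j f y t‖ₑ ^ P) ^ (Q/P)
  calc J = a^Q * ((a⁻¹)^Q * J) := by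
        rw [← mul_assoc, ← ENNReal.mul_rpow_of_nonneg _ _ Q1.le, ENNReal.mul_inv_cancel ha0 hat, ENNReal.one_rpow, one_mul]
    _ ≤ a^Q * ((C₀ * (2:ℝ≥0∞)^(-(((j:ℝ) * d)/Q)))^Q) := by gcongr
    _ ≤ _ := by
      rw [ENNReal.mul_rpow_of_nonneg _ _ Q1.le, ← ENNReal.rpow_mul, mul_comm, ENNReal.coe_rpow_of_nonneg _ Q1.le]
      gcongr
      · exact_mod_cast (le_self_add : C₀ ≤ C₀ + 1)
      · norm_num
      · apply le_of_eq; field_simp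

lemma good_approx {d : ℕ} [hd : Fact (2 ≤ d)] {χ β₀ : ℝ → ℝ} (hχ : IsCutoff χ) (hβ : IsBump β₀) (f : Euc d → ℂ) (hf : Integrable f) :
    ∃ g : ℕ → Euc d → ℂ, (∀ N, Good (g N)) ∧ (∀ N (s : ℝ), 0 < s → ∫⁻ x, ‖g N x‖ₑ^s ≤ ∫⁻ x, ‖f x‖ₑ^s) ∧
      ∀ n j s x, 0 < s → SS d χ β₀ n j s f x ≤ Filter.liminf (fun N => SS d χ β₀ n j s (g N) x) Filter.atTop := by
  set f' := hf.1.mk f with hf'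
  have hm : Measurable f' := hf.1.stronglyMeasurable_mk.measurable
  have hae : f =ᵐ[volume] f' := hf.1.ae_eq_mk
  have hfi : Integrable f' := hf.congr hae
  let E : ℕ → Set (Euc d) := fun N => {x | (2:ℝ)^(-(N:ℝ)) ≤ ‖f' x‖ ∧ ‖f' x‖ < (2:ℝ)^(N:ℝ)}
  have hE : ∀ N, MeasurableSet (E N) := fun N => (measurableSet_le measurable_const hm.norm).inter (measurableSet_lt hm.norm measurable_const)
  let g : ℕ → Euc d → ℂ := fun N => (E N).indicator f'
  have hgi : ∀ N, Integrable (g N) := fun N => hfi.indicator (hE N)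
  refine ⟨g, fun N => ⟨hm.indicator (hE N), hgi N, N, fun x => ?_⟩, fun N s hs => ?_, fun n j s x hs => ?_⟩
  · by_cases hx : x ∈ E N
    · right; simp only [g, indicator_of_mem hx]; exact hx
    · left; simp only [g, indicator_of_notMem hx]
  · apply lintegral_mono_ae
    filter_upwards [hae] with x hx
    rw [hx]
    apply ENNReal.rpow_le_rpow _ hs.le
    simp only [g]
    by_cases hx : x ∈ E N
    · rw [indicator_of_mem hx]
    · rw [indicator_of_notMem hx]; simp
  · have hconv : ∀ u, Filter.Tendsto (fun N => ‖f' u - g N u‖) Filter.atTop (nhds 0) := by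
      intro u
      apply tendsto_const_nhds.congr'
      by_cases hu : f' u = 0
      · filter_upwards with N
        have : g N u = 0 := by simp only [g, indicator]; split_ifs <;> simp [hu]
        rw [this, hu]; simp
      · have h0 : 0 < ‖f' u‖ := norm_pos_iff.2 hu
        have hz : Filter.Tendsto (fun N : ℕ => (2:ℝ)^(-(N:ℝ))) Filter.atTop (nhds 0) := by
          have := tendsto_pow_atTop_nhds_zero_of_lt_one (r := (1/2:ℝ)) (by norm_num) (by norm_num)
          refine this.congr fun N => ?_
          rw [Real.rpow_neg (by norm_num), Real.rpow_natCast]; simp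
        have hi : Filter.Tendsto (fun N : ℕ => (2:ℝ)^(N:ℝ)) Filter.atTop Filter.atTop := by
          refine (tendsto_pow_atTop_atTop_of_one_lt (r := (2:ℝ)) (by norm_num)).congr fun N => ?_
          rw [Real.rpow_natCast]
        filter_upwards [hz.eventually_le_const h0, hi.eventually_gt_atTop ‖f' u‖] with N h1 h2
        have : u ∈ E N := ⟨h1, h2⟩
        simp only [g, indicator_of_mem this]; simp
    have hint : Filter.Tendsto (fun N => ∫ u, ‖f' u - g N u‖) Filter.atTop (nhds 0) := by
      have := tendsto_integral_of_dominated_convergence (μ := volume) (F := fun N u => ‖f' u - g N u‖) (f := fun _ => 0) (fun u => ‖f' u‖)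
        (fun N => (hfi.sub (hgi N)).norm.aestronglyMeasurable) hfi.norm (fun N => Filter.Eventually.of_forall fun u => by
          simp only [norm_norm, g]
          by_cases hx : u ∈ E N
          · rw [indicator_of_mem hx]; simp
          · rw [indicator_of_notMem hx]; simp) (Filter.Eventually.of_forall hconv)
      simpa using this
    obtain ⟨M, hM⟩ := Aj_bdd (d := d) hχ hβ j
    have hA : ∀ y t, Filter.Tendsto (fun N => Aj d χ β₀ j (g N) y t) Filter.atTop (nhds (Aj d χ β₀ j f y t)) := by
      intro y t
      rw [Aj_congr j hae, tendsto_iff_norm_sub_tendsto_zero]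
      have h2 : Filter.Tendsto (fun N => (M:ℝ) * ∫ u, ‖f' u - g N u‖) Filter.atTop (nhds 0) := by
        simpa using hint.const_mul (M:ℝ)
      refine squeeze_zero (fun _ => norm_nonneg _) (fun N => ?_) h2
      rw [norm_sub_rev, ← Aj_sub hχ hβ j hfi (hgi N)]
      exact hM _ (hfi.sub (hgi N)) y t
    simp only [SS_eq hχ hβ]
    calc _ = ∫⁻ z, Filter.liminf (fun N => ‖Aj d χ β₀ j (g N) z.1 z.2‖ₑ ^ s) Filter.atTop ∂(nuM d n j x) := by
          apply lintegral_congr; intro z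
          refine (Filter.Tendsto.liminf_eq ?_).symm
          exact ((ENNReal.continuous_rpow_const).tendsto _).comp ((continuous_enorm.tendsto _).comp (hA z.1 z.2))
      _ ≤ _ := lintegral_liminf_le fun N => (Aj_meas hχ hβ j _).enorm.pow_const s

/-- gain at infinity -/
lemma ME_inf {d : ℕ} [hd : Fact (2 ≤ d)] {χ β₀ : ℝ → ℝ} (hχ : IsCutoff χ) (hβ : IsBump β₀) {s : ℝ} (hs : 1 < s) :
    ∃ ε : ℝ, 0 < ε ∧ ∃ C : ℝ≥0, ∀ (n j : ℕ), n ≤ j → ∀ f : Euc d → ℂ, Integrable f → ∀ x,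
      SS d χ β₀ n j s f x ≤ C * (2:ℝ≥0∞) ^ (-((n:ℝ) * ε)) * ∫⁻ x, ‖f x‖ₑ ^ s := by
  obtain ⟨ε, hε, C, hC⟩ := SS_gain (d := d) hχ hβ hs
  refine ⟨ε, hε, C, fun n j hnj f hf x => ?_⟩
  obtain ⟨g, hg, hg2, hg3⟩ := good_approx hχ hβ f hf
  refine (hg3 n j s x (by linarith)).trans ?_
  refine Filter.liminf_le_of_frequently_le' (Filter.Frequently.of_forall fun N => ?_)
  refine (hC n j hnj (g N) (hg N) x).trans ?_
  exact mul_le_mul_right (hg2 N s (by linarith)) _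

lemma ME_good {d : ℕ} [hd : Fact (2 ≤ d)] {χ β₀ : ℝ → ℝ} (hχ : IsCutoff χ) (hβ : IsBump β₀) {p0 q0 q p : ℝ} {K : ℝ≥0}
    (hyp : HypE d χ β₀ p0 q0 K) (hp0 : 1 < p0) (hpq : p0 ≤ q0) (hq : q0 < q) (hp : 0 < p)
    (h1 : (q0/q)/p0 < 1/p) (h2 : 1/p < 1 - q0/q + (q0/q)/p0) :
    ∃ ε : ℝ, 0 < ε ∧ ∃ C : ℝ≥0, ∀ (n j : ℕ), n ≤ j → ∀ f : Euc d → ℂ, Good f →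
      ∫⁻ x, SS d χ β₀ n j p f x ^ (q/p) ≤ C * (2:ℝ≥0∞) ^ (-((n:ℝ) * ε)) * (2:ℝ≥0∞)^(-((j:ℝ) * d)) * (∫⁻ x, ‖f x‖ₑ ^ p)^(q/p) := by
  have hq0 : 0 < q0 := by linarith
  have hqp : 0 < q := by linarith
  set θ := q0/q with hθ
  have hθ0 : 0 < θ := by positivity
  have hθ1 : θ < 1 := by rw [hθ, div_lt_one hqp]; exact hq
  set p1 := (1-θ)/(1/p - θ/p0) with hp1d
  have hden : 0 < 1/p - θ/p0 := by linarith
  have hp1 : 1 < p1 := by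
    rw [hp1d, lt_div_iff₀ hden]; linarith
  have heq : 1/p = (1-θ)/p1 + θ/p0 := by
    have : (1-θ)/p1 = 1/p - θ/p0 := by
      rw [hp1d, div_div_cancel₀]; linarith
    linarith
  have hp1' : 1 ≤ p := by
    have : 1/p < 1 := by
      have : θ/p0 ≤ θ := div_le_self hθ0.le hp0.le
      linarith
    rw [div_lt_one hp] at this
    exact this.le
  set α := p*(1-θ)/p1 with hα
  have hα0 : 0 < α := div_pos (mul_pos hp (by linarith)) (by linarith)
  have hm : 1 ≤ q0/p0 := by rw [le_div_iff₀ (by linarith)]; linarith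
  have hb : p*θ/p0 * (q/p) = q0/p0 := by rw [hθ]; field_simp
  have hb0 : 0 ≤ p*θ/p0 := by positivity
  have hqp0 : 0 < q/p := by positivity
  have hsum : α * (q/p) + q0/p0 = q/p := by
    rw [← hb, ← add_mul]
    have : p * (1/p) = p * ((1-θ)/p1 + θ/p0) := by rw [← heq]
    rw [mul_one_div_cancel (by linarith)] at this
    have h3 : α + p*θ/p0 = 1 := by
      refine Eq.trans ?_ this.symm; rw [hα]; ring
    rw [h3, one_mul]
  obtain ⟨C1, hC1⟩ := interp (d := d) hχ hβ hp1' hp0.le hp1.le hθ0 hθ1 heq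
  obtain ⟨ε, hε, C2, hC2⟩ := SS_gain (d := d) hχ hβ hp1
  have hVt : volume (ball (0 : Euc d) 1) ≠ ∞ := measure_ball_lt_top.ne
  set V := (volume (ball (0 : Euc d) 1)).toNNReal with hV
  have hVe : volume (ball (0 : Euc d) 1) = V := (ENNReal.coe_toNNReal hVt).symm
  refine ⟨ε * (α * (q/p)), by positivity, C1^(q/p) * (C2 * C1)^(α * (q/p)) * (V^(q0/p0) * K * C1^(q0/p0)), fun n j hnj f hf => ?_⟩
  obtain ⟨M, hM, g1, g0, hg1, hg0, hS⟩ := hC1 f hf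
  set I := ∫⁻ x, ‖f x‖ₑ ^ p
  set T := (2:ℝ≥0∞) ^ (-((n:ℝ) * ε))
  have b1 : ∀ x, (M:ℝ≥0∞)⁻¹ * ∑ w, SS d χ β₀ n j p1 (g1 w) x ≤ C2 * C1 * (T * I) := by
    intro x
    apply avg_le; intro w
    refine (hC2 n j hnj (g1 w) (hg1 w).1 x).trans ?_
    calc _ ≤ C2 * T * (C1 * I) := by gcongr; exact (hg1 w).2
      _ = _ := by ring
  have b0 : ∀ w, ∫⁻ x, SS d χ β₀ n j p0 (g0 w) x ^ (q0/p0) ≤ V^(q0/p0) * (K * (2:ℝ≥0∞)^(-((j:ℝ) * d)) * (C1 * I)^(q0/p0)) := by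
    intro w
    refine (SS_int hχ hβ n j p0 (g0 w) hm).trans ?_
    rw [hVe]
    gcongr
    refine (hyp j (g0 w) (hg0 w).1.2.1).trans ?_
    gcongr
    exact (hg0 w).2
  have pt : ∀ x, SS d χ β₀ n j p f x ^ (q/p) ≤ (C1^(q/p) * (C2 * C1 * (T * I))^(α * (q/p))) *
      ((M:ℝ≥0∞)⁻¹ * ∑ w, SS d χ β₀ n j p0 (g0 w) x ^ (q0/p0)) := by
    intro x
    calc _ ≤ (C1 * (((M:ℝ≥0∞)⁻¹ * ∑ w, SS d χ β₀ n j p1 (g1 w) x)^α *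
        ((M:ℝ≥0∞)⁻¹ * ∑ w, SS d χ β₀ n j p0 (g0 w) x)^(p*θ/p0)))^(q/p) := by
          gcongr; exact hS n j x
      _ ≤ (C1 * ((C2 * C1 * (T * I))^α *
        ((M:ℝ≥0∞)⁻¹ * ∑ w, SS d χ β₀ n j p0 (g0 w) x)^(p*θ/p0)))^(q/p) := by
          have hb1 := b1 x
          gcongr ((C1:ℝ≥0∞) * (?_ ^ α * _)) ^ (q/p)
      _ = (C1^(q/p) * (C2 * C1 * (T * I))^(α * (q/p))) * ((M:ℝ≥0∞)⁻¹ * ∑ w, SS d χ β₀ n j p0 (g0 w) x)^(q0/p0) := by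
          rw [ENNReal.mul_rpow_of_nonneg _ _ hqp0.le, ENNReal.mul_rpow_of_nonneg _ _ hqp0.le, ← ENNReal.rpow_mul, ← ENNReal.rpow_mul, hb, ← mul_assoc ((C1:ℝ≥0∞) ^ (q/p))]
      _ ≤ _ := by gcongr; exact avg_jensen _ hm
  have hMi : (M:ℝ≥0∞)⁻¹ ≠ ∞ := by rw [ENNReal.inv_ne_top]; exact_mod_cast NeZero.ne M
  calc _ ≤ _ := lintegral_mono pt
    _ = (C1^(q/p) * (C2 * C1 * (T * I))^(α * (q/p))) * ((M:ℝ≥0∞)⁻¹ * ∑ w, ∫⁻ x, SS d χ β₀ n j p0 (g0 w) x ^ (q0/p0)) := by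
        rw [lintegral_const_mul, lintegral_const_mul' _ _ hMi, lintegral_finsetSum _ (fun w _ => (SS_meas hχ hβ n j p0 _).pow_const _)]
        apply Measurable.const_mul
        exact Finset.measurable_sum _ (fun w _ => (SS_meas hχ hβ n j p0 _).pow_const _)
    _ ≤ (C1^(q/p) * (C2 * C1 * (T * I))^(α * (q/p))) * (V^(q0/p0) * (K * (2:ℝ≥0∞)^(-((j:ℝ) * d)) * (C1 * I)^(q0/p0))) := by
        exact mul_le_mul_right (avg_le _ b0) _
    _ = _ := by
        have hα' : 0 ≤ α * (q/p) := by positivity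
        have hm0 : 0 ≤ q0/p0 := by linarith
        have e1 : I^(q/p) = I^(α * (q/p)) * I^(q0/p0) := by
          rw [← ENNReal.rpow_add_of_nonneg _ _ hα' hm0, hsum]
        have e2 : (2:ℝ≥0∞) ^ (-((n:ℝ) * (ε * (α * (q/p))))) = T ^ (α * (q/p)) := by
          rw [← ENNReal.rpow_mul]; congr 1; ring
        rw [e1, e2]
        simp only [ENNReal.coe_mul, ENNReal.coe_rpow_of_nonneg _ hα', ENNReal.coe_rpow_of_nonneg _ hm0, ENNReal.coe_rpow_of_nonneg _ hqp0.le, ENNReal.mul_rpow_of_nonneg _ _ hα', ENNReal.mul_rpow_of_nonneg _ _ hm0]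
        ring

lemma ME_fin {d : ℕ} [hd : Fact (2 ≤ d)] {χ β₀ : ℝ → ℝ} (hχ : IsCutoff χ) (hβ : IsBump β₀) {p0 q0 q p : ℝ} {K : ℝ≥0}
    (hyp : HypE d χ β₀ p0 q0 K) (hp0 : 1 < p0) (hpq : p0 ≤ q0) (hq : q0 < q) (hp : 0 < p)
    (h1 : (q0/q)/p0 < 1/p) (h2 : 1/p < 1 - q0/q + (q0/q)/p0) :
    ∃ ε : ℝ, 0 < ε ∧ ∃ C : ℝ≥0, ∀ (n j : ℕ), n ≤ j → ∀ f : Euc d → ℂ, Integrable f →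
      ∫⁻ x, SS d χ β₀ n j p f x ^ (q/p) ≤ C * (2:ℝ≥0∞) ^ (-((n:ℝ) * ε)) * (2:ℝ≥0∞)^(-((j:ℝ) * d)) * (∫⁻ x, ‖f x‖ₑ ^ p)^(q/p) := by
  obtain ⟨ε, hε, C, hC⟩ := ME_good (d := d) hχ hβ hyp hp0 hpq hq hp h1 h2
  have hqp : 0 < q/p := div_pos (by linarith) hp
  refine ⟨ε, hε, C, fun n j hnj f hf => ?_⟩
  obtain ⟨g, hg, hg2, hg3⟩ := good_approx hχ hβ f hf
  calc _ ≤ ∫⁻ x, Filter.liminf (fun N => SS d χ β₀ n j p (g N) x ^ (q/p)) Filter.atTop := by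
        apply lintegral_mono; intro x
        have e := (ENNReal.orderIsoRpow (q/p) hqp).liminf_apply (u := fun N => SS d χ β₀ n j p (g N) x) (f := Filter.atTop)
        simp only [ENNReal.orderIsoRpow_apply] at e
        beta_reduce
        rw [← e]
        gcongr
        exact hg3 n j p x hp
    _ ≤ Filter.liminf (fun N => ∫⁻ x, SS d χ β₀ n j p (g N) x ^ (q/p)) Filter.atTop := lintegral_liminf_le fun N => (SS_meas hχ hβ n j p _).pow_const _
    _ ≤ _ := by
      refine Filter.liminf_le_of_frequently_le' (Filter.Frequently.of_forall fun N => ?_)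
      refine (hC n j hnj (g N) (hg N)).trans ?_
      exact mul_le_mul_right (ENNReal.rpow_le_rpow (hg2 N p hp) hqp.le) _

/-- decaying weight -/
def kap (d : ℕ) (u : Euc d) : ℝ≥0∞ := ENNReal.ofReal ((1 + ‖u‖) ^ (-((d:ℝ)+1)))

lemma kap_meas (d : ℕ) : Measurable (kap d) := by
  unfold kap
  fun_prop

lemma kap_int (d : ℕ) : ∫⁻ u, kap d u < ∞ := by
  apply finite_integral_one_add_norm
  rw [finrank_euclideanSpace_fin]; linarith

lemma kap_shift (d : ℕ) (c : Euc d) : ∫⁻ u, kap d (u - c) = ∫⁻ u, kap d u :=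
  lintegral_sub_right_eq_self (kap d) c

lemma kap_le_one (d : ℕ) (u : Euc d) : kap d u ≤ 1 := by
  unfold kap
  rw [ENNReal.ofReal_le_one]
  apply Real.rpow_le_one_of_one_le_of_nonpos
  · linarith [norm_nonneg u]
  · have : (0:ℝ) ≤ d := by positivity
    linarith

/-- far radius -/
def LL (d : ℕ) : ℝ := 2 * d + 19

lemma kap_lower (d : ℕ) : ∃ C : ℝ≥0, ∀ u : Euc d, ‖u‖ ≤ LL d → 1 ≤ C * kap d u := by
  have hL : (0:ℝ) < 1 + LL d := by unfold LL; positivity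
  refine ⟨Real.toNNReal ((1 + LL d)^((d:ℝ)+1)), fun u hu => ?_⟩
  unfold kap
  rw [← ENNReal.ofReal, ← ENNReal.ofReal_mul (by positivity), ENNReal.one_le_ofReal]
  have h0 := norm_nonneg u
  rw [Real.rpow_neg (by positivity), ← div_eq_mul_inv, one_le_div (by positivity)]
  gcongr

/-- weighted average -/
def DD (d : ℕ) (f : Euc d → ℂ) (c : Euc d) : ℝ≥0∞ := ∫⁻ u, kap d (u - c) * ‖f u‖ₑ

/-- far part bound -/
lemma far_conv {d : ℕ} [hd : Fact (2 ≤ d)] {β₀ : ℝ → ℝ} (hβ : IsBump β₀) : ∃ C : ℝ≥0, ∀ (j : ℕ) (f : Euc d → ℂ), Integrable f → ∀ (c z : Euc d),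
    ‖z - c‖ ≤ d + 9 → ‖freqLoc d β₀ j ((closedBall c (LL d))ᶜ.indicator f) z‖ₑ ≤ C * (2:ℝ≥0∞)^(-((j:ℝ)*(d+1))) * DD d f c := by
  obtain ⟨C, hC0, hC⟩ := psiJ_tail (d := d) hβ
  refine ⟨Real.toNNReal (C * 2^(d+1)), fun j f hf c z hz => ?_⟩
  rw [freqLoc_conv hβ j (hf.indicator measurableSet_closedBall.compl)]
  refine (enorm_integral_le_lintegral_enorm _).trans ?_
  unfold DD
  rw [← lintegral_const_mul' _ _ (ENNReal.mul_ne_top ENNReal.coe_ne_top (ENNReal.rpow_ne_top_of_ne_zero (by simp) (by simp)))]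
  apply lintegral_mono
  intro u
  beta_reduce
  rw [enorm_mul]
  by_cases hu : u ∈ closedBall c (LL d)
  · rw [indicator_of_notMem (by simpa using hu)]; simp
  rw [indicator_of_mem hu, ← mul_assoc]
  gcongr
  rw [mem_closedBall, not_le, dist_eq_norm] at hu
  have h1 : (1 + ‖u - c‖)/2 ≤ ‖z - u‖ := by
    have h2 : ‖u - c‖ ≤ ‖z - c‖ + ‖z - u‖ := by
      have := norm_sub_le (z - c) (z - u)
      rwa [show z - c - (z - u) = u - c by abel] at this
    unfold LL at hu
    linarith
  have h3 : 1 ≤ ‖z - u‖ := by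
    unfold LL at hu
    have : (0:ℝ) ≤ d := by positivity
    linarith
  have h4 := hC j (z - u) h3
  have hp : 0 < (1 + ‖u - c‖) := by linarith [norm_nonneg (u - c)]
  have h5 : ‖psiJ d β₀ j (z - u)‖ ≤ (C * 2^(d+1)) * (2:ℝ)^(-((j:ℝ)*(d+1))) * (1 + ‖u - c‖) ^ (-((d:ℝ)+1)) := by
    have e1 : (2:ℝ)^(-((j:ℝ)*(d+1))) = ((2^j)^(d+1))⁻¹ := by
      rw [Real.rpow_neg (by norm_num), ← Nat.cast_add_one, ← Nat.cast_mul, Real.rpow_natCast, pow_mul]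
    have e2 : (1 + ‖u - c‖) ^ (-((d:ℝ)+1)) = ((1 + ‖u - c‖)^(d+1))⁻¹ := by
      rw [Real.rpow_neg hp.le, ← Nat.cast_add_one, Real.rpow_natCast]
    rw [e1, e2]
    have h6 : (2^j * ((1 + ‖u - c‖)/2))^(d+1) * ‖psiJ d β₀ j (z - u)‖ ≤ C := le_trans (by gcongr) h4
    rw [mul_pow, div_pow] at h6
    have a1 : (0:ℝ) < (2^j)^(d+1) := by positivity
    have a2 : 0 < (1 + ‖u - c‖)^(d+1) := by positivity
    rw [← div_eq_mul_inv, ← div_eq_mul_inv, le_div_iff₀ a2, le_div_iff₀ a1]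
    have a3 : (0:ℝ) < 2^(d+1) := by positivity
    calc _ = ((2^j)^(d+1) * ((1 + ‖u - c‖)^(d+1) / 2^(d+1)) * ‖psiJ d β₀ j (z - u)‖) * 2^(d+1) := by field_simp
      _ ≤ _ := by gcongr
  unfold kap
  have e3 : (2:ℝ≥0∞)^(-((j:ℝ)*(d+1))) = ENNReal.ofReal ((2:ℝ)^(-((j:ℝ)*(d+1)))) := by
    rw [← ENNReal.ofReal_rpow_of_pos (by norm_num), ENNReal.ofReal_ofNat]
  rw [← ofReal_norm, e3, ← ENNReal.ofReal, ← ENNReal.ofReal_mul (by positivity), ← ENNReal.ofReal_mul (by positivity)]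
  exact ENNReal.ofReal_le_ofReal h5

lemma far_Aj {d : ℕ} [hd : Fact (2 ≤ d)] {χ β₀ : ℝ → ℝ} (hχ : IsCutoff χ) (hβ : IsBump β₀) : ∃ C : ℝ≥0, ∀ (j : ℕ) (f : Euc d → ℂ), Integrable f → ∀ (c y : Euc d),
    ‖y - c‖ ≤ d + 5 → ∀ t, ‖Aj d χ β₀ j ((closedBall c (LL d))ᶜ.indicator f) y t‖ₑ ≤ (Icc (1/2:ℝ) 4).indicator (fun _ => C * (2:ℝ≥0∞)^(-((j:ℝ)*(d+1))) * DD d f c) t := by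
  obtain ⟨M, hM1, hM⟩ := Aj_enorm_le (d := d) hχ
  obtain ⟨C, hC⟩ := far_conv (d := d) hβ
  refine ⟨M * C, fun j f hf c y hy t => ?_⟩
  refine (hM β₀ j _ y t).trans ?_
  by_cases ht : t ∈ Icc (1/2:ℝ) 4
  · rw [indicator_of_mem ht, indicator_of_mem ht, ENNReal.coe_mul, mul_assoc, mul_assoc]
    gcongr
    unfold sphAvg
    refine (enorm_integral_le_lintegral_enorm _).trans ?_
    calc _ ≤ ∫⁻ w, C * (2:ℝ≥0∞)^(-((j:ℝ)*(d+1))) * DD d f c ∂(sphereMeasure d) := by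
          apply lintegral_mono_ae
          filter_upwards [sphere_ae_norm] with w hw
          apply hC j f hf
          have e : y - t • w - c = (y - c) - t • w := by abel
          rw [e]
          refine (norm_sub_le _ _).trans ?_
          rw [norm_smul, hw, mul_one, Real.norm_eq_abs, abs_of_nonneg (by linarith [ht.1])]
          linarith [ht.2]
      _ = _ := by rw [lintegral_const, measure_univ, mul_one, mul_assoc]
  · rw [indicator_of_notMem ht, indicator_of_notMem ht]

lemma RR_le (d n j : ℕ) (h : n ≤ j) : RR d n j ≤ d + 4 := by
  unfold RR
  have : (2:ℝ)^((n:ℤ)-j) ≤ 1 := zpow_le_one_of_nonpos₀ (by norm_num) (by omega)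
  have h2 : (0:ℝ) ≤ d := by positivity
  nlinarith

lemma SS_far {d : ℕ} [hd : Fact (2 ≤ d)] {χ β₀ : ℝ → ℝ} (hχ : IsCutoff χ) (hβ : IsBump β₀) {s : ℝ} (hs : 1 ≤ s) : ∃ C : ℝ≥0, ∀ (n j : ℕ), n ≤ j → ∀ (f : Euc d → ℂ), Integrable f → ∀ (c x : Euc d),
    x ∈ closedBall c 1 → SS d χ β₀ n j s ((closedBall c (LL d))ᶜ.indicator f) x ≤ C * ((2:ℝ≥0∞)^(-((j:ℝ)*(d+1))) * DD d f c)^s := by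
  obtain ⟨C, hC⟩ := far_Aj (d := d) hχ hβ
  have hVt : volume (ball (0 : Euc d) 1) ≠ ∞ := measure_ball_lt_top.ne
  set V := (volume (ball (0 : Euc d) 1)).toNNReal with hV
  have hVe : volume (ball (0 : Euc d) 1) = V := (ENNReal.coe_toNNReal hVt).symm
  refine ⟨V * (C^s * 4), fun n j hnj f hf c x hx => ?_⟩
  set X := (2:ℝ≥0∞)^(-((j:ℝ)*(d+1))) * DD d f c with hX
  have hin : ∀ y ∈ closedBall x (RR d n j), ∫⁻ t, ‖Aj d χ β₀ j ((closedBall c (LL d))ᶜ.indicator f) y t‖ₑ^s ≤ C^s * 4 * X^s := by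
    intro y hy
    have hyc : ‖y - c‖ ≤ d + 5 := by
      rw [mem_closedBall, dist_eq_norm] at hy hx
      have := RR_le d n j hnj
      have h2 := norm_add_le (y - x) (x - c)
      rw [sub_add_sub_cancel] at h2
      linarith
    calc _ ≤ ∫⁻ t, (Icc (1/2:ℝ) 4).indicator (fun _ => (C * X)^s) t := by
          apply lintegral_mono; intro t
          have h := hC j f hf c y hyc t
          beta_reduce
          by_cases ht : t ∈ Icc (1/2:ℝ) 4
          · rw [indicator_of_mem ht, mul_assoc, ← hX] at h
            rw [indicator_of_mem ht]
            exact ENNReal.rpow_le_rpow h (by linarith)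
          · rw [indicator_of_notMem ht] at h ⊢
            rw [nonpos_iff_eq_zero.1 h, ENNReal.zero_rpow_of_pos (by linarith)]
      _ = (C * X)^s * ENNReal.ofReal (4 - 1/2) := by
          rw [lintegral_indicator measurableSet_Icc, setLIntegral_const, Real.volume_Icc]
      _ ≤ (C * X)^s * 4 := by
          gcongr
          rw [show (4:ℝ≥0∞) = ENNReal.ofReal 4 by simp]
          exact ENNReal.ofReal_le_ofReal (by norm_num)
      _ = _ := by rw [ENNReal.mul_rpow_of_nonneg _ _ (by linarith)]; ring
  unfold SS
  calc _ ≤ (ENNReal.ofReal (RR d n j ^ d))⁻¹ * ∫⁻ y in closedBall x (RR d n j), C^s * 4 * X^s := by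
        exact mul_le_mul_right (setLIntegral_mono' measurableSet_closedBall hin) _
    _ = (ENNReal.ofReal (RR d n j ^ d))⁻¹ * (C^s * 4 * X^s * (ENNReal.ofReal (RR d n j ^ d) * V)) := by
        rw [setLIntegral_const, vol_ball_RR, hVe]
    _ = ((ENNReal.ofReal (RR d n j ^ d))⁻¹ * ENNReal.ofReal (RR d n j ^ d)) * (C^s * 4 * X^s * V) := by ring
    _ = _ := by
        rw [ENNReal.inv_mul_cancel (ofReal_RR_ne d n j) ENNReal.ofReal_ne_top, one_mul]
        push_cast
        rw [ENNReal.coe_rpow_of_nonneg _ (by linarith)]; ring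

lemma SS_add {d : ℕ} [hd : Fact (2 ≤ d)] {χ β₀ : ℝ → ℝ} (hχ : IsCutoff χ) (hβ : IsBump β₀) {s : ℝ} (hs : 1 ≤ s) (n j : ℕ) {f : Euc d → ℂ} (hf : Integrable f)
    {B : Set (Euc d)} (hB : MeasurableSet B) (x : Euc d) :
    SS d χ β₀ n j s f x ≤ (2:ℝ≥0∞)^s * (SS d χ β₀ n j s (B.indicator f) x + SS d χ β₀ n j s (Bᶜ.indicator f) x) := by
  simp only [SS_eq hχ hβ]
  rw [← lintegral_add_left ((Aj_meas hχ hβ j _).enorm.pow_const s), ← lintegral_const_mul' _ _ (by simp [show 0 ≤ s by linarith])]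
  apply lintegral_mono
  intro z
  beta_reduce
  have e : Aj d χ β₀ j f z.1 z.2 = Aj d χ β₀ j (B.indicator f) z.1 z.2 + Aj d χ β₀ j (Bᶜ.indicator f) z.1 z.2 := by
    have h := Aj_sub hχ hβ j hf (hf.indicator hB.compl) z.1 z.2
    have e2 : (fun x => f x - Bᶜ.indicator f x) = B.indicator f := by
      ext u
      by_cases hu : u ∈ B
      · simp [hu]
      · simp [hu]
    rw [e2] at h
    rw [h]; ring
  rw [e]
  have hs0 : 0 ≤ s := by linarith
  set a := Aj d χ β₀ j (B.indicator f) z.1 z.2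
  set b := Aj d χ β₀ j (Bᶜ.indicator f) z.1 z.2
  calc ‖a+b‖ₑ^s ≤ (2 * max ‖a‖ₑ ‖b‖ₑ)^s := by
        gcongr
        refine (enorm_add_le _ _).trans ?_
        rw [two_mul]
        gcongr
        · exact le_max_left _ _
        · exact le_max_right _ _
    _ = 2^s * (max ‖a‖ₑ ‖b‖ₑ)^s := ENNReal.mul_rpow_of_nonneg _ _ hs0
    _ ≤ _ := by
        gcongr
        rcases le_total ‖a‖ₑ ‖b‖ₑ with h | h
        · rw [max_eq_right h]; exact le_add_self
        · rw [max_eq_left h]; exact le_self_add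

lemma SS_split {d : ℕ} [hd : Fact (2 ≤ d)] {χ β₀ : ℝ → ℝ} (hχ : IsCutoff χ) (hβ : IsBump β₀) {s : ℝ} (hs : 1 ≤ s) : ∃ C : ℝ≥0, ∀ (n j : ℕ), n ≤ j → ∀ (f : Euc d → ℂ), Integrable f → ∀ (c x : Euc d),
    x ∈ closedBall c 1 → SS d χ β₀ n j s f x ≤ C * (SS d χ β₀ n j s ((closedBall c (LL d)).indicator f) x + ((2:ℝ≥0∞)^(-((j:ℝ)*(d+1))) * DD d f c)^s) := by
  obtain ⟨C, hC⟩ := SS_far (d := d) hχ hβ hs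
  refine ⟨2^s * (C+1), fun n j hnj f hf c x hx => (SS_add hχ hβ hs n j hf (B := closedBall c (LL d)) measurableSet_closedBall x).trans ?_⟩
  push_cast
  rw [ENNReal.coe_rpow_of_nonneg _ (by linarith), mul_assoc]
  push_cast
  gcongr
  rw [mul_add]
  refine add_le_add ?_ ?_
  · exact le_mul_of_one_le_left (by simp) (by simp)
  · refine (hC n j hnj f hf c x hx).trans ?_
    gcongr
    simp

/-- weighted local p-mass -/
def HH (d : ℕ) (f : Euc d → ℂ) (p : ℝ) (c : Euc d) : ℝ≥0∞ := ∫⁻ u, kap d (u - c) * ‖f u‖ₑ^p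

lemma DD_le {d : ℕ} {f : Euc d → ℂ} (hf : AEMeasurable f) {p : ℝ} (hp : 1 ≤ p) (c : Euc d) :
    DD d f c ^ p ≤ (∫⁻ u, kap d u)^(p-1) * HH d f p c := by
  have h := jensen_weight (μ := volume) (k := fun u => kap d (u - c)) (g := fun u => ‖f u‖ₑ) ((kap_meas d).comp (measurable_id.sub_const c)) hf.enorm hp
  rw [kap_shift] at h
  exact h

lemma ball_HH (d : ℕ) : ∃ C : ℝ≥0, ∀ (f : Euc d → ℂ) (p : ℝ) (c : Euc d), 
    ∫⁻ u in closedBall c (LL d), ‖f u‖ₑ^p ≤ C * HH d f p c := by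
  obtain ⟨C, hC⟩ := kap_lower d
  refine ⟨C, fun f p c => ?_⟩
  unfold HH
  rw [← lintegral_const_mul' _ _ ENNReal.coe_ne_top, ← lintegral_indicator measurableSet_closedBall]
  apply lintegral_mono
  intro u
  beta_reduce
  by_cases hu : u ∈ closedBall c (LL d)
  · rw [indicator_of_mem hu, ← mul_assoc]
    rw [mem_closedBall, dist_eq_norm] at hu
    exact le_mul_of_one_le_left (by simp) (hC _ hu)
  · rw [indicator_of_notMem hu]; simp

lemma HH_int {d : ℕ} {f : Euc d → ℂ} (hf : AEMeasurable f) {p a : ℝ} (ha : 1 ≤ a) :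
    ∫⁻ c, HH d f p c ^ a ≤ (∫⁻ u, kap d u) * (∫⁻ u, ‖f u‖ₑ^p)^a := by
  set N := ∫⁻ u, ‖f u‖ₑ^p with hN
  have hm : AEMeasurable (fun z : Euc d × Euc d => kap d (z.2 - z.1) * ‖f z.2‖ₑ^p) (volume.prod volume) := by
    apply AEMeasurable.mul
    · exact ((kap_meas d).comp (measurable_snd.sub measurable_fst)).aemeasurable
    · exact (hf.comp_snd.enorm.pow_const p)
  have hHm : AEMeasurable (HH d f p) := hm.lintegral_prod_right'
  have hle : ∀ c, HH d f p c ≤ N := by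
    intro c
    apply lintegral_mono
    intro u
    beta_reduce
    exact mul_le_of_le_one_left (by simp) (kap_le_one _ _)
  have hI : ∫⁻ c, HH d f p c = (∫⁻ u, kap d u) * N := by
    unfold HH
    rw [lintegral_lintegral_swap hm, hN, ← lintegral_const_mul'' _ (hf.enorm.pow_const p)]
    apply lintegral_congr
    intro u
    have hmu : Measurable (fun x => kap d (u - x)) := (kap_meas d).comp (measurable_id.const_sub u)
    rw [lintegral_mul_const _ hmu]
    congr 1
    exact lintegral_sub_left_eq_self (kap d) u
  calc _ ≤ ∫⁻ c, N^(a-1) * HH d f p c := by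
        apply lintegral_mono
        intro c
        beta_reduce
        rcases eq_or_ne (HH d f p c) 0 with h0 | h0
        · rw [h0, ENNReal.zero_rpow_of_pos (by linarith)]; simp
        · calc HH d f p c ^ a = HH d f p c ^ ((a-1)+1) := by rw [sub_add_cancel]
            _ = HH d f p c ^ (a-1) * HH d f p c := by
              rw [ENNReal.rpow_add_of_nonneg _ _ (by linarith) (by norm_num), ENNReal.rpow_one]
            _ ≤ _ := by
              exact mul_le_mul_left (ENNReal.rpow_le_rpow (hle c) (by linarith)) _
    _ = N^(a-1) * ((∫⁻ u, kap d u) * N) := by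
        rw [lintegral_const_mul'' _ hHm, hI]
    _ = (∫⁻ u, kap d u) * (N^(a-1) * N^(1:ℝ)) := by rw [ENNReal.rpow_one]; ring
    _ = _ := by rw [← ENNReal.rpow_add_of_nonneg _ _ (by linarith) (by norm_num), sub_add_cancel]

lemma add_rpow_le (a b : ℝ≥0∞) {s : ℝ} (hs0 : 0 ≤ s) : (a + b)^s ≤ 2^s * (a^s + b^s) := by
  calc (a+b)^s ≤ (2 * max a b)^s := by
        gcongr
        rw [two_mul]
        gcongr
        · exact le_max_left _ _
        · exact le_max_right _ _
    _ = 2^s * (max a b)^s := ENNReal.mul_rpow_of_nonneg _ _ hs0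
    _ ≤ _ := by
        gcongr
        rcases le_total a b with h | h
        · rw [max_eq_right h]; exact le_add_self
        · rw [max_eq_left h]; exact le_self_add

lemma ind_int {d : ℕ} (f : Euc d → ℂ) {s : ℝ} (hs : 0 < s) (B : Set (Euc d)) (hB : MeasurableSet B) :
    ∫⁻ x, ‖B.indicator f x‖ₑ^s = ∫⁻ x in B, ‖f x‖ₑ^s := by
  rw [← lintegral_indicator hB]
  apply lintegral_congr
  intro x
  by_cases hx : x ∈ B
  · simp [hx]
  · simp [hx, hs]

lemma holder_ball {d : ℕ} {f : Euc d → ℂ} (hf : AEMeasurable f) {s p : ℝ} (hs : 0 < s) (hsp : s ≤ p) (c : Euc d) (R : ℝ) :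
    (∫⁻ x in closedBall c R, ‖f x‖ₑ^s)^(p/s) ≤ volume (closedBall (0:Euc d) R)^(p/s-1) * ∫⁻ x in closedBall c R, ‖f x‖ₑ^p := by
  have h := jensen_le (μ := volume.restrict (closedBall c R)) (g := fun x => ‖f x‖ₑ^s) (hf.restrict.enorm.pow_const s) (s := p/s) ((one_le_div hs).2 hsp)
  rw [Measure.restrict_apply_univ, Measure.addHaar_closedBall_center] at h
  refine h.trans (le_of_eq ?_)
  congr 1
  apply lintegral_congr
  intro x
  rw [← ENNReal.rpow_mul, mul_div_cancel₀ _ hs.ne']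

lemma two_pow_le {a b : ℝ} (h : a ≤ b) : (2:ℝ≥0∞)^a ≤ 2^b := by
  exact ENNReal.rpow_le_rpow_of_exponent_le (by norm_num) h

/-- localization, finite q -/
lemma loc_fin {d : ℕ} [hd : Fact (2 ≤ d)] {χ β₀ : ℝ → ℝ} (hχ : IsCutoff χ) (hβ : IsBump β₀) {s p q : ℝ} (hs : 1 ≤ s) (hsp : s ≤ p) (hpq : p ≤ q)
    {ε : ℝ} (hε : 0 < ε) {C : ℝ≥0} (hME : ∀ n j : ℕ, n ≤ j → ∀ f : Euc d → ℂ, Integrable f →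
      ∫⁻ x, SS d χ β₀ n j s f x ^ (q/s) ≤ C * (2:ℝ≥0∞)^(-((n:ℝ)*ε)) * (2:ℝ≥0∞)^(-((j:ℝ)*d)) * (∫⁻ x, ‖f x‖ₑ^s)^(q/s)) :
    ∃ ε' : ℝ, 0 < ε' ∧ ∃ C' : ℝ≥0, ∀ n j : ℕ, n ≤ j → ∀ f : Euc d → ℂ, Integrable f →
      ∫⁻ x, SS d χ β₀ n j s f x ^ (q/s) ≤ C' * (2:ℝ≥0∞)^(-((n:ℝ)*ε')) * (2:ℝ≥0∞)^(-((j:ℝ)*d)) * (∫⁻ x, ‖f x‖ₑ^p)^(q/p) := by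
  obtain ⟨C1, hC1⟩ := SS_split (d := d) hχ hβ hs
  obtain ⟨C2, hC2⟩ := ball_HH d
  have hs0 : 0 < s := by linarith
  have hp0 : 0 < p := by linarith
  have hq0 : 0 < q := by linarith
  set b := q/s with hb
  set a := q/p with ha
  have hb0 : 0 ≤ b := by positivity
  have ha0 : 0 ≤ a := by positivity
  have ha1 : 1 ≤ a := (one_le_div hp0).2 hpq
  have hpsa : p/s*a = b := by rw [ha, hb]; field_simp
  have hpa : p * a = q := by rw [ha]; field_simp
  have hsb : s * b = q := by rw [hb]; field_simp
  set Kp := ∫⁻ u, kap d u with hKp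
  have hKpt : Kp ≠ ∞ := (kap_int d).ne
  set VL := volume (closedBall (0:Euc d) (LL d)) with hVL
  have hVLt : VL ≠ ∞ := measure_closedBall_lt_top.ne
  set V1 := volume (closedBall (0:Euc d) 1) with hV1
  have hV1t : V1 ≠ ∞ := measure_closedBall_lt_top.ne
  have hV10 : V1 ≠ 0 := (measure_closedBall_pos volume _ one_pos).ne'
  set K1 : ℝ≥0∞ := C * (VL^(p/s-1) * C2)^a with hK1
  set K2 : ℝ≥0∞ := V1 * (Kp^(p-1))^a with hK2
  set K : ℝ≥0∞ := C1^b * 2^b * (K1 + K2) with hK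
  have hps1 : 0 ≤ p/s - 1 := by linarith [(one_le_div hs0).2 hsp]
  have hKt : K ≠ ∞ := by
    have t1 : K1 ≠ ∞ := ENNReal.mul_ne_top ENNReal.coe_ne_top (ENNReal.rpow_ne_top_of_nonneg ha0 (ENNReal.mul_ne_top (ENNReal.rpow_ne_top_of_nonneg hps1 hVLt) ENNReal.coe_ne_top))
    have t2 : K2 ≠ ∞ := ENNReal.mul_ne_top hV1t (ENNReal.rpow_ne_top_of_nonneg ha0 (ENNReal.rpow_ne_top_of_nonneg (by linarith) hKpt))
    exact ENNReal.mul_ne_top (ENNReal.mul_ne_top (ENNReal.rpow_ne_top_of_nonneg hb0 ENNReal.coe_ne_top) (ENNReal.rpow_ne_top_of_nonneg hb0 (by simp))) (ENNReal.add_ne_top.2 ⟨t1, t2⟩)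
  set ε' := min ε 1 with hε'
  have hFt : V1⁻¹ * (K * Kp) ≠ ∞ := ENNReal.mul_ne_top (ENNReal.inv_ne_top.2 hV10) (ENNReal.mul_ne_top hKt hKpt)
  refine ⟨ε', lt_min hε one_pos, (V1⁻¹ * (K * Kp)).toNNReal, fun n j hnj f hf => ?_⟩
  rw [ENNReal.coe_toNNReal hFt]
  have hfm : AEMeasurable f := hf.aestronglyMeasurable.aemeasurable
  set X : ℝ≥0∞ := (2:ℝ≥0∞)^(-((n:ℝ)*ε')) * (2:ℝ≥0∞)^(-((j:ℝ)*d)) with hX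
  have hXt : X ≠ ∞ := ENNReal.mul_ne_top (ENNReal.rpow_ne_top_of_ne_zero (by simp) (by simp)) (ENNReal.rpow_ne_top_of_ne_zero (by simp) (by simp))
  have hn0 : (0:ℝ) ≤ n := by positivity
  have hnj' : (n:ℝ) ≤ j := by exact_mod_cast hnj
  have hd0 : (0:ℝ) ≤ d := by positivity
  have hX1 : (2:ℝ≥0∞)^(-((n:ℝ)*ε)) * (2:ℝ≥0∞)^(-((j:ℝ)*d)) ≤ X := by
    refine mul_le_mul_left (two_pow_le ?_) _
    have : ε' ≤ ε := min_le_left _ _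
    nlinarith
  have hX2 : ((2:ℝ≥0∞)^(-((j:ℝ)*(d+1))))^q ≤ X := by
    rw [hX, ← ENNReal.rpow_mul, ← ENNReal.rpow_add _ _ (by simp) (by simp)]
    apply two_pow_le
    have h1 : ε' ≤ 1 := min_le_right _ _
    have h2 : 1 ≤ q := by linarith
    have h3 : (n:ℝ)*ε' ≤ j := by nlinarith
    have h4 : (0:ℝ) ≤ (j:ℝ)*(d+1) := by positivity
    nlinarith
  have hloc : ∀ c, ∫⁻ x in closedBall c 1, SS d χ β₀ n j s f x ^ b ≤ K * X * HH d f p c ^ a := by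
    intro c
    set f1 := (closedBall c (LL d)).indicator f with hf1
    set Y := (2:ℝ≥0∞)^(-((j:ℝ)*(d+1))) * DD d f c with hY
    have h1 : ∫⁻ x, SS d χ β₀ n j s f1 x ^ b ≤ K1 * X * HH d f p c ^ a := by
      refine (hME n j hnj f1 (hf.indicator measurableSet_closedBall)).trans ?_
      rw [hf1, ind_int f hs0 _ measurableSet_closedBall, ← hpsa, ENNReal.rpow_mul]
      have h2 := (holder_ball hfm hs0 hsp c (LL d)).trans (mul_le_mul_right (hC2 f p c) _)
      calc _ ≤ C * X * ((VL^(p/s-1) * (C2 * HH d f p c))^a) := by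
            rw [mul_assoc (C:ℝ≥0∞)]
            exact mul_le_mul' (mul_le_mul_right hX1 _) (ENNReal.rpow_le_rpow h2 ha0)
        _ = _ := by
            rw [hK1, ← mul_assoc (VL^(p/s-1)), ENNReal.mul_rpow_of_nonneg _ (HH d f p c) ha0]; ring
    have h2 : V1 * Y^q ≤ K2 * X * HH d f p c ^ a := by
      rw [hY, ENNReal.mul_rpow_of_nonneg _ _ hq0.le]
      have h3 : DD d f c ^ q ≤ (Kp^(p-1))^a * HH d f p c ^ a := by
        rw [← ENNReal.mul_rpow_of_nonneg _ _ ha0, ← hpa, ENNReal.rpow_mul]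
        exact ENNReal.rpow_le_rpow (DD_le hfm (by linarith) c) ha0
      calc _ ≤ V1 * (X * ((Kp^(p-1))^a * HH d f p c ^ a)) := mul_le_mul_right (mul_le_mul' hX2 h3) _
        _ = _ := by rw [hK2]; ring
    calc _ ≤ ∫⁻ x in closedBall c 1, C1^b * 2^b * (SS d χ β₀ n j s f1 x ^ b + Y^q) := by
          apply setLIntegral_mono' measurableSet_closedBall
          intro x hx
          calc _ ≤ (C1 * (SS d χ β₀ n j s f1 x + Y^s))^b := ENNReal.rpow_le_rpow (hC1 n j hnj f hf c x hx) hb0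
            _ = C1^b * (SS d χ β₀ n j s f1 x + Y^s)^b := ENNReal.mul_rpow_of_nonneg _ _ hb0
            _ ≤ C1^b * (2^b * (SS d χ β₀ n j s f1 x^b + (Y^s)^b)) := mul_le_mul_right (add_rpow_le _ _ hb0) _
            _ = _ := by rw [← ENNReal.rpow_mul, hsb]; ring
      _ = C1^b * 2^b * ((∫⁻ x in closedBall c 1, SS d χ β₀ n j s f1 x ^ b) + Y^q * V1) := by
          rw [lintegral_const_mul' _ _ (ENNReal.mul_ne_top (ENNReal.rpow_ne_top_of_nonneg hb0 ENNReal.coe_ne_top) (ENNReal.rpow_ne_top_of_nonneg hb0 (by simp))),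
            lintegral_add_right _ measurable_const, setLIntegral_const, Measure.addHaar_closedBall_center]
      _ ≤ C1^b * 2^b * (K1 * X * HH d f p c ^ a + K2 * X * HH d f p c ^ a) := by
          refine mul_le_mul_right (add_le_add ((setLIntegral_le_lintegral _ _).trans h1) ?_) _
          rw [mul_comm]; exact h2
      _ = _ := by rw [hK]; ring
  have hT := ball_tonelli ((SS_meas hχ hβ n j s f).pow_const b) 1
  have hfin : V1 * ∫⁻ x, SS d χ β₀ n j s f x ^ b ≤ K * X * (Kp * (∫⁻ x, ‖f x‖ₑ^p)^a) := by
    rw [← hT]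
    calc _ ≤ ∫⁻ c, K * X * HH d f p c ^ a := lintegral_mono hloc
      _ = K * X * ∫⁻ c, HH d f p c ^ a := lintegral_const_mul' _ _ (ENNReal.mul_ne_top hKt hXt)
      _ ≤ _ := mul_le_mul_right (HH_int hfm ha1) _
  calc _ = V1⁻¹ * (V1 * ∫⁻ x, SS d χ β₀ n j s f x ^ b) := by
        rw [← mul_assoc, ENNReal.inv_mul_cancel hV10 hV1t, one_mul]
    _ ≤ V1⁻¹ * (K * X * (Kp * (∫⁻ x, ‖f x‖ₑ^p)^a)) := mul_le_mul_right hfin _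
    _ = _ := by rw [hX]; ring

/-- localization, q infinite -/
lemma loc_inf {d : ℕ} [hd : Fact (2 ≤ d)] {χ β₀ : ℝ → ℝ} (hχ : IsCutoff χ) (hβ : IsBump β₀) {s : ℝ} (hs : 1 < s) :
    ∃ ε' : ℝ, 0 < ε' ∧ ∃ C' : ℝ≥0, ∀ n j : ℕ, n ≤ j → ∀ f : Euc d → ℂ, Integrable f → ∀ x,
      SS d χ β₀ n j s f x ≤ C' * (2:ℝ≥0∞)^(-((n:ℝ)*ε')) * (eLpNorm f ∞ volume)^s := by
  obtain ⟨ε, hε, C, hME⟩ := ME_inf (d := d) hχ hβ hs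
  obtain ⟨C1, hC1⟩ := SS_split (d := d) hχ hβ hs.le
  have hs0 : 0 < s := by linarith
  set Kp := ∫⁻ u, kap d u with hKp
  have hKpt : Kp ≠ ∞ := (kap_int d).ne
  set VL := volume (closedBall (0:Euc d) (LL d)) with hVL
  have hVLt : VL ≠ ∞ := measure_closedBall_lt_top.ne
  set ε' := min ε 1 with hε'
  have hKt : (C1 : ℝ≥0∞) * (C * VL + Kp^s) ≠ ∞ := ENNReal.mul_ne_top ENNReal.coe_ne_top (ENNReal.add_ne_top.2 ⟨ENNReal.mul_ne_top ENNReal.coe_ne_top hVLt, ENNReal.rpow_ne_top_of_nonneg hs0.le hKpt⟩)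
  refine ⟨ε', lt_min hε one_pos, ((C1 : ℝ≥0∞) * (C * VL + Kp^s)).toNNReal, fun n j hnj f hf x => ?_⟩
  rw [ENNReal.coe_toNNReal hKt]
  set M := eLpNorm f ∞ volume with hM
  have hMae : ∀ᵐ u, ‖f u‖ₑ ≤ M := by
    rw [hM, eLpNorm_exponent_top]; exact ae_le_eLpNormEssSup
  set X : ℝ≥0∞ := (2:ℝ≥0∞)^(-((n:ℝ)*ε')) with hX
  have hn0 : (0:ℝ) ≤ n := by positivity
  have hnj' : (n:ℝ) ≤ j := by exact_mod_cast hnj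
  have hd0 : (0:ℝ) ≤ d := by positivity
  have hX1 : (2:ℝ≥0∞)^(-((n:ℝ)*ε)) ≤ X := by
    refine two_pow_le ?_
    have : ε' ≤ ε := min_le_left _ _
    nlinarith
  have hX2 : ((2:ℝ≥0∞)^(-((j:ℝ)*(d+1))))^s ≤ X := by
    rw [hX, ← ENNReal.rpow_mul]
    apply two_pow_le
    have h1 : ε' ≤ 1 := min_le_right _ _
    have h3 : (n:ℝ)*ε' ≤ j := by nlinarith
    have h4 : (0:ℝ) ≤ (j:ℝ)*(d+1) := by positivity
    have h5 : (0:ℝ) ≤ (j:ℝ)*d := by positivity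
    nlinarith
  have h1 : SS d χ β₀ n j s ((closedBall x (LL d)).indicator f) x ≤ C * VL * X * M^s := by
    refine (hME n j hnj _ (hf.indicator measurableSet_closedBall) x).trans ?_
    rw [ind_int f hs0 _ measurableSet_closedBall]
    have h2 : ∫⁻ u in closedBall x (LL d), ‖f u‖ₑ^s ≤ M^s * VL := by
      calc _ ≤ ∫⁻ u in closedBall x (LL d), M^s := by
            apply lintegral_mono_ae
            filter_upwards [ae_restrict_of_ae hMae] with u hu
            exact ENNReal.rpow_le_rpow hu hs0.le
        _ = _ := by rw [setLIntegral_const, Measure.addHaar_closedBall_center]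
    calc _ ≤ C * X * (M^s * VL) := mul_le_mul' (mul_le_mul_right hX1 _) h2
      _ = _ := by ring
  have h2 : ((2:ℝ≥0∞)^(-((j:ℝ)*(d+1))) * DD d f x)^s ≤ Kp^s * X * M^s := by
    have h3 : DD d f x ≤ Kp * M := by
      calc _ ≤ ∫⁻ u, kap d (u - x) * M := by
            apply lintegral_mono_ae
            filter_upwards [hMae] with u hu
            exact mul_le_mul_right hu _
        _ = _ := by
            have hmu : Measurable (fun u => kap d (u - x)) := (kap_meas d).comp (measurable_id.sub_const x)
            rw [lintegral_mul_const _ hmu, kap_shift]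
    rw [ENNReal.mul_rpow_of_nonneg _ _ hs0.le]
    calc _ ≤ X * (Kp * M)^s := mul_le_mul' hX2 (ENNReal.rpow_le_rpow h3 hs0.le)
      _ = _ := by rw [ENNReal.mul_rpow_of_nonneg _ _ hs0.le]; ring
  refine (hC1 n j hnj f hf x x (mem_closedBall_self zero_le_one)).trans ?_
  calc _ ≤ C1 * (C * VL * X * M^s + Kp^s * X * M^s) := mul_le_mul_right (add_le_add h1 h2) _
    _ = _ := by ring

lemma cube_pre (d : ℕ) (a : Euc d) (h : ℝ) : cubeSet d a h = (@WithLp.ofLp 2 (Fin d → ℝ)) ⁻¹' (Set.pi univ (fun i => Icc (a i) (a i + h))) := by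
  ext y
  rw [cubeSet, mem_preimage, Set.mem_univ_pi]
  exact Iff.rfl

lemma cube_vol (d : ℕ) (a : Euc d) {h : ℝ} (hh : 0 < h) : volume (cubeSet d a h) = ENNReal.ofReal (h ^ d) := by
  rw [cube_pre, (PiLp.volume_preserving_ofLp (Fin d)).measure_preimage (MeasurableSet.univ_pi fun i => measurableSet_Icc).nullMeasurableSet, volume_pi_pi]
  simp [Real.volume_Icc, ENNReal.ofReal_pow hh.le]

lemma cube_sub {d : ℕ} {a x : Euc d} {h : ℝ} (hh : 0 < h) (hx : x ∈ cubeSet d a h) : cubeSet d a h ⊆ closedBall x (d * h) := by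
  intro y hy
  rw [mem_closedBall, dist_eq_norm]
  rw [EuclideanSpace.norm_eq]
  apply Real.sqrt_le_iff.2
  refine ⟨by positivity, ?_⟩
  calc _ ≤ ∑ i : Fin d, h^2 := by
        apply Finset.sum_le_sum
        intro i _
        have h1 := hx i
        have h2 := hy i
        rw [Real.norm_eq_abs, sq_abs, PiLp.sub_apply]
        apply sq_le_sq'
        · linarith [h1.1, h1.2, h2.1, h2.2]
        · linarith [h1.1, h1.2, h2.1, h2.2]
    _ = d * h^2 := by simp
    _ ≤ _ := by
        rw [mul_pow]
        have : (d:ℝ) ≤ (d:ℝ)^2 := by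
          rcases Nat.eq_zero_or_pos d with h0 | h0
          · simp [h0]
          · have : (1:ℝ) ≤ d := by exact_mod_cast h0
            nlinarith
        gcongr

lemma avg_set {d : ℕ} {Q : Set (Euc d)} {V : ℝ≥0∞} (hV : volume Q = V) (hV0 : V ≠ 0) (hVt : V ≠ ∞) {G : Euc d → ℝ≥0∞} (hG : Measurable G) {s : ℝ} (hs : 1 ≤ s) :
    (V⁻¹ * ∫⁻ y in Q, G y)^s ≤ V⁻¹ * ∫⁻ y in Q, G y ^ s := by
  have h := jensen_le (μ := volume.restrict Q) hG.aemeasurable hs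
  rw [Measure.restrict_apply_univ, hV] at h
  rw [ENNReal.mul_rpow_of_nonneg _ _ (by linarith)]
  refine (mul_le_mul_right h _).trans (le_of_eq ?_)
  rw [← mul_assoc]
  congr 1
  rw [ENNReal.inv_rpow, ← ENNReal.rpow_neg, ← ENNReal.rpow_add _ _ hV0 hVt, ← ENNReal.rpow_neg_one]
  congr 1; ring

lemma time_holder {d : ℕ} [hd : Fact (2 ≤ d)] {χ β₀ : ℝ → ℝ} (hχ : IsCutoff χ) (hβ : IsBump β₀) (j : ℕ) (f : Euc d → ℂ) (y : Euc d) {ρ s : ℝ} (hρ : 0 < ρ) (hρs : ρ ≤ s) :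
    ((∫⁻ t, ‖Aj d χ β₀ j f y t‖ₑ^ρ)^(1/ρ))^s ≤ 4^(s/ρ-1) * ∫⁻ t, ‖Aj d χ β₀ j f y t‖ₑ^s := by
  have hm : Measurable (fun t => ‖Aj d χ β₀ j f y t‖ₑ) := ((Aj_meas hχ hβ j f).comp measurable_prodMk_left).enorm
  have hsupp : ∀ t, t ∉ Icc (1/2:ℝ) 4 → ‖Aj d χ β₀ j f y t‖ₑ = 0 := by
    intro t ht
    have : χ t = 0 := by
      by_contra h
      exact ht (hχ.2.2 h)
    simp [Aj, this]
  have e1 : ∫⁻ t, ‖Aj d χ β₀ j f y t‖ₑ^ρ = ∫⁻ t in Icc (1/2:ℝ) 4, ‖Aj d χ β₀ j f y t‖ₑ^ρ := by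
    rw [← lintegral_indicator measurableSet_Icc]
    apply lintegral_congr
    intro t
    by_cases ht : t ∈ Icc (1/2:ℝ) 4
    · rw [indicator_of_mem ht]
    · rw [indicator_of_notMem ht, hsupp t ht, ENNReal.zero_rpow_of_pos hρ]
  have h := jensen_le (μ := volume.restrict (Icc (1/2:ℝ) 4)) (hm.pow_const ρ).aemeasurable (s := s/ρ) ((one_le_div hρ).2 hρs)
  rw [e1, ← ENNReal.rpow_mul, show 1/ρ*s = s/ρ by ring]
  refine h.trans ?_
  rw [Measure.restrict_apply_univ, Real.volume_Icc]
  apply mul_le_mul'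
  · apply ENNReal.rpow_le_rpow
    · rw [show (4:ℝ≥0∞) = ENNReal.ofReal 4 by simp]
      exact ENNReal.ofReal_le_ofReal (by norm_num)
    · linarith [(one_le_div hρ).2 hρs]
  · refine (setLIntegral_le_lintegral _ _).trans (le_of_eq ?_)
    apply lintegral_congr
    intro t
    rw [← ENNReal.rpow_mul, mul_div_cancel₀ _ hρ.ne']

lemma cube_SS {d : ℕ} [hd : Fact (2 ≤ d)] {χ β₀ : ℝ → ℝ} (hχ : IsCutoff χ) (hβ : IsBump β₀) {r : ℝ≥0∞} (hr0 : 0 < r) (hrt : r ≠ ∞) {s : ℝ} (hs : 1 ≤ s) (hrs : r.toReal ≤ s) :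
    ∃ K : ℝ≥0, ∀ (n j : ℕ) (f : Euc d → ℂ) (x a : Euc d) (h : ℝ), (2 : ℝ) ^ ((n : ℤ) - j - 1) < h → h ≤ (2 : ℝ) ^ ((n : ℤ) - j) → x ∈ cubeSet d a h →
      (volume (cubeSet d a h))⁻¹ * ∫⁻ y in cubeSet d a h, lqNorm r (fun t => (‖Aj d χ β₀ j f y t‖₊ : ℝ≥0∞)) volume ≤ K * (SS d χ β₀ n j s f x)^(1/s) := by
  set ρ := r.toReal with hρ
  have hρ0 : 0 < ρ := ENNReal.toReal_pos hr0.ne' hrt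
  have hs0 : 0 < s := by linarith
  have hsρ : 0 ≤ s/ρ-1 := by linarith [(one_le_div hρ0).2 hrs]
  set K0 : ℝ≥0∞ := ENNReal.ofReal ((2*((d:ℝ)+4))^d) * 4^(s/ρ-1) with hK0
  have hK0t : K0 ≠ ∞ := ENNReal.mul_ne_top ENNReal.ofReal_ne_top (ENNReal.rpow_ne_top_of_nonneg hsρ (by simp))
  refine ⟨(K0^(1/s)).toNNReal, fun n j f x a h h1 h2 hx => ?_⟩
  rw [ENNReal.coe_toNNReal (ENNReal.rpow_ne_top_of_nonneg (by positivity) hK0t)]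
  have hh : 0 < h := lt_trans (by positivity) h1
  have hV := cube_vol d a hh
  set V := ENNReal.ofReal (h^d) with hVd
  have hV0 : V ≠ 0 := by
    rw [hVd]; simp only [ne_eq, ENNReal.ofReal_eq_zero, not_le]; positivity
  have hVt : V ≠ ∞ := ENNReal.ofReal_ne_top
  rw [hV]
  have e : ∀ y, lqNorm r (fun t => (‖Aj d χ β₀ j f y t‖₊ : ℝ≥0∞)) volume = (∫⁻ t, ‖Aj d χ β₀ j f y t‖ₑ^ρ)^(1/ρ) := by
    intro y
    unfold lqNorm
    rw [if_neg hrt]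
    rfl
  simp only [e]
  have hRR := RR_pos d n j
  have hsub : cubeSet d a h ⊆ closedBall x (RR d n j) := by
    refine (cube_sub hh hx).trans (closedBall_subset_closedBall ?_)
    unfold RR
    gcongr
    linarith
  have hVR : V⁻¹ * ENNReal.ofReal (RR d n j ^ d) ≤ ENNReal.ofReal ((2*((d:ℝ)+4))^d) := by
    have h3 : ENNReal.ofReal (RR d n j ^ d) ≤ V * ENNReal.ofReal ((2*((d:ℝ)+4))^d) := by
      rw [hVd, ← ENNReal.ofReal_mul (by positivity), ← mul_pow]
      apply ENNReal.ofReal_le_ofReal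
      unfold RR
      have : (2:ℝ)^((n:ℤ)-j) ≤ 2 * h := by
        have : (2:ℝ)^((n:ℤ)-j) = 2 * 2^((n:ℤ)-j-1) := by
          rw [zpow_sub_one₀ (by norm_num)]; ring
        rw [this]; linarith
      apply pow_le_pow_left₀ (by positivity)
      have h4 : (0:ℝ) ≤ d := by positivity
      nlinarith
    refine (mul_le_mul_right h3 _).trans (le_of_eq ?_)
    rw [← mul_assoc, ENNReal.inv_mul_cancel hV0 hVt, one_mul]
  have hmain : (V⁻¹ * ∫⁻ y in cubeSet d a h, (∫⁻ t, ‖Aj d χ β₀ j f y t‖ₑ^ρ)^(1/ρ))^s ≤ K0 * SS d χ β₀ n j s f x := by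
    refine (avg_set hV hV0 hVt ((inner_meas hχ hβ j ρ f).pow_const _) hs).trans ?_
    have h5 : ∫⁻ y in cubeSet d a h, ((∫⁻ t, ‖Aj d χ β₀ j f y t‖ₑ^ρ)^(1/ρ))^s ≤ 4^(s/ρ-1) * ∫⁻ y in closedBall x (RR d n j), ∫⁻ t, ‖Aj d χ β₀ j f y t‖ₑ ^ s := by
      rw [← lintegral_const_mul _ (inner_meas hχ hβ j s f)]
      refine le_trans ?_ (lintegral_mono_set hsub)
      apply lintegral_mono
      intro y
      exact time_holder hχ hβ j f y hρ0 hrs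
    refine (mul_le_mul_right h5 _).trans ?_
    unfold SS
    set T := ∫⁻ y in closedBall x (RR d n j), ∫⁻ t, ‖Aj d χ β₀ j f y t‖ₑ ^ s
    set W := ENNReal.ofReal (RR d n j ^ d) with hW
    have hW1 : W * W⁻¹ = 1 := ENNReal.mul_inv_cancel (ofReal_RR_ne d n j) ENNReal.ofReal_ne_top
    calc _ = (W * W⁻¹) * (V⁻¹ * (4^(s/ρ-1) * T)) := by rw [hW1, one_mul]
      _ = (V⁻¹ * W) * 4^(s/ρ-1) * (W⁻¹ * T) := by ring
      _ ≤ _ := by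
        rw [hK0]
        exact mul_le_mul_left (mul_le_mul_left hVR _) _
  have := ENNReal.rpow_le_rpow hmain (z := 1/s) (by positivity)
  rwa [← ENNReal.rpow_mul, mul_one_div_cancel hs0.ne', ENNReal.rpow_one, ENNReal.mul_rpow_of_nonneg _ _ (by positivity)] at this

lemma SS_nonint {d : ℕ} {χ β₀ : ℝ → ℝ} (n j : ℕ) {s : ℝ} (hs : 0 < s) {f : Euc d → ℂ} (hf : ¬ Integrable f) (x : Euc d) : SS d χ β₀ n j s f x = 0 := by
  unfold SS
  simp [Aj_nonint j hf, hs]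

lemma max_SS {d : ℕ} [hd : Fact (2 ≤ d)] {χ β₀ : ℝ → ℝ} (hχ : IsCutoff χ) (hβ : IsBump β₀) {r : ℝ≥0∞} (hr0 : 0 < r) (hrt : r ≠ ∞) {s : ℝ} (hs : 1 ≤ s) (hrs : r.toReal ≤ s) :
    ∃ K : ℝ≥0, ∀ (n : ℕ) (F : ℕ → Euc d → ℂ) (x : Euc d), maxFn d χ β₀ r n F x ≤ ⨆ (j : ℕ) (_ : n ≤ j), K * (SS d χ β₀ n j s (F j) x)^(1/s) := by
  obtain ⟨K, hK⟩ := cube_SS (d := d) hχ hβ hr0 hrt hs hrs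
  refine ⟨K, fun n F x => ?_⟩
  unfold maxFn
  refine iSup₂_mono fun j hj => ?_
  refine iSup_le fun a => iSup_le fun h => iSup_le fun h1 => iSup_le fun h2 => iSup_le fun h3 => ?_
  exact hK n j (F j) x a h h1 h2 h3

lemma asm_inf {d : ℕ} [hd : Fact (2 ≤ d)] {χ β₀ : ℝ → ℝ} (hχ : IsCutoff χ) (hβ : IsBump β₀) {r p : ℝ≥0∞} (hr0 : 0 < r) (hrt : r ≠ ∞) {s : ℝ} (hs : 1 ≤ s) (hrs : r.toReal ≤ s)
    {ε : ℝ} (hε : 0 < ε) {C : ℝ≥0} (hM : ∀ n j : ℕ, n ≤ j → ∀ f : Euc d → ℂ, Integrable f → ∀ x,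
      SS d χ β₀ n j s f x ≤ C * (2:ℝ≥0∞)^(-((n:ℝ)*ε)) * (eLpNorm f p volume)^s) :
    ∃ ε : ℝ, 0 < ε ∧ ∃ C : ℝ≥0, ∀ (n : ℕ) (F : ℕ → Euc d → ℂ),
      lqNorm ∞ (maxFn d χ β₀ r n F) volume ≤
        C * (2 : ℝ≥0∞) ^ (-((n : ℝ) * ε)) *
          lqSeq ∞ (fun j => if n ≤ j then
            (2 : ℝ≥0∞) ^ (-(((j : ℝ) * d) / (∞:ℝ≥0∞).toReal)) * eLpNorm (F j) p volume
            else 0) := by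
  obtain ⟨K, hK⟩ := max_SS (d := d) hχ hβ hr0 hrt hs hrs
  have hs0 : 0 < s := by linarith
  have hs1 : 0 ≤ 1/s := by positivity
  refine ⟨ε/s, by positivity, K * C^(1/s), fun n F => ?_⟩
  simp only [lqNorm, lqSeq, if_true]
  refine essSup_le_of_ae_le _ (Filter.Eventually.of_forall ?_)
  intro x
  refine (hK n F x).trans (iSup₂_le fun j hj => ?_)
  have h1 : SS d χ β₀ n j s (F j) x ≤ C * (2:ℝ≥0∞)^(-((n:ℝ)*ε)) * (eLpNorm (F j) p volume)^s := by
    by_cases hi : Integrable (F j)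
    · exact hM n j hj _ hi x
    · rw [SS_nonint n j hs0 hi]; simp
  have h2 := ENNReal.rpow_le_rpow h1 hs1
  rw [ENNReal.mul_rpow_of_nonneg _ _ hs1, ENNReal.mul_rpow_of_nonneg _ _ hs1, ← ENNReal.rpow_mul, ← ENNReal.rpow_mul, mul_one_div_cancel hs0.ne', ENNReal.rpow_one, show -((n:ℝ)*ε)*(1/s) = -((n:ℝ)*(ε/s)) by ring] at h2
  refine (mul_le_mul_right h2 _).trans ?_
  rw [ENNReal.coe_mul, ENNReal.coe_rpow_of_nonneg _ hs1, ← mul_assoc, ← mul_assoc]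
  refine mul_le_mul_right ?_ _
  refine le_iSup_of_le j ?_
  simp [hj]

lemma asm_fin {d : ℕ} [hd : Fact (2 ≤ d)] {χ β₀ : ℝ → ℝ} (hχ : IsCutoff χ) (hβ : IsBump β₀) {r p q : ℝ≥0∞} (hr0 : 0 < r) (hrt : r ≠ ∞) (hp0 : p ≠ 0) (hpt : p ≠ ∞) (hq0 : q ≠ 0) (hqt : q ≠ ∞) {s : ℝ} (hs : 1 ≤ s) (hrs : r.toReal ≤ s)
    {ε : ℝ} (hε : 0 < ε) {C : ℝ≥0} (hM : ∀ n j : ℕ, n ≤ j → ∀ f : Euc d → ℂ, Integrable f → 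
      ∫⁻ x, SS d χ β₀ n j s f x ^ (q.toReal/s) ≤ C * (2:ℝ≥0∞)^(-((n:ℝ)*ε)) * (2:ℝ≥0∞)^(-((j:ℝ)*d)) * (∫⁻ x, ‖f x‖ₑ^p.toReal)^(q.toReal/p.toReal)) :
    ∃ ε : ℝ, 0 < ε ∧ ∃ C : ℝ≥0, ∀ (n : ℕ) (F : ℕ → Euc d → ℂ),
      lqNorm q (maxFn d χ β₀ r n F) volume ≤
        C * (2 : ℝ≥0∞) ^ (-((n : ℝ) * ε)) *
          lqSeq q (fun j => if n ≤ j then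
            (2 : ℝ≥0∞) ^ (-(((j : ℝ) * d) / q.toReal)) * eLpNorm (F j) p volume
            else 0) := by
  obtain ⟨K, hK⟩ := max_SS (d := d) hχ hβ hr0 hrt hs hrs
  have hs0 : 0 < s := by linarith
  set Q := q.toReal with hQ
  have hQ0 : 0 < Q := ENNReal.toReal_pos hq0 hqt
  have hQ1 : 0 ≤ 1/Q := by positivity
  have hP0 : 0 < p.toReal := ENNReal.toReal_pos hp0 hpt
  refine ⟨ε/Q, by positivity, K * C^(1/Q), fun n F => ?_⟩
  simp only [lqNorm, lqSeq, if_neg hqt]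
  rw [← hQ]
  set g : ℕ → ℝ≥0∞ := fun j => if n ≤ j then
            (2 : ℝ≥0∞) ^ (-(((j : ℝ) * d) / Q)) * eLpNorm (F j) p volume else 0 with hg
  have hpw : ∀ x, maxFn d χ β₀ r n F x ^ Q ≤ ∑' j, (if n ≤ j then K^Q * (SS d χ β₀ n j s (F j) x)^(Q/s) else 0) := by
    intro x
    rw [← ENNReal.le_rpow_inv_iff hQ0]
    refine (hK n F x).trans (iSup₂_le fun j hj => ?_)
    rw [ENNReal.le_rpow_inv_iff hQ0, ENNReal.mul_rpow_of_nonneg _ _ hQ0.le, ← ENNReal.rpow_mul, show 1/s*Q = Q/s by ring]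
    refine le_trans ?_ (ENNReal.le_tsum j)
    rw [if_pos hj]
  have hj : ∀ j, ∫⁻ x, (if n ≤ j then K^Q * (SS d χ β₀ n j s (F j) x)^(Q/s) else 0) ≤ K^Q * (C * (2:ℝ≥0∞)^(-((n:ℝ)*ε))) * g j ^ Q := by
    intro j
    by_cases hj : n ≤ j
    · simp only [hg, if_pos hj]
      rw [lintegral_const_mul _ ((SS_meas hχ hβ n j s (F j)).pow_const _), mul_assoc]
      refine mul_le_mul_right ?_ _
      by_cases hi : Integrable (F j)
      · refine (hM n j hj _ hi).trans (le_of_eq ?_)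
        rw [ENNReal.mul_rpow_of_nonneg _ _ hQ0.le, ← ENNReal.rpow_mul, eLpNorm_eq_lintegral_rpow_enorm_toReal hp0 hpt, ← ENNReal.rpow_mul, mul_assoc _ ((2:ℝ≥0∞)^(-((j:ℝ)*d)))]
        congr 3
        · field_simp
        · field_simp
      · simp [SS_nonint n j hs0 hi, div_pos hQ0 hs0]
    · simp [hj]
  have hmain : ∫⁻ x, maxFn d χ β₀ r n F x ^ Q ≤ K^Q * (C * (2:ℝ≥0∞)^(-((n:ℝ)*ε))) * ∑' j, g j ^ Q := by
    calc _ ≤ ∫⁻ x, ∑' j, (if n ≤ j then K^Q * (SS d χ β₀ n j s (F j) x)^(Q/s) else 0) := lintegral_mono hpw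
      _ = ∑' j, ∫⁻ x, (if n ≤ j then K^Q * (SS d χ β₀ n j s (F j) x)^(Q/s) else 0) := by
          apply lintegral_tsum
          intro j
          by_cases hj : n ≤ j
          · simp only [if_pos hj]
            exact (((SS_meas hχ hβ n j s (F j)).pow_const _).const_mul _).aemeasurable
          · simp only [if_neg hj]
            exact aemeasurable_const
      _ ≤ ∑' j, K^Q * (C * (2:ℝ≥0∞)^(-((n:ℝ)*ε))) * g j ^ Q := ENNReal.tsum_le_tsum hj
      _ = _ := ENNReal.tsum_mul_left
  refine (ENNReal.rpow_le_rpow hmain hQ1).trans (le_of_eq ?_)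
  rw [ENNReal.mul_rpow_of_nonneg _ _ hQ1, ENNReal.mul_rpow_of_nonneg _ _ hQ1, ENNReal.mul_rpow_of_nonneg _ _ hQ1, ← ENNReal.rpow_mul, ← ENNReal.rpow_mul, mul_one_div_cancel hQ0.ne', ENNReal.rpow_one, ENNReal.coe_mul, ENNReal.coe_rpow_of_nonneg _ hQ1, show -((n:ℝ)*ε)*(1/Q) = -((n:ℝ)*(ε/Q)) by ring]
  ring

/-- Proposition 5.1: under the hypothesis
`sup_j 2^{jd/q₀} ‖𝒜_j‖_{L^{p₀} → L^{q₀}(L^{p₀})} < ∞`, for `q₀ < q ≤ ∞`,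
`ρ_min(q) < p ≤ q`, and `r ≤ p` if `p < ρ_max(q)`, `r < ρ_max(q)` if `ρ_max(q) ≤ p`,
there are `ε(p,q,r) > 0` and `C` with
`‖𝔐_{r,n} F‖_q ≤ C 2^{-nε} (Σ_{j ≥ n} 2^{-jd} ‖f_j‖_p^q)^{1/q}`. -/
theorem maximal_operator_gain (d : ℕ) (hd : 2 ≤ d) (χ β₀ : ℝ → ℝ)
    (hχ : IsCutoff χ) (hβ : IsBump β₀)
    (p₀ q₀ : ℝ≥0∞) (hp₀1 : 1 < p₀) (hp₀q₀ : p₀ ≤ q₀) (hq₀ : q₀ ≠ ∞)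
    (C₀ : ℝ≥0)
    (hC₀ : ∀ j : ℕ, (2 : ℝ≥0∞) ^ (((j : ℝ) * d) / q₀.toReal) *
      AjOpNorm d χ β₀ j p₀ q₀ p₀ ≤ C₀)
    (q p r ρmin ρmax : ℝ≥0∞) (hq : q₀ < q)
    (hρmin : ρmin⁻¹ = 1 - (q₀ / q) * (1 - p₀⁻¹))
    (hρmax : ρmax⁻¹ = (q₀ / q) * p₀⁻¹)
    (hp1 : ρmin < p) (hp2 : p ≤ q) (hr0 : 0 < r)
    (hr1 : p < ρmax → r ≤ p) (hr2 : ρmax ≤ p → r < ρmax) :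
    ∃ ε : ℝ, 0 < ε ∧ ∃ C : ℝ≥0, ∀ (n : ℕ) (F : ℕ → Euc d → ℂ),
      lqNorm q (maxFn d χ β₀ r n F) volume ≤
        C * (2 : ℝ≥0∞) ^ (-((n : ℝ) * ε)) *
          lqSeq q (fun j => if n ≤ j then
            (2 : ℝ≥0∞) ^ (-(((j : ℝ) * d) / q.toReal)) * eLpNorm (F j) p volume
            else 0) := by
  haveI : Fact (2 ≤ d) := ⟨hd⟩
  by_cases hqt : q = ∞
  · subst hqt
    have e1 : ρmin = 1 := by
      rw [← inv_inv ρmin, hρmin]; simp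
    have e2 : ρmax = ∞ := by
      rw [← inv_inv ρmax, hρmax]; simp
    subst e1 e2
    by_cases hpt : p = ∞
    · subst hpt
      have hrt : r ≠ ∞ := (hr2 le_rfl).ne
      have hs : (1:ℝ) < max r.toReal 2 := lt_of_lt_of_le (by norm_num) (le_max_right _ _)
      obtain ⟨ε, hε, C, hC⟩ := loc_inf (d := d) hχ hβ hs
      exact asm_inf hχ hβ hr0 hrt hs.le (le_max_left _ _) hε hC
    · have hrp := hr1 (lt_top_iff_ne_top.2 hpt)
      have hrt : r ≠ ∞ := ne_top_of_le_ne_top hpt hrp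
      have hs : 1 < p.toReal := by
        rw [← ENNReal.toReal_one]
        exact (ENNReal.toReal_lt_toReal (by simp) hpt).2 hp1
      have hp0 : p ≠ 0 := (lt_trans one_pos hp1).ne'
      obtain ⟨ε, hε, C, hC⟩ := ME_inf (d := d) hχ hβ hs
      refine asm_inf (C := C) hχ hβ hr0 hrt hs.le (ENNReal.toReal_mono hpt hrp) hε ?_
      intro n j hnj f hf x
      refine (hC n j hnj f hf x).trans (le_of_eq ?_)
      rw [eLpNorm_eq_lintegral_rpow_enorm_toReal hp0 hpt, ← ENNReal.rpow_mul, one_div_mul_cancel (by linarith), ENNReal.rpow_one]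
  · obtain ⟨K, hyp⟩ := hypE_of hχ hβ p₀ q₀ hp₀1 hp₀q₀ hq₀ C₀ hC₀
    have hp₀t : p₀ ≠ ∞ := ne_top_of_le_ne_top hq₀ hp₀q₀
    have hpt : p ≠ ∞ := ne_top_of_le_ne_top hqt hp2
    have hp0 : p ≠ 0 := (lt_of_le_of_lt (by simp) hp1).ne'
    have hq0 : q ≠ 0 := (lt_of_le_of_lt (by simp) hq).ne'
    set P0 := p₀.toReal with hP0
    set Q0 := q₀.toReal with hQ0
    set P := p.toReal with hP
    set Q := q.toReal with hQ
    have h1P0 : 1 < P0 := by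
      rw [hP0, ← ENNReal.toReal_one]
      exact (ENNReal.toReal_lt_toReal (by simp) hp₀t).2 hp₀1
    have hPQ0 : P0 ≤ Q0 := ENNReal.toReal_mono hq₀ hp₀q₀
    have hQQ : Q0 < Q := (ENNReal.toReal_lt_toReal hq₀ hqt).2 hq
    have hPQ : P ≤ Q := ENNReal.toReal_mono hqt hp2
    have hPpos : 0 < P := ENNReal.toReal_pos hp0 hpt
    have hQpos : 0 < Q := by linarith
    have ep0 : p₀ = ENNReal.ofReal P0 := (ENNReal.ofReal_toReal hp₀t).symm
    have eq0 : q₀ = ENNReal.ofReal Q0 := (ENNReal.ofReal_toReal hq₀).symm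
    have ep : p = ENNReal.ofReal P := (ENNReal.ofReal_toReal hpt).symm
    have eq1 : q = ENNReal.ofReal Q := (ENNReal.ofReal_toReal hqt).symm
    have ep' : p⁻¹ = ENNReal.ofReal (1/P) := by
      rw [ep, ← ENNReal.ofReal_inv_of_pos hPpos, one_div]
    have ep0' : p₀⁻¹ = ENNReal.ofReal (1/P0) := by
      rw [ep0, ← ENNReal.ofReal_inv_of_pos (by linarith), one_div]
    set θ := Q0/Q with hθ
    have hθ0 : 0 < θ := div_pos (by linarith) hQpos
    have hθ1 : θ < 1 := (div_lt_one hQpos).2 hQQ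
    have eθ : q₀/q = ENNReal.ofReal θ := by
      rw [eq0, eq1, ← ENNReal.ofReal_div_of_pos hQpos]
    have hP01 : 1/P0 < 1 := (div_lt_one (by linarith)).2 h1P0
    have hP00 : 0 < 1/P0 := by positivity
    have eA : ρmin⁻¹ = ENNReal.ofReal (1 - θ + θ/P0) := by
      rw [hρmin, eθ, ep0', ← ENNReal.ofReal_one, ← ENNReal.ofReal_sub _ hP00.le, ← ENNReal.ofReal_mul hθ0.le, ← ENNReal.ofReal_sub _ (by nlinarith)]
      congr 1; ring
    have eB : ρmax⁻¹ = ENNReal.ofReal (θ/P0) := by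
      rw [hρmax, eθ, ep0', ← ENNReal.ofReal_mul hθ0.le]
      congr 1; ring
    set B := θ/P0 with hB
    have hB0 : 0 < B := by positivity
    have hBθ : B < θ := by rw [hB]; exact div_lt_self hθ0 h1P0
    have hA : 1/P < 1 - θ + B := by
      have := ENNReal.inv_lt_inv.2 hp1
      rw [ep', eA] at this
      exact (ENNReal.ofReal_lt_ofReal_iff (by linarith)).1 this
    have hP1 : 1 ≤ P := by
      have : 1/P < 1 := by linarith
      rw [div_lt_one hPpos] at this
      exact this.le
    rcases lt_or_ge p ρmax with hc | hc
    · have hrp := hr1 hc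
      have hrt : r ≠ ∞ := ne_top_of_le_ne_top hpt hrp
      have hB1 : B < 1/P := by
        have := ENNReal.inv_lt_inv.2 hc
        rw [ep', eB] at this
        exact (ENNReal.ofReal_lt_ofReal_iff (by positivity)).1 this
      obtain ⟨ε, hε, C, hC⟩ := ME_fin hχ hβ hyp h1P0 hPQ0 hQQ hPpos hB1 hA
      exact asm_fin hχ hβ hr0 hrt hp0 hpt hq0 hqt hP1 (ENNReal.toReal_mono hpt hrp) hε hC
    · have hrm := hr2 hc
      have hrt : r ≠ ∞ := hrm.ne_top
      have hR0 : 0 < r.toReal := ENNReal.toReal_pos hr0.ne' hrt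
      set R := r.toReal with hR
      have er : r = ENNReal.ofReal R := (ENNReal.ofReal_toReal hrt).symm
      have er' : r⁻¹ = ENNReal.ofReal (1/R) := by
        rw [er, ← ENNReal.ofReal_inv_of_pos hR0, one_div]
      have hBR : B < 1/R := by
        have := ENNReal.inv_lt_inv.2 hrm
        rw [er', eB] at this
        exact (ENNReal.ofReal_lt_ofReal_iff (by positivity)).1 this
      have hPB : 1/P ≤ B := by
        have := ENNReal.inv_le_inv.2 hc
        rw [ep', eB] at this
        exact (ENNReal.ofReal_le_ofReal_iff hB0.le).1 this
      obtain ⟨u, hu1, hu2⟩ := exists_between (show B < min (1 - θ + B) (1/R) from lt_min (by linarith) hBR)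
      have hu3 := lt_of_lt_of_le hu2 (min_le_left _ _)
      have hu4 := lt_of_lt_of_le hu2 (min_le_right _ _)
      have hu0 : 0 < u := by linarith
      have hs0 : 0 < 1/u := by positivity
      have hus : 1/(1/u) = u := one_div_one_div u
      have hs1 : 1 ≤ 1/u := by rw [one_le_div hu0]; linarith
      have hsP : 1/u ≤ P := by
        rw [one_div_le hu0 hPpos]; linarith
      have hRs : R ≤ 1/u := by
        rw [le_one_div hR0 hu0]; exact hu4.le
      obtain ⟨ε, hε, C, hC⟩ := ME_fin hχ hβ hyp h1P0 hPQ0 hQQ hs0 (by rw [hus]; exact hu1) (by rw [hus]; exact hu3)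
      obtain ⟨ε', hε', C', hC'⟩ := loc_fin hχ hβ hs1 hsP hPQ hε hC
      exact asm_fin hχ hβ hr0 hrt hp0 hpt hq0 hqt hs1 hRs hε' hC'
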